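/- arXiv:2006.10549 — 2 statements merged into one kernel-verified Lean document; each statement's English description precedes it below -/
import Mathlib

section
/- Let k ≥ 2 be an integer and let P be a positive definite integral binary quadratic form of discriminant d < 0 whose CM point τ_P satisfies Re(Mτ_P) ≠ 0 for all M ∈ SL₂(ℤ). Then Re(r_0(f_{k,P})) = (−1)^k · Re(r_{2k−2}(f_{k,P})) = −|d|^{k−1/2} ζ_P(k) / (2(2k−1) · w_P · ζ(2k)), where ζ_P(s) := Σ_{(x,y)∈ℤ²∖{(0,0)}} P(x,y)^{−s} is the Epstein zeta function of P and ζ is the Riemann zeta function. (Equivalently, the outer periods of f_{k,P}^+ := ½(f_{k,P}+f_{k,P'}), P' := [a,−b,c], satisfy r_0(f_{k,P}^+) = (−1)^k r_{2k−2}(f_{k,P}^+) = −|d|^{k−1/2} ζ_P(k)/(2(2k−1) w_P ζ(2k)).) -/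
open Complex MeasureTheory
open scoped Real

noncomputable section

namespace LHMF

abbrev SL2Z := Matrix.SpecialLinearGroup (Fin 2) ℤ

/-- Möbius action of `SL₂(ℤ)` on `ℂ`. -/
def moeb (M : SL2Z) (τ : ℂ) : ℂ :=
  ((M.1 0 0 : ℂ) * τ + (M.1 0 1 : ℂ)) / ((M.1 1 0 : ℂ) * τ + (M.1 1 1 : ℂ))

/-- Automorphy factor `j(M,τ) = cτ + d`. -/
def jfac (M : SL2Z) (τ : ℂ) : ℂ := (M.1 1 0 : ℂ) * τ + (M.1 1 1 : ℂ)

/-- `E₁`: union of all `SL₂(ℤ)`-translates of the positive imaginary axis. -/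
def E1 : Set ℂ := ⋃ M : SL2Z, (fun y : ℝ => moeb M ((y : ℂ) * Complex.I)) '' Set.Ioi 0

/-- Wirtinger derivative `∂f/∂τ`. -/
def dtau (f : ℂ → ℂ) (τ : ℂ) : ℂ :=
  (fderiv ℝ f τ 1 - Complex.I * fderiv ℝ f τ Complex.I) / 2

/-- Wirtinger derivative `∂f/∂τ̄`. -/
def dtaubar (f : ℂ → ℂ) (τ : ℂ) : ℂ :=
  (fderiv ℝ f τ 1 + Complex.I * fderiv ℝ f τ Complex.I) / 2

/-- The operator `ξ_κ f = 2i v^κ conj(∂f/∂τ̄)`. -/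
def xiOp (κ : ℤ) (f : ℂ → ℂ) (τ : ℂ) : ℂ :=
  2 * Complex.I * ((τ.im : ℂ) ^ κ) * starRingEnd ℂ (dtaubar f τ)

/-- The operator `𝒟 = (1/(2πi)) ∂/∂τ`. -/
def Dop (f : ℂ → ℂ) : ℂ → ℂ := fun τ => (2 * (π : ℂ) * Complex.I)⁻¹ * dtau f τ

/-- Maass raising operator of weight `κ`. -/
def raiseOp (κ : ℤ) (f : ℂ → ℂ) (τ : ℂ) : ℂ :=
  2 * Complex.I * dtau f τ + (κ : ℂ) * (τ.im : ℂ)⁻¹ * f τ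

/-- Iterated raising operator `R_κ^m = R_{κ+2m-2} ∘ ⋯ ∘ R_{κ+2} ∘ R_κ`. -/
def raiseIter (κ : ℤ) : ℕ → (ℂ → ℂ) → (ℂ → ℂ)
  | 0 => fun f => f
  | m + 1 => fun f => raiseOp (κ + 2 * m) (raiseIter κ m f)

/-- Petersson's Poincaré series `H_{k,k-1}(z,τ)`. -/
def Hpet (k : ℕ) (z τ : ℂ) : ℂ :=
  ∑' M : SL2Z, jfac M τ ^ (2 * k - 2) * ((moeb M τ).im : ℂ) ^ (2 * k - 1) *
    (z - moeb M τ)⁻¹ * (z - starRingEnd ℂ (moeb M τ)) ^ (1 - 2 * (k : ℤ))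

/-- The locally harmonic Maass form `H_{1-k,n}`. -/
def Hlhmf (k n : ℕ) (τ : ℂ) : ℂ :=
  (2 * Complex.I) ^ (2 * k - 2) / (2 * (π : ℂ)) *
    ∫ y in Set.Ioi (0 : ℝ), Hpet k ((y : ℂ) * Complex.I) τ * (y : ℂ) ^ n

/-- The cusp form `R_n` of weight `2k`. -/
def Rnform (k n : ℕ) (τ : ℂ) : ℂ :=
  (2 : ℂ) ^ (2 * k - 3) / (Complex.I ^ (2 * k - 1 - n) * (Nat.choose (2 * k - 2) n : ℂ) * (π : ℂ)) *
    ∑' M : SL2Z, jfac M τ ^ (-2 * (k : ℤ)) * moeb M τ ^ (-(n : ℤ) - 1)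

/-- Holomorphic Eichler integral of `f` (weight `2k`), along a vertical path. -/
def eichlerHol (k : ℕ) (f : ℂ → ℂ) (τ : ℂ) : ℂ :=
  (-2 * (π : ℂ) * Complex.I) ^ (2 * k - 1) / (Nat.factorial (2 * k - 2) : ℂ) *
    ∫ t in Set.Ioi (0 : ℝ), f (τ + (t : ℂ) * Complex.I) * ((t : ℂ) * Complex.I) ^ (2 * k - 2) *
      Complex.I

/-- Non-holomorphic Eichler integral `f^*` of `f` (weight `2k`), along a vertical path. -/
def eichlerStar (k : ℕ) (f : ℂ → ℂ) (τ : ℂ) : ℂ :=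
  (-2 * Complex.I) ^ (1 - 2 * (k : ℤ)) *
    ∫ t in Set.Ioi (0 : ℝ),
      starRingEnd ℂ (f (-(starRingEnd ℂ (-(starRingEnd ℂ τ) + (t : ℂ) * Complex.I)))) *
        (-(starRingEnd ℂ τ) + (t : ℂ) * Complex.I + τ) ^ (2 * k - 2) * Complex.I

/-- Bernoulli polynomial evaluated at a complex number. -/
def bernC (m : ℕ) (τ : ℂ) : ℂ := Polynomial.aeval τ (Polynomial.bernoulli m)

/-- Periodized Bernoulli polynomial `𝔹_m(τ) = B_m(τ - ⌊Re τ⌋)`. -/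
def bernPer (m : ℕ) (τ : ℂ) : ℂ := bernC m (τ - (⌊τ.re⌋ : ℂ))

/-- The period `r_n(E_{2k})` of the Eisenstein series, for `0 < n < 2k-2`. -/
def rnE (k n : ℕ) : ℚ :=
  if n % 2 = 0 then 0
  else (-1) ^ ((n - 1) / 2) * (2 * (k : ℚ)) * bernoulli (n + 1) * bernoulli (2 * k - 1 - n) /
    (bernoulli (2 * k) * ((n : ℚ) + 1) * ((2 * k - 1 - n : ℕ) : ℚ))

/-- The local polynomial `P_{1-k,n}`. -/
def Ppoly (k n : ℕ) (τ : ℂ) : ℂ :=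
  (rnE k n : ℂ)
  + (-Complex.I) ^ (n + 1) / ((n : ℂ) + 1) * bernPer (n + 1) τ
  + Complex.I ^ (n + 1) / ((2 * k - 1 - n : ℕ) : ℂ) * bernPer (2 * k - 1 - n) τ
  + Complex.I ^ (1 - (n : ℤ)) / 2 *
      ∑' M : {M : SL2Z // 0 < M.1 0 0 * M.1 1 0 ∧ (moeb M τ).re < 0},
        jfac M.1 τ ^ (2 * k - 2) *
          (moeb M.1 τ ^ n - (-1 : ℂ) ^ n * moeb M.1 τ ^ (2 * k - 2 - n))

/-- The binary quadratic form `[a,b,c]` evaluated at complex arguments. -/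
def qfC (a b c : ℤ) (x y : ℂ) : ℂ := (a : ℂ) * x ^ 2 + (b : ℂ) * x * y + (c : ℂ) * y ^ 2

/-- CM point of the positive definite form `[a,b,c]`. -/
def cmPoint (a b c : ℤ) : ℂ :=
  (-(b : ℂ) + Complex.I * ((Real.sqrt (((b ^ 2 - 4 * a * c).natAbs : ℝ))) : ℂ)) / (2 * (a : ℂ))

/-- The form `[a,b,c] ∘ M`. -/
def qfComp (a b c : ℤ) (M : SL2Z) : ℤ × ℤ × ℤ :=
  (a * (M.1 0 0) ^ 2 + b * (M.1 0 0) * (M.1 1 0) + c * (M.1 1 0) ^ 2,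
   2 * a * (M.1 0 0) * (M.1 0 1) + b * ((M.1 0 0) * (M.1 1 1) + (M.1 0 1) * (M.1 1 0)) +
     2 * c * (M.1 1 0) * (M.1 1 1),
   a * (M.1 0 1) ^ 2 + b * (M.1 0 1) * (M.1 1 1) + c * (M.1 1 1) ^ 2)

/-- `w_P`: order of the stabilizer of `P = [a,b,c]` in `PSL₂(ℤ)` (half the order of the
stabilizer in `SL₂(ℤ)`, which contains `±1`). -/
def wP (a b c : ℤ) : ℕ := Nat.card {M : SL2Z // qfComp a b c M = (a, b, c)} / 2

/-- The meromorphic modular form `f_{k,P}` for `P = [a,b,c]`. -/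
def fkP (k : ℕ) (a b c : ℤ) (z : ℂ) : ℂ :=
  (((((b ^ 2 - 4 * a * c).natAbs : ℝ)) ^ ((k : ℝ) - 1 / 2) : ℝ) : ℂ) /
      (2 * (π : ℂ) * (wP a b c : ℂ)) *
    ∑' M : SL2Z, (qfC a b c ((M.1 0 0 : ℂ) * z + (M.1 0 1 : ℂ))
      ((M.1 1 0 : ℂ) * z + (M.1 1 1 : ℂ))) ^ (-(k : ℤ))

/-- The `n`-th period `r_n(f) = ∫₀^∞ f(iy) y^n dy`. -/
def periodN (n : ℕ) (f : ℂ → ℂ) : ℂ :=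
  ∫ y in Set.Ioi (0 : ℝ), f ((y : ℂ) * Complex.I) * (y : ℂ) ^ n

/-- Epstein zeta function of `[a,b,c]` at an integer `k`. -/
def epstein (a b c : ℤ) (k : ℕ) : ℝ :=
  ∑' p : {p : ℤ × ℤ // p ≠ (0, 0)},
    ((a * p.1.1 ^ 2 + b * p.1.1 * p.1.2 + c * p.1.2 ^ 2 : ℤ) : ℝ) ^ (-(k : ℤ))

/-- `sgn(M)` for `M = (a,b;c,d)`: `sgn(ac)` if `ac ≠ 0`, else `sgn(bd)`. -/
def sgnM (M : SL2Z) : ℤ :=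
  if M.1 0 0 * M.1 1 0 ≠ 0 then Int.sign (M.1 0 0 * M.1 1 0) else Int.sign (M.1 0 1 * M.1 1 1)

/-- Upper incomplete Gamma function `Γ(s,x)` for a natural number `s`. -/
def GammaUpper (s : ℕ) (x : ℝ) : ℝ := ∫ t in Set.Ioi x, Real.exp (-t) * t ^ (s - 1)

/-- A cusp form of weight `2k` for `SL₂(ℤ)`, as a function on `ℂ` (holomorphic on `ℍ`,
modular of weight `2k`, vanishing at the cusp `i∞`). -/
def IsCuspForm2k (k : ℕ) (f : ℂ → ℂ) : Prop :=
  (∀ τ : ℂ, 0 < τ.im → DifferentiableAt ℂ f τ) ∧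
  (∀ (M : SL2Z) (τ : ℂ), 0 < τ.im → f (moeb M τ) = jfac M τ ^ (2 * k) * f τ) ∧
  Filter.Tendsto f (Filter.comap Complex.im Filter.atTop) (nhds 0)

/-!
Up to a constant, `f_{k,P}(iy) y^(2k-2)` is the sum over the forms `[A, B, C]` in the orbit of `P`,
with repetitions, of the kernels `y^(2k-2) / (A (iy)^2 + B (iy) + C)^k`. Grouping the matrices by
their first column, i.e. by the primitive vector at which `P` takes the value `A`, leaves for
each such vector a sum over the integer translates of a single kernel. The integral of every kernel
over `0 < y < ∞` has real part `0`, because its poles all lie on one side of the real `y`-axis, so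
the period comes from the failure to interchange sum and integral: the integral of a kernel over
`0 < y < T` has as real part minus its tail over `y > T`, and after rescaling by `T` the tails,
summed over the translates, form a Riemann sum whose limit as `T → ∞` is an explicit multiple of
`π A^(-k)`. What remains is `Σ A^(-k)` over primitive vectors, which is `ζ_P(k) / ζ(2k)`.
The other outer period follows from `f_{k,P}(-1/z) = z^(2k) f_{k,P}(z)`.
-/

/-! ### Functions holomorphic in a half-plane -/

section HalfPlane

open Filter Topology Asymptotics Bornology

variable {E : Type*} [NormedAddCommGroup E] [NormedSpace ℂ E] {f : ℂ → E}

lemma norm_intervalIntegral_le_of_differentiableOn_im_nonneg {C R : ℝ} (hR : 0 ≤ R)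
    (hf : DifferentiableOn ℂ f {z | 0 ≤ z.im}) (hC : ∀ z : ℂ, 0 ≤ z.im → R ≤ ‖z‖ → ‖f z‖ ≤ C) :
    ‖∫ t in -R..R, f t‖ ≤ 4 * C * R := by
  have hrect := integral_boundary_rect_eq_zero_of_differentiableOn f (-R : ℂ) (R + R * I)
    (hf.mono fun z hz ↦ by
      have := hz.2
      simp only [neg_im, ofReal_im, neg_zero, add_im, mul_im, ofReal_re, I_im, mul_one, I_re,
        mul_zero, add_zero, zero_add, Set.mem_preimage, Set.uIcc_of_le hR] at this
      exact this.1)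
  have top : ‖∫ x in -R..R, f (x + R * I)‖ ≤ C * |R - -R| :=
    intervalIntegral.norm_integral_le_of_norm_le_const fun x _ ↦ hC _ (by simpa using hR)
      (by simpa using (le_abs_self R).trans (by simpa using abs_im_le_norm (x + R * I)))
  have side (s : ℝ) (hs : |s| = R) : ‖∫ y in 0..R, f (s + y * I)‖ ≤ C * |R - 0| :=
    intervalIntegral.norm_integral_le_of_norm_le_const fun y hy ↦ hC _
      (by simpa using (Set.uIoc_of_le hR ▸ hy).1.le)
      (by simpa [hs] using abs_re_le_norm (s + y * I))
  have right := side R (abs_of_nonneg hR)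
  have left := side (-R) (by rw [abs_neg, abs_of_nonneg hR])
  have key : ∫ t in -R..R, f t = (∫ x in -R..R, f (x + R * I))
      - I • (∫ y in 0..R, f (R + y * I)) + I • ∫ y in 0..R, f ((-R : ℝ) + y * I) := by
    simp only [neg_im, ofReal_im, neg_zero, ofReal_zero, zero_mul, add_zero, neg_re, ofReal_re,
      add_re, mul_re, I_re, mul_zero, I_im, mul_one, sub_self, add_im, mul_im, zero_add,
      ofReal_neg] at hrect ⊢
    rw [← sub_eq_zero, ← hrect]
    abel
  calc ‖∫ t in -R..R, f t‖ ≤ C * |R - -R| + C * |R - 0| + C * |R - 0| := by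
        rw [key]
        refine norm_add_le_of_le (norm_sub_le_of_le top ?_) ?_ <;>
          simpa only [norm_smul, norm_I, one_mul]
    _ = 4 * C * R := by
        rw [sub_neg_eq_add, sub_zero, abs_of_nonneg hR, abs_of_nonneg (add_nonneg hR hR)]
        ring

lemma integral_eq_zero_of_differentiableOn_im_nonneg
    (hf : DifferentiableOn ℂ f {z | 0 ≤ z.im})
    (hf' : f =o[cobounded ℂ ⊓ 𝓟 {z | 0 ≤ z.im}] fun z ↦ z⁻¹) : ∫ t : ℝ, f t = 0 := by
  by_cases hint : Integrable fun t : ℝ ↦ f t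
  swap
  · exact integral_undef hint
  have hlim : Tendsto (fun R : ℝ ↦ ∫ t in -R..R, f t) atTop (𝓝 0) := by
    refine NormedAddGroup.tendsto_nhds_zero.2 fun ε hε ↦ ?_
    have hbound := (isLittleO_iff.1 hf') (show 0 < ε / 8 by positivity)
    rw [eventually_inf_principal, ← comap_norm_atTop, eventually_comap] at hbound
    obtain ⟨R₀, hR₀⟩ := eventually_atTop.1 hbound
    filter_upwards [eventually_ge_atTop R₀, eventually_gt_atTop 0] with R hR hR0
    have := norm_intervalIntegral_le_of_differentiableOn_im_nonneg hR0.le hf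
      (C := ε / 8 * R⁻¹) fun z hz hRz ↦
        (hR₀ ‖z‖ (hR.trans hRz) z rfl hz).trans (by rw [norm_inv]; gcongr)
    calc ‖∫ t in -R..R, f t‖ ≤ 4 * (ε / 8 * R⁻¹) * R := this
      _ = ε / 2 := by field_simp; norm_num
      _ < ε := half_lt_self hε
  exact tendsto_nhds_unique
    (intervalIntegral_tendsto_integral hint tendsto_neg_atTop_atBot tendsto_id) hlim

lemma isTheta_mul_add_cobounded {a : ℂ} (ha : a ≠ 0) (b : ℂ) :
    (fun z ↦ a * z + b) =Θ[cobounded ℂ] fun z ↦ z := by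
  have h : (fun _ ↦ b) =o[cobounded ℂ] fun z ↦ a * z :=
    (isLittleO_const_id_cobounded b).trans_isTheta ((isTheta_refl _ _).const_mul_right ha)
  exact h.right_isTheta_add'.symm.trans ((isTheta_refl _ _).const_mul_left ha)

lemma isTheta_mul_add_sq_add_cobounded {a : ℂ} (ha : a ≠ 0) (b c : ℂ) :
    (fun z ↦ (a * z + b) ^ 2 + c) =Θ[cobounded ℂ] fun z ↦ z ^ 2 := by
  have hsq := (isTheta_mul_add_cobounded ha b).pow 2
  have hc : (fun _ ↦ c) =o[cobounded ℂ] fun z : ℂ ↦ z ^ 2 := by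
    simpa using (isLittleO_pow_pow_cobounded_of_lt (R := ℂ) two_pos).const_mul_left c
  exact (hc.trans_isTheta hsq.symm).right_isTheta_add'.symm.trans hsq

lemma isLittleO_pow_div_inv_cobounded {g : ℂ → ℂ} {j d : ℕ}
    (hg : g =Θ[cobounded ℂ] fun z ↦ z ^ d) (hjd : j + 1 < d) :
    (fun z ↦ z ^ j / g z) =o[cobounded ℂ] fun z ↦ z⁻¹ := by
  have h := (isLittleO_pow_pow_cobounded_of_lt (R := ℂ) hjd).mul_isBigO
    (isBigO_refl (fun z : ℂ ↦ (z ^ (d + 1))⁻¹) _)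
  refine ((isTheta_refl _ _).div hg).isBigO.trans_isLittleO (h.congr' ?_ ?_) <;>
  · filter_upwards [eventually_ne_cobounded (0 : ℂ)] with z hz
    field_simp
    ring

end HalfPlane

/-! ### The kernel `u ^ (2m) / ((x + iu)² + v²) ^ (m + 1)` -/

section Kernel

/-- The power `-(m + 1)` of the monic quadratic polynomial `(z + x)² + v²` at `z = iu`, weighted
by `u ^ (2m)`: the shape of each term of `f_{k,P}(iu) u ^ (2k - 2)` for `k = m + 1`. -/
def kernel (m : ℕ) (v x u : ℝ) : ℂ := u ^ (2 * m) / ((x + u * I) ^ 2 + v ^ 2) ^ (m + 1)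

variable {m : ℕ} {D v x u : ℝ}

lemma kernel_neg_right (m : ℕ) (v x u : ℝ) : kernel m v x (-u) = kernel m v (-x) u := by
  simp only [kernel, ofReal_neg, Even.neg_pow (even_two_mul m)]
  congr 3
  ring

lemma conj_kernel (m : ℕ) (v x u : ℝ) :
    starRingEnd ℂ (kernel m v x u) = kernel m v (-x) u := by
  simp only [kernel, map_div₀, map_pow, map_add, map_mul, conj_ofReal, conj_I, ofReal_neg]
  congr 3
  ring

lemma kernel_re_neg (m : ℕ) (v x u : ℝ) : (kernel m v (-x) u).re = (kernel m v x u).re := by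
  rw [← conj_kernel, conj_re]

lemma kernel_re_abs (m : ℕ) (v x u : ℝ) : (kernel m v x |u|).re = (kernel m v x u).re := by
  obtain h | h := abs_choice u <;> simp only [h, kernel_neg_right, kernel_re_neg]

lemma normSq_sq_add_sq (v x u : ℝ) :
    normSq (((x + u * I) ^ 2 + v ^ 2 : ℂ)) = (x ^ 2 + v ^ 2 - u ^ 2) ^ 2 + 4 * u ^ 2 * x ^ 2 := by
  simp [normSq_apply, pow_two]
  ring

lemma sq_add_sq_add_sq_le_mul_norm (hD : 0 ≤ D) (hv : v ^ 2 ≤ D * x ^ 2) (u : ℝ) :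
    x ^ 2 + v ^ 2 + u ^ 2 ≤ (1 + D) * ‖((x + u * I) ^ 2 + v ^ 2 : ℂ)‖ := by
  refine le_of_sq_le_sq ?_ (by positivity)
  rw [mul_pow, ← normSq_eq_norm_sq, normSq_sq_add_sq]
  calc (x ^ 2 + v ^ 2 + u ^ 2) ^ 2
      = (x ^ 2 + v ^ 2 - u ^ 2) ^ 2 + 4 * u ^ 2 * (x ^ 2 + v ^ 2) := by ring
    _ ≤ (x ^ 2 + v ^ 2 - u ^ 2) ^ 2 + 4 * u ^ 2 * ((1 + D) * x ^ 2) := by gcongr; linarith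
    _ ≤ (1 + D) ^ 2 * ((x ^ 2 + v ^ 2 - u ^ 2) ^ 2 + 4 * u ^ 2 * x ^ 2) := by
      have : 0 ≤ D * ((x ^ 2 + v ^ 2 - u ^ 2) ^ 2 * (2 + D) + 4 * u ^ 2 * x ^ 2 * (1 + D)) := by
        positivity
      linarith

lemma sq_add_sq_le_two_mul_norm (hv : 2 * |v| ≤ u) (x : ℝ) :
    x ^ 2 + u ^ 2 ≤ 2 * ‖((x + u * I) ^ 2 + v ^ 2 : ℂ)‖ := by
  have hvu : 4 * v ^ 2 ≤ u ^ 2 := by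
    calc 4 * v ^ 2 = (2 * |v|) ^ 2 := by rw [mul_pow, sq_abs]; norm_num
      _ ≤ u ^ 2 := by gcongr
  have h := norm_sub_le_norm_add ((x + u * I) ^ 2 : ℂ) (v ^ 2)
  rw [norm_pow, ← normSq_eq_norm_sq, normSq_add_mul_I, ← ofReal_pow, norm_real,
    Real.norm_of_nonneg (sq_nonneg v), ofReal_pow] at h
  nlinarith [sq_nonneg x]

lemma re_eq_zero_and_abs_im_eq_of_sq_add_sq_eq_zero {w : ℂ} (h : w ^ 2 + v ^ 2 = 0) :
    w.re = 0 ∧ |w.im| = |v| := by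
  have : w ^ 2 = (v * I) ^ 2 := by rw [mul_pow, I_sq]; linear_combination h
  obtain rfl | rfl := sq_eq_sq_iff_eq_or_eq_neg.1 this <;> simp

lemma sq_add_sq_ne_zero (hx : x ≠ 0) (v u : ℝ) : ((x + u * I) ^ 2 + v ^ 2 : ℂ) ≠ 0 :=
  fun h ↦ hx <| by simpa using (re_eq_zero_and_abs_im_eq_of_sq_add_sq_eq_zero h).1

lemma norm_kernel (m : ℕ) (v x u : ℝ) :
    ‖kernel m v x u‖ = u ^ (2 * m) / ‖((x + u * I) ^ 2 + v ^ 2 : ℂ)‖ ^ (m + 1) := by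
  rw [kernel, norm_div, norm_pow, norm_pow, norm_real, Real.norm_eq_abs,
    Even.pow_abs (even_two_mul m)]

lemma norm_kernel_le (hD : 0 ≤ D) (hv : v ^ 2 ≤ D * x ^ 2) (hx : x ≠ 0) (m : ℕ) (u : ℝ) :
    ‖kernel m v x u‖ ≤
      (1 + D) ^ (m + 1) * (u ^ (2 * m) / (x ^ 2 + v ^ 2 + u ^ 2) ^ (m + 1)) := by
  have : 0 < x ^ 2 + v ^ 2 + u ^ 2 := by positivity
  have h := sq_add_sq_add_sq_le_mul_norm hD hv u
  have hq : 0 < ‖((x + u * I) ^ 2 + v ^ 2 : ℂ)‖ := norm_pos_iff.2 (sq_add_sq_ne_zero hx v u)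
  have hu : 0 ≤ u ^ (2 * m) := (even_two_mul m).pow_nonneg u
  rw [norm_kernel, ← mul_div_assoc, div_le_div_iff₀ (by positivity) (by positivity)]
  calc u ^ (2 * m) * (x ^ 2 + v ^ 2 + u ^ 2) ^ (m + 1)
      ≤ u ^ (2 * m) * ((1 + D) * ‖((x + u * I) ^ 2 + v ^ 2 : ℂ)‖) ^ (m + 1) := by gcongr
    _ = _ := by rw [mul_pow]; ring

lemma norm_kernel_le_inv (hD : 0 ≤ D) (hv : v ^ 2 ≤ D * x ^ 2) (hx : x ≠ 0) (m : ℕ) (u : ℝ) :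
    ‖kernel m v x u‖ ≤ (1 + D) ^ (m + 1) * (x ^ 2 + u ^ 2)⁻¹ := by
  refine (norm_kernel_le hD hv hx m u).trans ?_
  gcongr
  calc u ^ (2 * m) / (x ^ 2 + v ^ 2 + u ^ 2) ^ (m + 1)
      = (u ^ 2 / (x ^ 2 + v ^ 2 + u ^ 2)) ^ m * (x ^ 2 + v ^ 2 + u ^ 2)⁻¹ := by
        rw [pow_mul, div_pow, pow_succ (x ^ 2 + v ^ 2 + u ^ 2), div_mul_eq_div_div, div_eq_mul_inv]
    _ ≤ 1 * (x ^ 2 + u ^ 2)⁻¹ := by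
        gcongr
        · exact pow_le_one₀ (by positivity) (div_le_one_of_le₀ (by nlinarith) (by positivity))
        · nlinarith
    _ = _ := one_mul _

lemma norm_kernel_le_of_two_mul_abs_le (hv : 2 * |v| ≤ u) (hu : 0 < u) (x : ℝ) (m : ℕ) :
    ‖kernel m v x u‖ ≤ 2 ^ (m + 1) * (u ^ 2 + x ^ 2)⁻¹ := by
  have hq := sq_add_sq_le_two_mul_norm hv x
  have hq0 : 0 < ‖((x + u * I) ^ 2 + v ^ 2 : ℂ)‖ := by nlinarith [sq_nonneg x]
  rw [norm_kernel, ← div_eq_mul_inv, div_le_div_iff₀ (by positivity) (by positivity)]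
  calc u ^ (2 * m) * (u ^ 2 + x ^ 2) ≤ (u ^ 2 + x ^ 2) ^ m * (u ^ 2 + x ^ 2) := by
        rw [pow_mul]
        gcongr
        exact le_add_of_nonneg_right (sq_nonneg x)
    _ = (x ^ 2 + u ^ 2) ^ (m + 1) := by rw [← pow_succ, add_comm]
    _ ≤ (2 * ‖((x + u * I) ^ 2 + v ^ 2 : ℂ)‖) ^ (m + 1) := by gcongr
    _ = _ := mul_pow _ _ _

lemma hasDerivAt_kernel_left (hv : 2 * |v| ≤ u) (hu : 0 < u) (x : ℝ) (m : ℕ) :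
    HasDerivAt (fun x ↦ kernel m v x u)
      (-(2 * (m + 1) * u ^ (2 * m) * (x + u * I)) / ((x + u * I) ^ 2 + v ^ 2) ^ (m + 2)) x := by
  have hq : ((x + u * I) ^ 2 + v ^ 2 : ℂ) ≠ 0 := norm_pos_iff.1 <| by
    nlinarith [sq_add_sq_le_two_mul_norm hv x, sq_nonneg x]
  have h : HasDerivAt (fun z : ℂ ↦ ((z + u * I) ^ 2 + v ^ 2) ^ (m + 1))
      ((m + 1) * ((x + u * I) ^ 2 + v ^ 2) ^ m * (2 * (x + u * I))) x := by
    simpa using ((((hasDerivAt_id (x : ℂ)).add_const (u * I : ℂ)).fun_pow 2).add_const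
      (v ^ 2 : ℂ)).fun_pow (m + 1)
  have h' := ((h.fun_inv (pow_ne_zero _ hq)).const_mul (u ^ (2 * m) : ℂ)).comp_ofReal
  simp only [← div_eq_mul_inv] at h'
  refine h'.congr_deriv ?_
  rw [← pow_mul, show (m + 1) * 2 = m + (m + 2) by ring, pow_add _ m (m + 2)]
  field_simp

lemma norm_deriv_kernel_left_le (hv : 2 * |v| ≤ u) (hu : 0 < u) (x : ℝ) (m : ℕ) :
    ‖deriv (fun x ↦ kernel m v x u) x‖ ≤ 2 ^ (m + 3) * (m + 1) * u⁻¹ * (u ^ 2 + x ^ 2)⁻¹ := by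
  have hq := sq_add_sq_le_two_mul_norm hv x
  have hz : ‖(x + u * I : ℂ)‖ ^ 2 = u ^ 2 + x ^ 2 := by
    rw [← normSq_eq_norm_sq, normSq_add_mul_I, add_comm]
  have huz : u ≤ ‖(x + u * I : ℂ)‖ := by
    refine le_of_sq_le_sq ?_ (norm_nonneg _)
    linarith [sq_nonneg x]
  rw [(hasDerivAt_kernel_left hv hu x m).deriv, norm_div, norm_neg, norm_pow, ← hz]
  rw [add_comm, ← hz] at hq
  generalize ((x + u * I) ^ 2 + v ^ 2 : ℂ) = q at hq ⊢
  have hnum : ‖(2 * (m + 1) * u ^ (2 * m) * (x + u * I) : ℂ)‖ =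
      2 * (m + 1) * u ^ (2 * m) * ‖(x + u * I : ℂ)‖ := by
    rw [norm_mul, ← Nat.cast_add_one, norm_mul, norm_mul, norm_natCast, norm_pow, norm_real,
      Real.norm_of_nonneg hu.le, norm_ofNat, Nat.cast_add_one]
  rw [hnum]
  generalize ‖(x + u * I : ℂ)‖ = r at huz hq
  have hr : 0 < r := hu.trans_le huz
  have : 0 < ‖q‖ := by nlinarith
  calc 2 * (m + 1) * u ^ (2 * m) * r / ‖q‖ ^ (m + 2)
      ≤ 2 * (m + 1) * r ^ (2 * m) * r / (r ^ 2 / 2) ^ (m + 2) := by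
        gcongr
        linarith
    _ = 2 ^ (m + 3) * (m + 1) * r⁻¹ * (r ^ 2)⁻¹ := by
        rw [div_pow]
        field_simp
        ring
    _ ≤ 2 ^ (m + 3) * (m + 1) * u⁻¹ * (r ^ 2)⁻¹ := by gcongr

lemma integral_kernel_right_of_neg (hx : x < 0) (m : ℕ) (v : ℝ) : ∫ u, kernel m v x u = 0 := by
  refine integral_eq_zero_of_differentiableOn_im_nonneg
    (f := fun z ↦ z ^ (2 * m) / ((x + z * I) ^ 2 + v ^ 2) ^ (m + 1)) ?_ ?_
  · refine DifferentiableOn.div (by fun_prop) (by fun_prop) fun z hz ↦ pow_ne_zero _ fun h ↦ ?_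
    have := (re_eq_zero_and_abs_im_eq_of_sq_add_sq_eq_zero h).1
    simp only [add_re, ofReal_re, mul_re, I_re, mul_zero, I_im, mul_one, zero_sub] at this
    linarith [Set.mem_ofPred.1 hz]
  · have h := (isTheta_mul_add_sq_add_cobounded I_ne_zero x (v ^ 2)).pow (m + 1)
    simp_rw [← pow_mul] at h
    simpa only [mul_comm, add_comm] using
      (isLittleO_pow_div_inv_cobounded h (j := 2 * m) (by lia)).mono inf_le_left

lemma integral_kernel_left (hv : |v| < u) (m : ℕ) : ∫ x, kernel m v x u = 0 := by
  refine integral_eq_zero_of_differentiableOn_im_nonneg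
    (f := fun z ↦ u ^ (2 * m) / ((z + u * I) ^ 2 + v ^ 2) ^ (m + 1)) ?_ ?_
  · refine DifferentiableOn.div (by fun_prop) (by fun_prop) fun z hz ↦ pow_ne_zero _ fun h ↦ ?_
    have := (re_eq_zero_and_abs_im_eq_of_sq_add_sq_eq_zero h).2
    simp only [add_im, mul_im, ofReal_re, I_im, mul_one, ofReal_im, I_re, mul_zero, add_zero]
      at this
    linarith [le_abs_self (z.im + u), Set.mem_ofPred.1 hz]
  · have h := (isTheta_mul_add_sq_add_cobounded one_ne_zero (u * I) (v ^ 2)).pow (m + 1)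
    simp_rw [← pow_mul, one_mul] at h
    simpa [div_eq_mul_inv] using
      ((isLittleO_pow_div_inv_cobounded h (j := 0) (by lia)).const_mul_left (u ^ (2 * m) : ℂ)).mono
        inf_le_left

lemma continuous_kernel_right (hx : x ≠ 0) (m : ℕ) (v : ℝ) : Continuous (kernel m v x) :=
  Continuous.div (by fun_prop) (by fun_prop) fun u ↦ pow_ne_zero _ (sq_add_sq_ne_zero hx v u)

lemma integrable_inv_sq_add_sq (hx : x ≠ 0) : Integrable fun u : ℝ ↦ (x ^ 2 + u ^ 2)⁻¹ := by
  refine ((integrable_inv_one_add_sq.comp_div hx).const_mul (x ^ 2)⁻¹).congr (.of_forall fun u ↦ ?_)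
  simp only [div_pow]
  field_simp

lemma integral_inv_sq_add_sq (hx : 0 < x) : ∫ u : ℝ, (x ^ 2 + u ^ 2)⁻¹ = π / x := by
  have h (u : ℝ) : (x ^ 2 + u ^ 2)⁻¹ = (x ^ 2)⁻¹ * (1 + (u / x) ^ 2)⁻¹ := by
    rw [div_pow]
    field_simp
  simp_rw [h, integral_const_mul, Measure.integral_comp_div (fun u ↦ (1 + u ^ 2)⁻¹) x,
    integral_univ_inv_one_add_sq, abs_of_pos hx, smul_eq_mul]
  field_simp

lemma integrable_kernel_right (hx : x ≠ 0) (m : ℕ) (v : ℝ) : Integrable (kernel m v x) := by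
  have hv : v ^ 2 ≤ (v ^ 2 / x ^ 2) * x ^ 2 := by rw [div_mul_cancel₀ _ (by positivity)]
  exact ((integrable_inv_sq_add_sq hx).const_mul _).mono'
    (continuous_kernel_right hx m v).aestronglyMeasurable
    (.of_forall (norm_kernel_le_inv (by positivity) hv hx m))

lemma integral_re_kernel_Ioi_zero (hx : x ≠ 0) (m : ℕ) (v : ℝ) :
    ∫ u in Set.Ioi (0 : ℝ), (kernel m v x u).re = 0 := by
  wlog hneg : x < 0 generalizing x
  · simpa only [kernel_re_neg] using
      this (neg_ne_zero.2 hx) (neg_lt_zero.2 (hx.lt_or_gt.resolve_left hneg))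
  have habs := integral_comp_abs (f := fun u ↦ (kernel m v x u).re)
  have hre := integral_re (𝕜 := ℂ) (integrable_kernel_right hx m v)
  simp only [kernel_re_abs] at habs
  simp only [RCLike.re_eq_complex_re, integral_kernel_right_of_neg hneg, zero_re] at hre
  linarith

end Kernel

/-! ### Tails of the kernel integral and their limiting profile -/

section Tail

open Filter Topology Set

lemma normSq_one_sub_mul_I (s : ℝ) : normSq (1 - s * I) = 1 + s ^ 2 := by
  simp [normSq_apply, sq]

lemma one_sub_mul_I_ne_zero (s : ℝ) : (1 - s * I : ℂ) ≠ 0 := by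
  rw [← normSq_pos, normSq_one_sub_mul_I]
  positivity

lemma integrable_inv_one_sub_mul_I_pow {j : ℕ} (hj : 2 ≤ j) :
    Integrable fun s : ℝ ↦ ((1 - s * I) ^ j : ℂ)⁻¹ := by
  refine integrable_inv_one_add_sq.mono' ?_ (.of_forall fun s ↦ ?_)
  · exact (Continuous.inv₀ (by fun_prop) fun s ↦
      pow_ne_zero _ (one_sub_mul_I_ne_zero s)).aestronglyMeasurable
  · have hsq : ‖(1 - s * I : ℂ)‖ ^ 2 = 1 + s ^ 2 := by
      rw [← normSq_eq_norm_sq, normSq_one_sub_mul_I]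
    have hone : 1 ≤ ‖(1 - s * I : ℂ)‖ := by nlinarith [norm_nonneg (1 - s * I : ℂ)]
    rw [norm_inv, norm_pow, ← hsq]
    gcongr

lemma integral_inv_one_sub_mul_I_pow {j : ℕ} (hj : 2 ≤ j) :
    ∫ s : ℝ, ((1 - s * I) ^ j : ℂ)⁻¹ = 0 := by
  refine integral_eq_zero_of_differentiableOn_im_nonneg (f := fun z ↦ ((1 - z * I) ^ j)⁻¹) ?_ ?_
  · refine DifferentiableOn.inv (by fun_prop) fun z hz ↦ pow_ne_zero _ fun h ↦ ?_
    have := congrArg re h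
    simp only [sub_re, one_re, mul_re, I_re, mul_zero, I_im, mul_one, zero_sub, zero_re] at this
    linarith [Set.mem_ofPred.1 hz]
  · have h := (isTheta_mul_add_cobounded (neg_ne_zero.2 I_ne_zero) 1).pow j
    simpa [neg_mul, neg_add_eq_sub, mul_comm I] using
      (isLittleO_pow_div_inv_cobounded h (j := 0) hj).mono inf_le_left

-- For `w = 1 - is` one has `Im w⁻ʲ / s = Im w⁻⁽ʲ⁻¹⁾ / s + Re w⁻ʲ`, and `Re w⁻ʲ` integrates to zero.
lemma im_inv_one_sub_mul_I_pow_succ_div {s : ℝ} (hs : s ≠ 0) (j : ℕ) :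
    (((1 - s * I) ^ (j + 2) : ℂ)⁻¹).im / s =
      (((1 - s * I) ^ (j + 1) : ℂ)⁻¹).im / s + (((1 - s * I) ^ (j + 2) : ℂ)⁻¹).re := by
  have h : ((1 - s * I) ^ (j + 1) : ℂ)⁻¹ = ((1 - s * I) ^ (j + 2) : ℂ)⁻¹ * (1 - s * I) := by
    have := one_sub_mul_I_ne_zero s
    field_simp
    ring
  rw [h]
  simp only [mul_im, sub_re, sub_im, one_re, one_im, mul_re, ofReal_re, ofReal_im, I_re, I_im]
  field_simp
  ring

lemma integral_im_inv_one_sub_mul_I_pow_div (j : ℕ) :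
    Integrable (fun s : ℝ ↦ (((1 - s * I) ^ (j + 1) : ℂ)⁻¹).im / s) ∧
      ∫ s : ℝ, (((1 - s * I) ^ (j + 1) : ℂ)⁻¹).im / s = π := by
  have hne : ∀ᵐ s : ℝ, s ≠ 0 := Measure.ae_ne volume 0
  induction j with
  | zero =>
    have h : (fun s : ℝ ↦ (1 + s ^ 2)⁻¹) =ᵐ[volume]
        fun s : ℝ ↦ (((1 - s * I) ^ (0 + 1) : ℂ)⁻¹).im / s := by
      filter_upwards [hne] with s hs
      rw [zero_add, pow_one, inv_im, normSq_one_sub_mul_I]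
      simp
      field_simp
    exact ⟨integrable_inv_one_add_sq.congr h,
      (integral_congr_ae h).symm.trans integral_univ_inv_one_add_sq⟩
  | succ j ih =>
    have hint := integrable_inv_one_sub_mul_I_pow (j := j + 2) (by lia)
    have hintre : Integrable fun s : ℝ ↦ (((1 - s * I) ^ (j + 2) : ℂ)⁻¹).re := hint.re
    have hre : ∫ s : ℝ, (((1 - s * I) ^ (j + 2) : ℂ)⁻¹).re = 0 := by
      simpa [integral_inv_one_sub_mul_I_pow (j := j + 2) (by lia)] using integral_re (𝕜 := ℂ) hint
    have h := hne.mono fun s hs ↦ (im_inv_one_sub_mul_I_pow_succ_div hs j).symm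
    exact ⟨(ih.1.add hintre).congr h, (integral_congr_ae h).symm.trans <| by
      rw [integral_add ih.1 hintre, ih.2, hre, add_zero]⟩

/-- The real part of the integral of the kernel over `(T, ∞)`. -/
def kernelTail (m : ℕ) (v x T : ℝ) : ℝ := ∫ u in Ioi T, (kernel m v x u).re

variable {m : ℕ} {D v x T : ℝ}

lemma hasDerivAt_neg_div_sub_pow_div {c : ℂ} {w : ℝ} (hc : c ≠ 0) (hw : (w - c : ℂ) ≠ 0) (m : ℕ) :
    HasDerivAt (fun w : ℝ ↦ -(w / (w - c) : ℂ) ^ (2 * m + 1) / ((2 * m + 1) * c))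
      (w ^ (2 * m) / ((w - c) ^ 2) ^ (m + 1)) w := by
  have hid : HasDerivAt (fun w : ℝ ↦ (w : ℂ)) 1 w := ofRealCLM.hasDerivAt
  refine (((hid.div (hid.sub_const c) hw).pow (2 * m + 1)).neg.div_const _).congr_deriv ?_
  have hm : (2 * m + 1 : ℂ) ≠ 0 := by exact_mod_cast (2 * m).succ_ne_zero
  simp only [Nat.add_sub_cancel, Pi.div_apply, ← pow_mul, div_pow]
  push_cast
  field_simp
  ring

lemma tendsto_ofReal_div_sub_atTop (c : ℂ) :
    Tendsto (fun w : ℝ ↦ (w / (w - c) : ℂ)) atTop (𝓝 1) := by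
  have hinv : Tendsto (fun w : ℝ ↦ (1 - c * (w⁻¹ : ℝ))⁻¹) atTop (𝓝 (1 - c * (0 : ℝ))⁻¹) :=
    (tendsto_const_nhds.sub (((continuous_ofReal.tendsto 0).comp tendsto_inv_atTop_zero).const_mul
      c)).inv₀ (by simp)
  simp only [ofReal_zero, mul_zero, sub_zero, inv_one] at hinv
  refine hinv.congr' ?_
  filter_upwards [eventually_ne_atTop 0] with w hw
  have : (w : ℂ) ≠ 0 := ofReal_ne_zero.2 hw
  rw [ofReal_inv, ← inv_div, sub_div, div_self this, div_eq_mul_inv c]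

lemma kernelTail_zero_one (hs : x ≠ 0) (m : ℕ) :
    kernelTail m 0 x 1 =
      (-1) ^ (m + 1) / (2 * m + 1) * ((((1 - x * I) ^ (2 * m + 1) : ℂ)⁻¹).im / x) := by
  have hc : (x * I : ℂ) ≠ 0 := mul_ne_zero (ofReal_ne_zero.2 hs) I_ne_zero
  have hw (w : ℝ) : (w - x * I : ℂ) ≠ 0 := fun h ↦ hs <| by simpa using congrArg im h
  have hkernel (w : ℝ) :
      kernel m 0 x w = (-1) ^ (m + 1) * (w ^ (2 * m) / ((w - x * I) ^ 2) ^ (m + 1)) := by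
    have h : ((x + w * I) ^ 2 + (0 : ℝ) ^ 2 : ℂ) = -1 * (w - x * I) ^ 2 := by
      rw [ofReal_zero]
      linear_combination (w ^ 2 + x ^ 2 : ℂ) * I_sq
    rw [kernel, h, mul_pow, div_eq_mul_inv, mul_inv, ← inv_pow, inv_neg_one]
    ring
  have hint := integrable_kernel_right hs m 0
  have hFTC := integral_Ioi_of_hasDerivAt_of_tendsto' (a := 1)
    (fun w _ ↦ (hasDerivAt_neg_div_sub_pow_div hc (hw w) m).const_mul ((-1) ^ (m + 1)))
    (by simpa only [← hkernel] using hint.integrableOn)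
    ((((tendsto_ofReal_div_sub_atTop (x * I)).pow (2 * m + 1)).neg.div_const _).const_mul _)
  have hre := integral_re (𝕜 := ℂ) (hint.integrableOn (s := Ioi 1))
  simp only [RCLike.re_eq_complex_re, hkernel] at hre
  simp only [kernelTail, hkernel]
  have hval (z : ℂ) : (-1) ^ (m + 1) * (-1 / ((2 * m + 1) * (x * I))) -
      (-1) ^ (m + 1) * (-z / ((2 * m + 1) * (x * I))) =
        (((-1) ^ (m + 1) / ((2 * m + 1) * x) : ℝ) : ℂ) * ((z - 1) * -I) := by
    have : (2 * m + 1 : ℂ) ≠ 0 := by exact_mod_cast (2 * m).succ_ne_zero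
    rw [← inv_I]
    push_cast
    field_simp
    ring
  rw [hre, hFTC, one_pow, ofReal_one, one_div, inv_pow, hval, re_ofReal_mul]
  simp only [mul_re, sub_im, one_im, neg_re, neg_im, I_re, I_im]
  field_simp
  ring

lemma sq_mul_kernel_mul (hT : T ≠ 0) (m : ℕ) (v x u : ℝ) :
    (T : ℂ) ^ 2 * kernel m (T * v) (T * x) (T * u) = kernel m v x u := by
  have hT' : (T : ℂ) ≠ 0 := ofReal_ne_zero.2 hT
  have h : ((T * x + T * u * I) ^ 2 + (T * v) ^ 2 : ℂ) = T ^ 2 * ((x + u * I) ^ 2 + v ^ 2) := by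
    ring
  simp only [kernel, ofReal_mul]
  rw [h, mul_pow, mul_pow, ← mul_div_assoc, ← mul_assoc, ← pow_add, ← pow_mul,
    show 2 + 2 * m = 2 * (m + 1) by ring, mul_div_mul_left _ _ (pow_ne_zero _ hT')]

lemma mul_kernelTail (hT : 0 < T) (m : ℕ) (v x : ℝ) :
    T * kernelTail m v x T = kernelTail m (v / T) (x / T) 1 := by
  have h (u : ℝ) : (kernel m v x (T * u)).re = (T ^ 2)⁻¹ * (kernel m (v / T) (x / T) u).re := by
    rw [← sq_mul_kernel_mul hT.ne' m (v / T), mul_div_cancel₀ _ hT.ne', mul_div_cancel₀ _ hT.ne',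
      ← ofReal_pow, re_ofReal_mul, inv_mul_cancel_left₀ (by positivity)]
  have := integral_comp_mul_left_Ioi (fun u ↦ (kernel m v x u).re) 1 hT
  simp only [mul_one, h, integral_const_mul, smul_eq_mul] at this
  rw [kernelTail, kernelTail]
  field_simp at this
  linarith

lemma tendsto_kernelTail {l : Filter ℝ} [l.IsCountablyGenerated] {v' x' : ℝ → ℝ} (hx : x ≠ 0)
    (hv' : Tendsto v' l (𝓝 v)) (hx' : Tendsto x' l (𝓝 x)) (m : ℕ) (T : ℝ) :
    Tendsto (fun t ↦ kernelTail m (v' t) (x' t) T) l (𝓝 (kernelTail m v x T)) := by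
  have hx2 : 0 < x ^ 2 := by positivity
  set D := v ^ 2 / x ^ 2 + 1 with hD
  have hDx : v ^ 2 < D * x ^ 2 := by
    rw [hD, add_mul, div_mul_cancel₀ _ hx2.ne']
    linarith
  have hne := hx'.eventually_ne hx
  have hlt := (hv'.pow 2).eventually_lt ((hx'.pow 2).const_mul D) hDx
  have hhalf : ∀ᶠ t in l, (x / 2) ^ 2 < x' t ^ 2 :=
    (hx'.pow 2).eventually_const_lt (by linarith [div_pow x 2 2])
  refine tendsto_integral_filter_of_dominated_convergence
    (fun u ↦ (1 + D) ^ (m + 1) * ((x / 2) ^ 2 + u ^ 2)⁻¹) ?_ ?_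
    (((integrable_inv_sq_add_sq (div_ne_zero hx two_ne_zero)).const_mul _).integrableOn) ?_
  · filter_upwards [hne] with t ht using
      (continuous_re.comp (continuous_kernel_right ht m _)).aestronglyMeasurable
  · filter_upwards [hne, hlt, hhalf] with t ht hvt hxt
    refine .of_forall fun u ↦ (abs_re_le_norm _).trans
      ((norm_kernel_le_inv (by positivity) hvt.le ht m u).trans ?_)
    gcongr
  · refine .of_forall fun u ↦ (continuous_re.tendsto _).comp ?_
    have hv'' := (continuous_ofReal.tendsto v).comp hv'
    have hx'' := (continuous_ofReal.tendsto x).comp hx'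
    exact tendsto_const_nhds.div ((((hx''.add_const _).pow 2).add (hv''.pow 2)).pow (m + 1))
      (pow_ne_zero _ (sq_add_sq_ne_zero hx v u))

lemma tendsto_mul_kernelTail {s : ℝ} (hs : s ≠ 0) {x' : ℝ → ℝ}
    (hx' : Tendsto (fun T ↦ x' T / T) atTop (𝓝 s)) (m : ℕ) (v : ℝ) :
    Tendsto (fun T ↦ T * kernelTail m v (x' T) T) atTop (𝓝 (kernelTail m 0 s 1)) :=
  (tendsto_kernelTail hs (tendsto_const_nhds.div_atTop tendsto_id) hx' m 1).congr' <| by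
    filter_upwards [eventually_gt_atTop 0] with T hT using (mul_kernelTail hT m v (x' T)).symm

lemma setIntegral_Ioc_re_kernel (hx : x ≠ 0) (hT : 0 ≤ T) (m : ℕ) (v : ℝ) :
    ∫ u in Ioc 0 T, (kernel m v x u).re = -kernelTail m v x T := by
  have hint := (integrable_kernel_right hx m v).re
  have h := setIntegral_union (μ := volume) (Ioc_disjoint_Ioi_same (a := 0) (b := T))
    measurableSet_Ioi hint.integrableOn hint.integrableOn
  rw [Ioc_union_Ioi_eq_Ioi hT] at h
  simp only [RCLike.re_eq_complex_re, integral_re_kernel_Ioi_zero hx] at h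
  rw [kernelTail]
  linarith

lemma abs_kernelTail_le_div (hD : 0 ≤ D) (hv : v ^ 2 ≤ D * x ^ 2) (hx : x ≠ 0) (hT : 0 < T)
    (m : ℕ) : |kernelTail m v x T| ≤ (1 + D) ^ (m + 1) / T := by
  have hlt : (-2 : ℝ) < -1 := by norm_num
  have hbound : ∀ u ∈ Ioi T, ‖(kernel m v x u).re‖ ≤ (1 + D) ^ (m + 1) * u ^ (-2 : ℝ) := by
    intro u hu
    have hu0 : 0 < u := hT.trans hu
    refine (abs_re_le_norm _).trans ((norm_kernel_le_inv hD hv hx m u).trans ?_)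
    rw [Real.rpow_neg hu0.le, Real.rpow_two]
    gcongr
    exact le_add_of_nonneg_left (sq_nonneg x)
  calc |kernelTail m v x T| ≤ ∫ u in Ioi T, (1 + D) ^ (m + 1) * u ^ (-2 : ℝ) :=
        norm_integral_le_of_norm_le ((integrableOn_Ioi_rpow_of_lt hlt hT).const_mul _)
          (ae_restrict_of_forall_mem measurableSet_Ioi hbound)
    _ = (1 + D) ^ (m + 1) / T := by
        rw [integral_const_mul, integral_Ioi_rpow_of_lt hlt hT,
          show (-2 + 1 : ℝ) = -1 by norm_num, Real.rpow_neg_one, neg_div_neg_eq, div_one,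
          div_eq_mul_inv]

lemma abs_kernelTail_le_mul (hD : 0 ≤ D) (hv : v ^ 2 ≤ D * x ^ 2) (hx : x ≠ 0) (hT : 0 ≤ T)
    (m : ℕ) : |kernelTail m v x T| ≤ (1 + D) ^ (m + 1) * (x ^ 2)⁻¹ * T := by
  have hbound (u : ℝ) : ‖(kernel m v x u).re‖ ≤ (1 + D) ^ (m + 1) * (x ^ 2)⁻¹ := by
    refine (abs_re_le_norm _).trans ((norm_kernel_le_inv hD hv hx m u).trans ?_)
    gcongr
    exact le_add_of_nonneg_right (sq_nonneg u)
  rw [← abs_neg, ← setIntegral_Ioc_re_kernel hx hT, ← intervalIntegral.integral_of_le hT]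
  simpa [abs_of_nonneg hT] using
    intervalIntegral.norm_integral_le_of_norm_le_const (a := 0) (b := T) fun u _ ↦ hbound u

lemma abs_kernelTail_le (hD : 0 ≤ D) (hv : v ^ 2 ≤ D * x ^ 2) (hx : x ≠ 0) (hT : 0 < T) (m : ℕ) :
    |kernelTail m v x T| ≤ 2 * (1 + D) ^ (m + 1) * T * (T ^ 2 + x ^ 2)⁻¹ := by
  have hx2 : 0 < x ^ 2 := by positivity
  rw [← div_eq_mul_inv, mul_assoc, mul_left_comm, mul_div_assoc]
  obtain h | h := le_total (x ^ 2) (T ^ 2)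
  · refine (abs_kernelTail_le_div hD hv hx hT m).trans ?_
    rw [div_eq_mul_inv]
    gcongr
    rw [le_div_iff₀ (by positivity), inv_mul_le_iff₀ hT]
    linarith
  · refine (abs_kernelTail_le_mul hD hv hx hT.le m).trans ?_
    rw [mul_assoc]
    gcongr
    rw [le_div_iff₀ (by positivity), mul_assoc, inv_mul_le_iff₀ hx2]
    nlinarith

end Tail

/-! ### Sums over shifted integers as integrals of step functions -/

section StepFunction

open Filter Topology

variable {E : Type*} [NormedAddCommGroup E] {a : ℤ → E} {C D T v x : ℝ} {m : ℕ}

lemma hasSum_integral_floor [NormedSpace ℝ E] [CompleteSpace E]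
    (ha : Integrable fun t : ℝ ↦ a ⌊t⌋) : HasSum a (∫ t : ℝ, a ⌊t⌋) := by
  convert ha.hasSum_intervalIntegral 0 using 2 with n
  have h : ∫ t in (0 + n : ℝ)..(0 + n + 1), a ⌊t⌋ = ∫ _ in (0 + n : ℝ)..(0 + n + 1), a n := by
    simp only [intervalIntegral.integral_of_le (le_add_of_nonneg_right zero_le_one),
      integral_Ioc_eq_integral_Ioo]
    refine setIntegral_congr_fun measurableSet_Ioo fun _ ht ↦ congrArg a ?_
    exact Int.floor_eq_iff.2 ⟨by linarith [ht.1], by linarith [ht.2]⟩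
  rw [h]
  simp

lemma inv_sq_add_sq_le_of_abs_sub_le_one {s t : ℝ} (hT : 1 ≤ T) (h : |s - t| ≤ 1) :
    (T ^ 2 + s ^ 2)⁻¹ ≤ 3 * (T ^ 2 + t ^ 2)⁻¹ := by
  have hst : (s - t) ^ 2 ≤ 1 := (sq_le_one_iff_abs_le_one _).2 h
  rw [inv_eq_one_div, ← div_eq_mul_inv, div_le_div_iff₀ (by positivity) (by positivity)]
  nlinarith [sq_nonneg (2 * s - t)]

lemma abs_floor_add_sub_add_le_one (x t : ℝ) : |⌊t⌋ + x - (t + x)| ≤ 1 := by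
  rw [add_sub_add_right_eq_sub, abs_sub_comm]
  exact Int.abs_fract.trans_le (Int.fract_lt_one t).le

lemma integrable_inv_sq_add_add_sq (hT : 0 < T) (x : ℝ) :
    Integrable fun t : ℝ ↦ (T ^ 2 + (t + x) ^ 2)⁻¹ :=
  (integrable_inv_sq_add_sq hT.ne').comp_add_right x

lemma norm_floor_le (hT : 1 ≤ T) (ha : ∀ n : ℤ, ‖a n‖ ≤ C * (T ^ 2 + (n + x) ^ 2)⁻¹) (t : ℝ) :
    ‖a ⌊t⌋‖ ≤ 3 * C * (T ^ 2 + (t + x) ^ 2)⁻¹ := by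
  have hC : 0 ≤ C :=
    nonneg_of_mul_nonneg_left ((norm_nonneg _).trans (ha 0)) (by positivity)
  rw [mul_comm 3 C, mul_assoc]
  exact (ha _).trans (mul_le_mul_of_nonneg_left
    (inv_sq_add_sq_le_of_abs_sub_le_one hT (abs_floor_add_sub_add_le_one x t)) hC)

lemma integrable_floor (hT : 1 ≤ T) (ha : ∀ n : ℤ, ‖a n‖ ≤ C * (T ^ 2 + (n + x) ^ 2)⁻¹) :
    Integrable fun t : ℝ ↦ a ⌊t⌋ := by
  refine ((integrable_inv_sq_add_add_sq (by positivity) x).const_mul (3 * C)).mono' ?_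
    (.of_forall (norm_floor_le hT ha))
  exact ((StronglyMeasurable.of_discrete (f := a)).comp_measurable
    Int.measurable_floor).aestronglyMeasurable

lemma norm_tsum_le_of_norm_le_inv_sq_add_sq [NormedSpace ℝ E] [CompleteSpace E] (hT : 1 ≤ T)
    (ha : ∀ n : ℤ, ‖a n‖ ≤ C * (T ^ 2 + (n + x) ^ 2)⁻¹) : ‖∑' n, a n‖ ≤ 3 * C * (π / T) := by
  have hT0 : 0 < T := by positivity
  rw [(hasSum_integral_floor (integrable_floor hT ha)).tsum_eq]
  refine (norm_integral_le_of_norm_le ((integrable_inv_sq_add_add_sq hT0 x).const_mul (3 * C))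
    (.of_forall (norm_floor_le hT ha))).trans_eq ?_
  rw [integral_const_mul, integral_add_right_eq_self (fun t : ℝ ↦ (T ^ 2 + t ^ 2)⁻¹),
    integral_inv_sq_add_sq hT0]

lemma norm_inv_one_add_sq_le (x : ℝ) (n : ℤ) :
    ‖(1 + (n + x) ^ 2)⁻¹‖ ≤ 1 * (1 ^ 2 + (n + x) ^ 2)⁻¹ := by
  rw [Real.norm_of_nonneg (by positivity), one_mul, one_pow]

lemma summable_inv_one_add_sq (x : ℝ) : Summable fun n : ℤ ↦ (1 + (n + x) ^ 2)⁻¹ :=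
  (hasSum_integral_floor (integrable_floor le_rfl (norm_inv_one_add_sq_le x))).summable

lemma tsum_inv_one_add_sq_le (x : ℝ) : ∑' n : ℤ, (1 + (n + x) ^ 2)⁻¹ ≤ 3 * π := by
  simpa using (Real.le_norm_self _).trans
    (norm_tsum_le_of_norm_le_inv_sq_add_sq le_rfl (norm_inv_one_add_sq_le x))

lemma norm_tsum_kernelTail_le (hD : 0 ≤ D) (hv : ∀ n : ℤ, v ^ 2 ≤ D * (n + x) ^ 2)
    (hx : ∀ n : ℤ, (n + x : ℝ) ≠ 0) (hT : 1 ≤ T) (m : ℕ) :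
    ‖∑' n : ℤ, kernelTail m v (n + x) T‖ ≤ 6 * (1 + D) ^ (m + 1) * π := by
  have hT0 : 0 < T := by positivity
  refine (norm_tsum_le_of_norm_le_inv_sq_add_sq hT fun n ↦
    abs_kernelTail_le hD (hv n) (hx n) hT0 m).trans_eq ?_
  field_simp
  ring

lemma norm_kernel_floor_sub_le {u : ℝ} (hv : 2 * |v| ≤ u) (hu : 1 ≤ u) (x t : ℝ) (m : ℕ) :
    ‖kernel m v (⌊t⌋ + x) u - kernel m v (t + x) u‖ ≤
      3 * (2 ^ (m + 3) * (m + 1) * u⁻¹) * (u ^ 2 + (t + x) ^ 2)⁻¹ := by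
  have hu0 : 0 < u := by positivity
  have hfloor := abs_floor_add_sub_add_le_one x t
  have hderiv (s : ℝ) (hs : s ∈ Set.uIcc (t + x) (⌊t⌋ + x)) :
      ‖deriv (fun s ↦ kernel m v s u) s‖ ≤
        3 * (2 ^ (m + 3) * (m + 1) * u⁻¹) * (u ^ 2 + (t + x) ^ 2)⁻¹ := by
    refine (norm_deriv_kernel_left_le hv hu0 s m).trans ?_
    rw [mul_comm 3, mul_assoc _ 3]
    refine mul_le_mul_of_nonneg_left ?_ (by positivity)
    exact inv_sq_add_sq_le_of_abs_sub_le_one hu ((Set.abs_sub_left_of_mem_uIcc hs).trans hfloor)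
  refine (Convex.norm_image_sub_le_of_norm_deriv_le
    (fun s _ ↦ (hasDerivAt_kernel_left hv hu0 s m).differentiableAt) hderiv
    (convex_uIcc _ _) Set.left_mem_uIcc Set.right_mem_uIcc).trans ?_
  exact mul_le_of_le_one_right (by positivity) hfloor

-- The integral of the kernel in its left variable vanishes, so the sum equals its difference to
-- the corresponding integral, which the derivative controls.
lemma norm_tsum_kernel_le {u : ℝ} (hv : 2 * |v| ≤ u) (hu : 1 ≤ u) (x : ℝ) (m : ℕ) :
    ‖∑' n : ℤ, kernel m v (n + x) u‖ ≤ 3 * (2 ^ (m + 3) * (m + 1)) * π * (u ^ 2)⁻¹ := by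
  have hu0 : 0 < u := by positivity
  have hbound (t : ℝ) : ‖kernel m v (t + x) u‖ ≤ 2 ^ (m + 1) * (u ^ 2 + (t + x) ^ 2)⁻¹ :=
    norm_kernel_le_of_two_mul_abs_le hv hu0 (t + x) m
  have hfloor : Integrable fun t : ℝ ↦ kernel m v (⌊t⌋ + x) u :=
    integrable_floor hu fun n ↦ hbound n
  have hint : Integrable fun t : ℝ ↦ kernel m v (t + x) u := by
    refine ((integrable_inv_sq_add_add_sq hu0 x).const_mul _).mono' ?_ (.of_forall hbound)
    have hc : Continuous fun s ↦ kernel m v s u := continuous_iff_continuousAt.2 fun s ↦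
      (hasDerivAt_kernel_left hv hu0 s m).continuousAt
    exact (hc.comp (continuous_add_const x)).aestronglyMeasurable
  have hzero : ∫ t : ℝ, kernel m v (t + x) u = 0 := by
    rw [integral_add_right_eq_self (fun t ↦ kernel m v t u),
      integral_kernel_left (by linarith [abs_nonneg v])]
  rw [(hasSum_integral_floor hfloor).tsum_eq, ← sub_zero (∫ _, _), ← hzero,
    ← integral_sub hfloor hint]
  refine (norm_integral_le_of_norm_le ((integrable_inv_sq_add_add_sq hu0 x).const_mul _)
    (.of_forall fun t ↦ norm_kernel_floor_sub_le hv hu x t m)).trans_eq ?_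
  rw [integral_const_mul, integral_add_right_eq_self (fun t : ℝ ↦ (u ^ 2 + t ^ 2)⁻¹),
    integral_inv_sq_add_sq hu0]
  field_simp

lemma tendsto_floor_mul_sub_add_div (s x : ℝ) :
    Tendsto (fun T : ℝ ↦ (⌊T * s - x⌋ + x) / T) atTop (𝓝 s) := by
  rw [tendsto_iff_norm_sub_tendsto_zero]
  refine squeeze_zero' (.of_forall fun _ ↦ norm_nonneg _) ?_ tendsto_inv_atTop_zero
  filter_upwards [eventually_gt_atTop 0] with T hT
  have h : (⌊T * s - x⌋ + x) / T - s = -(T * s - x - ⌊T * s - x⌋) / T := by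
    field_simp
    ring
  rw [h, norm_div, norm_neg, Real.norm_of_nonneg hT.le, ← one_div, Real.norm_eq_abs]
  gcongr
  exact (Int.abs_fract.trans_le (Int.fract_lt_one _).le)

lemma integral_kernelTail_zero_one (m : ℕ) :
    ∫ s : ℝ, kernelTail m 0 s 1 = (-1) ^ (m + 1) * π / (2 * m + 1) := by
  rw [integral_congr_ae ((Measure.ae_ne volume 0).mono fun s hs ↦ kernelTail_zero_one hs m),
    integral_const_mul, (integral_im_inv_one_sub_mul_I_pow_div (2 * m)).2, div_mul_eq_mul_div]

-- After rescaling by `T`, the sum is a Riemann sum of the limiting profile `kernelTail m 0 · 1`.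
lemma tendsto_tsum_kernelTail (hD : 0 ≤ D) (hv : ∀ n : ℤ, v ^ 2 ≤ D * (n + x) ^ 2)
    (hx : ∀ n : ℤ, (n + x : ℝ) ≠ 0) (m : ℕ) :
    Tendsto (fun T ↦ ∑' n : ℤ, kernelTail m v (n + x) T) atTop
      (𝓝 ((-1) ^ (m + 1) * π / (2 * m + 1))) := by
  have hbound {T : ℝ} (hT : 1 ≤ T) (n : ℤ) :
      ‖kernelTail m v (n + x) T‖ ≤ 2 * (1 + D) ^ (m + 1) * T * (T ^ 2 + (n + x) ^ 2)⁻¹ :=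
    abs_kernelTail_le hD (hv n) (hx n) (by positivity : 0 < T) m
  have hlim : Tendsto (fun T : ℝ ↦ ∫ s : ℝ, T * kernelTail m v (⌊T * s - x⌋ + x) T) atTop
      (𝓝 (∫ s : ℝ, kernelTail m 0 s 1)) := by
    refine tendsto_integral_filter_of_dominated_convergence
      (fun s ↦ 6 * (1 + D) ^ (m + 1) * (1 + s ^ 2)⁻¹) (.of_forall fun T ↦ ?_) ?_
      (integrable_inv_one_add_sq.const_mul _) ?_
    · exact ((measurable_of_countable fun n : ℤ ↦ T * kernelTail m v (n + x) T).comp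
        (by fun_prop : Measurable fun s : ℝ ↦ ⌊T * s - x⌋)).aestronglyMeasurable
    · filter_upwards [eventually_ge_atTop 1] with T hT
      refine .of_forall fun s ↦ ?_
      have hT0 : 0 < T := by positivity
      rw [norm_mul, Real.norm_of_nonneg hT0.le]
      refine (mul_le_mul_of_nonneg_left
        (norm_floor_le hT (hbound hT) (T * s - x)) hT0.le).trans_eq ?_
      rw [sub_add_cancel, show T ^ 2 + (T * s) ^ 2 = T ^ 2 * (1 + s ^ 2) by ring, mul_inv]
      field_simp
      ring
    · filter_upwards [Measure.ae_ne volume 0] with s hs using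
        tendsto_mul_kernelTail hs (tendsto_floor_mul_sub_add_div s x) m v
  rw [integral_kernelTail_zero_one] at hlim
  refine hlim.congr' ?_
  filter_upwards [eventually_ge_atTop 1] with T hT
  have hT0 : 0 < T := by positivity
  rw [(hasSum_integral_floor (integrable_floor hT (hbound hT))).tsum_eq, integral_const_mul,
    Measure.integral_comp_mul_left (fun t ↦ kernelTail m v (⌊t - x⌋ + x) T) T,
    integral_sub_right_eq_self (fun t ↦ kernelTail m v (⌊t⌋ + x) T) x,
    abs_of_pos (inv_pos.2 hT0), smul_eq_mul, mul_inv_cancel_left₀ hT0.ne']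

end StepFunction

/-! ### Kernel series attached to families of quadratic polynomials -/

section KernelSeries

open Filter Topology Set

lemma pow_div_pow_le_rpow_mul_rpow {A C u T : ℝ} {m : ℕ} (hm : 1 ≤ m) (hA : 1 ≤ A) (hC : 1 ≤ C)
    (hu : 0 < u) (huT : u ≤ T) (hT : 1 ≤ T) :
    u ^ (2 * m) / (C + A * u ^ 2) ^ (m + 1) ≤
      T ^ (5 / 2 : ℝ) * u ^ (-(1 / 2) : ℝ) * (A + C) ^ (-(5 / 4) : ℝ) := by
  set N := C + A * u ^ 2
  have hN1 : 1 ≤ N := by nlinarith [sq_nonneg u]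
  have hN0 : 0 < N := by positivity
  have huN : u ^ 2 ≤ N := by nlinarith [sq_nonneg u]
  have hratio : u / T ≤ 1 := (div_le_one (by positivity)).2 huT
  have hAC : (u / T) ^ 2 * (A + C) ≤ N := by
    have hC' : (u / T) ^ 2 * C ≤ C :=
      mul_le_of_le_one_left (by positivity) (pow_le_one₀ (by positivity) hratio)
    have hA' : A * (u / T) ^ 2 ≤ A * u ^ 2 := by
      gcongr
      exact div_le_self hu.le hT
    linarith
  calc u ^ (2 * m) / N ^ (m + 1) = (u ^ 2 / N) ^ m * N⁻¹ := by
        rw [div_pow, ← pow_mul, pow_succ, div_mul_eq_div_div, div_eq_mul_inv (_ / _)]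
    _ ≤ u ^ 2 / N * N⁻¹ := by
        gcongr
        exact pow_le_of_le_one (by positivity) ((div_le_one hN0).2 huN) (by lia)
    _ = u ^ 2 * N ^ (-2 : ℝ) := by
        rw [Real.rpow_neg hN0.le, Real.rpow_two, sq N, mul_inv, ← mul_assoc, div_eq_mul_inv]
    _ ≤ u ^ 2 * N ^ (-(5 / 4) : ℝ) := by
        gcongr
        norm_num
    _ ≤ u ^ 2 * ((u / T) ^ 2 * (A + C)) ^ (-(5 / 4) : ℝ) := by
        refine mul_le_mul_of_nonneg_left ?_ (by positivity)
        exact Real.rpow_le_rpow_of_nonpos (by positivity) hAC (by norm_num)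
    _ = T ^ (5 / 2 : ℝ) * u ^ (-(1 / 2) : ℝ) * (A + C) ^ (-(5 / 4) : ℝ) := by
        have h : ((u / T) ^ 2) ^ (-(5 / 4) : ℝ) = T ^ (5 / 2 : ℝ) * u ^ (-(5 / 2) : ℝ) := by
          rw [← Real.rpow_two, ← Real.rpow_mul (by positivity), Real.div_rpow hu.le (by positivity),
            show (2 * -(5 / 4) : ℝ) = -(5 / 2) by norm_num, Real.rpow_neg (by positivity : 0 ≤ T),
            div_inv_eq_mul, mul_comm]
        rw [Real.mul_rpow (by positivity) (by positivity), h,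
          show (-(1 / 2) : ℝ) = 2 + -(5 / 2) by norm_num, Real.rpow_add hu, Real.rpow_two]
        ring

/-- A family of positive definite real quadratic polynomials `A p * ((X + x p) ^ 2 + v p ^ 2)`
whose values at the integers are at least `1`, with roots that stay uniformly away from the
vertical lines through the integers in the sense of `sq_le`, and with leading coefficients that
grow fast enough for the associated kernel series to converge. -/
structure QuadraticFamily (ι : Type*) where
  (A x v : ι → ℝ)
  D : ℝ
  D_nonneg : 0 ≤ D
  one_le_A : ∀ p, 1 ≤ A p
  one_le_mul : ∀ p (n : ℤ), 1 ≤ A p * ((n + x p) ^ 2 + v p ^ 2)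
  sq_le : ∀ p (n : ℤ), v p ^ 2 ≤ D * (n + x p) ^ 2
  summable_A : Summable fun p ↦ A p ^ (-(5 / 4) : ℝ)

namespace QuadraticFamily

variable {ι : Type*} (F : QuadraticFamily ι) {m : ℕ} {u T : ℝ}

/-- The kernel of the `q.2`-th integer translate of the `q.1`-th polynomial of the family. -/
def term (m : ℕ) (q : ι × ℤ) (u : ℝ) : ℂ :=
  ((F.A q.1 ^ (m + 1))⁻¹ : ℝ) * kernel m (F.v q.1) (q.2 + F.x q.1) u

/-- The sum of the kernels of all integer translates of all polynomials of the family. -/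
def series (m : ℕ) (u : ℝ) : ℂ := ∑' q, F.term m q u

/-- The summable weight that dominates the kernel series: leading plus constant coefficient of
the translated polynomial, to the power `-5/4`. -/
def weight (q : ι × ℤ) : ℝ :=
  (F.A q.1 + F.A q.1 * ((q.2 + F.x q.1) ^ 2 + F.v q.1 ^ 2)) ^ (-(5 / 4) : ℝ)

lemma A_pos (p : ι) : 0 < F.A p := zero_lt_one.trans_le (F.one_le_A p)

lemma add_x_ne_zero (p : ι) (n : ℤ) : n + F.x p ≠ 0 := fun h ↦ by
  have hv := F.sq_le p n
  have h1 := F.one_le_mul p n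
  rw [h] at hv h1
  nlinarith [F.A_pos p]

lemma summable_weight : Summable F.weight := by
  have hsum : Summable fun q : ι × ℤ ↦
      F.A q.1 ^ (-(5 / 4) : ℝ) * (1 + (q.2 + F.x q.1) ^ 2)⁻¹ := by
    have hA (p : ι) : 0 ≤ F.A p ^ (-(5 / 4) : ℝ) := Real.rpow_nonneg (F.A_pos p).le _
    rw [summable_prod_of_nonneg fun q ↦ mul_nonneg (hA q.1) (by positivity)]
    refine ⟨fun p ↦ (summable_inv_one_add_sq (F.x p)).mul_left (F.A p ^ (-(5 / 4) : ℝ)), ?_⟩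
    refine (F.summable_A.mul_right (3 * π)).of_nonneg_of_le
      (fun p ↦ tsum_nonneg fun n ↦ mul_nonneg (hA p) (by positivity)) fun p ↦ ?_
    dsimp only
    rw [tsum_mul_left]
    exact mul_le_mul_of_nonneg_left (tsum_inv_one_add_sq_le (F.x p)) (hA p)
  refine hsum.of_nonneg_of_le (fun q ↦ ?_) fun ⟨p, n⟩ ↦ ?_
  · have := F.A_pos q.1
    exact Real.rpow_nonneg (by positivity) _
  have hA := F.A_pos p
  have h1 : 1 ≤ 1 + (n + F.x p) ^ 2 := le_add_of_nonneg_right (sq_nonneg _)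
  calc F.weight (p, n) ≤ (F.A p * (1 + (n + F.x p) ^ 2)) ^ (-(5 / 4) : ℝ) := by
        refine Real.rpow_le_rpow_of_nonpos (by positivity) ?_ (by norm_num)
        nlinarith [sq_nonneg (F.v p)]
    _ = F.A p ^ (-(5 / 4) : ℝ) * (1 + (n + F.x p) ^ 2) ^ (-(5 / 4) : ℝ) :=
        Real.mul_rpow hA.le (by positivity)
    _ ≤ F.A p ^ (-(5 / 4) : ℝ) * (1 + (n + F.x p) ^ 2)⁻¹ := by
        rw [← Real.rpow_neg_one (1 + _)]
        gcongr
        norm_num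

lemma summable_inv_A_pow (hm : 1 ≤ m) : Summable fun p ↦ (F.A p ^ (m + 1))⁻¹ := by
  refine F.summable_A.of_nonneg_of_le (fun p ↦ ?_) fun p ↦ ?_
  · have := F.A_pos p
    positivity
  · rw [← Real.rpow_natCast, ← Real.rpow_neg (F.A_pos p).le]
    refine Real.rpow_le_rpow_of_exponent_le (F.one_le_A p) ?_
    have : (1 : ℝ) ≤ m := by exact_mod_cast hm
    push_cast
    linarith

lemma norm_term_le (hm : 1 ≤ m) (hu : 0 < u) (huT : u ≤ T) (hT : 1 ≤ T) (q : ι × ℤ) :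
    ‖F.term m q u‖ ≤
      (1 + F.D) ^ (m + 1) * T ^ (5 / 2 : ℝ) * u ^ (-(1 / 2) : ℝ) * F.weight q := by
  obtain ⟨p, n⟩ := q
  have hA := F.A_pos p
  have hD := F.D_nonneg
  rw [term, norm_mul, norm_real, Real.norm_of_nonneg (by positivity)]
  calc (F.A p ^ (m + 1))⁻¹ * ‖kernel m (F.v p) (n + F.x p) u‖
      ≤ (F.A p ^ (m + 1))⁻¹ * ((1 + F.D) ^ (m + 1) *
          (u ^ (2 * m) / ((n + F.x p) ^ 2 + F.v p ^ 2 + u ^ 2) ^ (m + 1))) := by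
        gcongr
        exact norm_kernel_le hD (F.sq_le p n) (F.add_x_ne_zero p n) m u
    _ = (1 + F.D) ^ (m + 1) * (u ^ (2 * m) /
          (F.A p * ((n + F.x p) ^ 2 + F.v p ^ 2) + F.A p * u ^ 2) ^ (m + 1)) := by
        rw [← mul_add, mul_pow]
        field_simp
    _ ≤ (1 + F.D) ^ (m + 1) * (T ^ (5 / 2 : ℝ) * u ^ (-(1 / 2) : ℝ) * F.weight (p, n)) := by
        gcongr
        exact pow_div_pow_le_rpow_mul_rpow hm (F.one_le_A p) (F.one_le_mul p n) hu huT hT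
    _ = _ := by ring

lemma continuous_term (m : ℕ) (q : ι × ℤ) : Continuous (F.term m q) :=
  continuous_const.mul (continuous_kernel_right (F.add_x_ne_zero q.1 q.2) m (F.v q.1))

lemma integrableOn_norm_term_bound (hT : 0 ≤ T) (m : ℕ) :
    IntegrableOn (fun u ↦ (1 + F.D) ^ (m + 1) * T ^ (5 / 2 : ℝ) * u ^ (-(1 / 2) : ℝ))
      (Ioc 0 T) := by
  have h := intervalIntegral.intervalIntegrable_rpow' (a := 0) (b := T) (r := -(1 / 2))
    (by norm_num)
  exact ((intervalIntegrable_iff_integrableOn_Ioc_of_le hT).1 h).const_mul _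

lemma measurable_series [Countable ι] (m : ℕ) : Measurable (F.series m) :=
  Measurable.tsum fun q ↦ (F.continuous_term m q).measurable

lemma integrableOn_series [Countable ι] (hm : 1 ≤ m) (hT : 1 ≤ T) :
    IntegrableOn (F.series m) (Ioc 0 T) := by
  refine ((F.integrableOn_norm_term_bound (zero_le_one.trans hT) m).mul_const
    (∑' q, F.weight q)).mono' ?_ ?_
  · exact (F.measurable_series m).aestronglyMeasurable
  · refine ae_restrict_of_forall_mem measurableSet_Ioc fun u hu ↦ ?_
    exact tsum_of_norm_bounded (F.summable_weight.hasSum.mul_left _)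
      (F.norm_term_le hm hu.1 hu.2 hT)

lemma two_mul_abs_v_le (p : ι) : 2 * |F.v p| ≤ 1 + F.D := by
  have hround : (((-round (F.x p) : ℤ) : ℝ) + F.x p) ^ 2 ≤ (1 / 2) ^ 2 := by
    rw [Int.cast_neg, neg_add_eq_sub]
    exact sq_le_sq' (neg_le_of_abs_le (abs_sub_round _)) (le_of_abs_le (abs_sub_round _))
  refine le_of_sq_le_sq ?_ (by linarith [F.D_nonneg])
  rw [mul_pow, sq_abs]
  nlinarith [F.sq_le p (-round (F.x p)), mul_le_mul_of_nonneg_left hround F.D_nonneg,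
    sq_nonneg F.D]

lemma norm_series_le (hm : 1 ≤ m) (hu : 1 + F.D ≤ u) :
    ‖F.series m u‖ ≤
      3 * (2 ^ (m + 3) * (m + 1)) * π * (∑' p, (F.A p ^ (m + 1))⁻¹) * (u ^ 2)⁻¹ := by
  have hu1 : 1 ≤ u := by linarith [F.D_nonneg]
  have hsum : Summable fun q ↦ F.term m q u :=
    (F.summable_weight.mul_left _).of_norm_bounded
      (F.norm_term_le hm (by positivity) le_rfl hu1)
  rw [series, hsum.tsum_prod, mul_right_comm, ← tsum_mul_left]
  refine tsum_of_norm_bounded ((F.summable_inv_A_pow hm).mul_left _).hasSum fun p ↦ ?_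
  have hA := F.A_pos p
  simp only [term, tsum_mul_left, norm_mul, norm_real]
  rw [Real.norm_of_nonneg (by positivity), mul_comm]
  gcongr
  exact norm_tsum_kernel_le ((F.two_mul_abs_v_le p).trans hu) hu1 (F.x p) m

lemma integrableOn_series_Ioi [Countable ι] (hm : 1 ≤ m) :
    IntegrableOn (F.series m) (Ioi 0) := by
  have hD : 1 ≤ 1 + F.D := le_add_of_nonneg_right F.D_nonneg
  have hD0 : 0 < 1 + F.D := by positivity
  rw [← Ioc_union_Ioi_eq_Ioi hD0.le]
  refine (F.integrableOn_series hm hD).union ?_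
  refine ((integrableOn_Ioi_rpow_of_lt (a := -2) (by norm_num) hD0).const_mul
    (3 * (2 ^ (m + 3) * (m + 1)) * π * (∑' p, (F.A p ^ (m + 1))⁻¹))).mono' ?_ ?_
  · exact (F.measurable_series m).aestronglyMeasurable
  · refine ae_restrict_of_forall_mem measurableSet_Ioi fun u hu ↦ ?_
    rw [Real.rpow_neg (hD0.trans hu).le, Real.rpow_two]
    exact F.norm_series_le hm (mem_Ioi.1 hu).le

lemma re_setIntegral_term (hT : 0 ≤ T) (m : ℕ) (q : ι × ℤ) :
    (∫ u in Ioc 0 T, F.term m q u).re =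
      -((F.A q.1 ^ (m + 1))⁻¹ * kernelTail m (F.v q.1) (q.2 + F.x q.1) T) := by
  have hx := F.add_x_ne_zero q.1 q.2
  have hre := integral_re (𝕜 := ℂ) ((integrable_kernel_right hx m (F.v q.1)).integrableOn
    (s := Ioc 0 T))
  simp only [RCLike.re_eq_complex_re, setIntegral_Ioc_re_kernel hx hT] at hre
  simp only [term, integral_const_mul, re_ofReal_mul]
  rw [← hre, mul_neg]

lemma hasSum_re_setIntegral_series [Countable ι] (hm : 1 ≤ m) (hT : 1 ≤ T) :
    HasSum (fun q : ι × ℤ ↦ -((F.A q.1 ^ (m + 1))⁻¹ * kernelTail m (F.v q.1) (q.2 + F.x q.1) T))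
      (∫ u in Ioc 0 T, F.series m u).re := by
  have hT0 : 0 ≤ T := zero_le_one.trans hT
  have hint (q : ι × ℤ) : IntegrableOn (F.term m q) (Ioc 0 T) :=
    ((F.continuous_term m q).integrableOn_Icc).mono_set Ioc_subset_Icc_self
  have hbound := F.integrableOn_norm_term_bound hT0 m
  have hsum : Summable fun q ↦ ∫ u in Ioc 0 T, ‖F.term m q u‖ := by
    refine (F.summable_weight.mul_left (∫ u in Ioc 0 T, (1 + F.D) ^ (m + 1) * T ^ (5 / 2 : ℝ) *
      u ^ (-(1 / 2) : ℝ))).of_nonneg_of_le (fun q ↦ integral_nonneg fun _ ↦ norm_nonneg _)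
      fun q ↦ ?_
    rw [← integral_mul_const]
    exact setIntegral_mono_on (hint q).norm (hbound.mul_const _) measurableSet_Ioc
      fun u hu ↦ F.norm_term_le hm hu.1 hu.2 hT q
  have h := hasSum_re (hasSum_integral_of_summable_integral_norm hint hsum)
  simpa only [F.re_setIntegral_term hT0, series] using h

lemma tendsto_re_setIntegral_series [Countable ι] (hm : 1 ≤ m) :
    Tendsto (fun T ↦ (∫ u in Ioc 0 T, F.series m u).re) atTop
      (𝓝 ((-1) ^ m * π / (2 * m + 1) * ∑' p, (F.A p ^ (m + 1))⁻¹)) := by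
  have hD := F.D_nonneg
  have hlim : Tendsto (fun T ↦ ∑' p, -((F.A p ^ (m + 1))⁻¹ *
      ∑' n : ℤ, kernelTail m (F.v p) (n + F.x p) T)) atTop
      (𝓝 (∑' p, -((F.A p ^ (m + 1))⁻¹ * ((-1) ^ (m + 1) * π / (2 * m + 1))))) := by
    refine tendsto_tsum_of_dominated_convergence
      ((F.summable_inv_A_pow hm).mul_right (6 * (1 + F.D) ^ (m + 1) * π)) (fun p ↦ ?_) ?_
    · exact ((tendsto_tsum_kernelTail hD (F.sq_le p) (F.add_x_ne_zero p) m).const_mul _).neg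
    · filter_upwards [eventually_ge_atTop 1] with T hT p
      have hA := F.A_pos p
      rw [norm_neg, norm_mul, Real.norm_of_nonneg (by positivity)]
      gcongr
      exact norm_tsum_kernelTail_le hD (F.sq_le p) (F.add_x_ne_zero p) hT m
  have hval : ∑' p, -((F.A p ^ (m + 1))⁻¹ * ((-1) ^ (m + 1) * π / (2 * m + 1))) =
      (-1) ^ m * π / (2 * m + 1) * ∑' p, (F.A p ^ (m + 1))⁻¹ := by
    rw [tsum_neg, tsum_mul_right]
    ring
  rw [hval] at hlim
  refine hlim.congr' ?_
  filter_upwards [eventually_ge_atTop 1] with T hT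
  have h := F.hasSum_re_setIntegral_series hm hT
  rw [← h.tsum_eq, h.summable.tsum_prod]
  simp only [tsum_neg, tsum_mul_left]

lemma re_integral_series_Ioi [Countable ι] (hm : 1 ≤ m) :
    (∫ u in Ioi 0, F.series m u).re =
      (-1) ^ m * π / (2 * m + 1) * ∑' p, (F.A p ^ (m + 1))⁻¹ := by
  refine tendsto_nhds_unique ?_ (F.tendsto_re_setIntegral_series hm)
  refine ((continuous_re.tendsto _).comp (intervalIntegral_tendsto_integral_Ioi 0
    (F.integrableOn_series_Ioi hm) tendsto_id)).congr' ?_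
  filter_upwards [eventually_ge_atTop 0] with T hT
  simp only [Function.comp_apply, id_eq, intervalIntegral.integral_of_le hT]

end QuadraticFamily

end KernelSeries

/-! ### Values of positive definite forms and the action of `SL₂(ℤ)` -/

section Forms

open EisensteinSeries

/-- The value of the binary quadratic form `[a, b, c]` at an integer vector. -/
def quadForm (a b c : ℤ) (v : Fin 2 → ℤ) : ℤ := a * v 0 ^ 2 + b * v 0 * v 1 + c * v 1 ^ 2

variable {a b c : ℤ}

lemma quadForm_nsmul (a b c : ℤ) (n : ℕ) (v : Fin 2 → ℤ) :
    quadForm a b c (n • v) = n ^ 2 * quadForm a b c v := by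
  simp only [quadForm, Pi.smul_apply, nsmul_eq_mul]
  ring

lemma right_pos_of_discr_neg (ha : 0 < a) (hd : b ^ 2 - 4 * a * c < 0) : 0 < c := by
  nlinarith [sq_nonneg b]

lemma neg_discr_mul_le_quadForm (a b c : ℤ) (v : Fin 2 → ℤ) :
    (4 * a * c - b ^ 2) * (v 0 ^ 2 + v 1 ^ 2) ≤ 4 * (a + c) * quadForm a b c v := by
  have h : 4 * (a + c) * quadForm a b c v = (4 * a * c - b ^ 2) * (v 0 ^ 2 + v 1 ^ 2) +
      (2 * a * v 0 + b * v 1) ^ 2 + (b * v 0 + 2 * c * v 1) ^ 2 := by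
    rw [quadForm]
    ring
  rw [h]
  linarith [sq_nonneg (2 * a * v 0 + b * v 1), sq_nonneg (b * v 0 + 2 * c * v 1)]

lemma quadForm_pos (ha : 0 < a) (hd : b ^ 2 - 4 * a * c < 0) {v : Fin 2 → ℤ} (hv : v ≠ 0) :
    0 < quadForm a b c v := by
  have hc := right_pos_of_discr_neg ha hd
  have hv' : 0 < v 0 ^ 2 + v 1 ^ 2 := by
    obtain ⟨i, hi⟩ := Function.ne_iff.1 hv
    have := sq_pos_of_ne_zero hi
    fin_cases i <;> simp only [Fin.zero_eta, Fin.mk_one] at this <;> positivity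
  nlinarith [neg_discr_mul_le_quadForm a b c v]

lemma neg_discr_mul_norm_sq_le_quadForm (hd : b ^ 2 - 4 * a * c < 0)
    (v : Fin 2 → ℤ) :
    ((4 * a * c - b ^ 2 : ℤ) : ℝ) * ‖v‖ ^ 2 ≤ (4 * (a + c) : ℤ) * quadForm a b c v := by
  have hnorm : ‖v‖ ^ 2 ≤ (v 0 ^ 2 + v 1 ^ 2 : ℤ) := by
    have h0 := sq_nonneg (v 0 : ℝ)
    have h1 := sq_nonneg (v 1 : ℝ)
    rw [norm_eq_max_natAbs]
    push_cast [Nat.cast_natAbs]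
    obtain h | h := max_choice |(v 0 : ℝ)| |(v 1 : ℝ)| <;> rw [h, sq_abs] <;> linarith
  calc ((4 * a * c - b ^ 2 : ℤ) : ℝ) * ‖v‖ ^ 2
      ≤ (4 * a * c - b ^ 2 : ℤ) * (v 0 ^ 2 + v 1 ^ 2 : ℤ) := by
        gcongr
        exact_mod_cast (by linarith : 0 ≤ 4 * a * c - b ^ 2)
    _ ≤ _ := by exact_mod_cast neg_discr_mul_le_quadForm a b c v

lemma summable_quadForm_rpow_neg (ha : 0 < a) (hd : b ^ 2 - 4 * a * c < 0) {s : ℝ} (hs : 1 < s) :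
    Summable fun v : Fin 2 → ℤ ↦ (quadForm a b c v : ℝ) ^ (-s) := by
  have hc := right_pos_of_discr_neg ha hd
  have hac : (0 : ℝ) < (4 * (a + c) : ℤ) := by exact_mod_cast (by lia)
  have hΔ : (0 : ℝ) < (4 * a * c - b ^ 2 : ℤ) := by exact_mod_cast (by lia)
  refine ((summable_one_div_norm_rpow (k := 2 * s) (by linarith)).mul_left
    (((4 * a * c - b ^ 2 : ℤ) / (4 * (a + c) : ℤ) : ℝ) ^ (-s))).of_nonneg_of_le
    (fun v ↦ ?_) fun v ↦ ?_
  all_goals obtain rfl | hv := eq_or_ne v 0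
  · simp [quadForm, Real.zero_rpow (by linarith : -s ≠ 0)]
  · have := quadForm_pos ha hd hv
    positivity
  · simp [quadForm, Real.zero_rpow (by linarith : -s ≠ 0),
      Real.zero_rpow (by linarith : -(2 * s) ≠ 0)]
  · have hv0 : 0 < ‖v‖ := norm_pos_iff.2 hv
    calc (quadForm a b c v : ℝ) ^ (-s)
        ≤ ((4 * a * c - b ^ 2 : ℤ) / (4 * (a + c) : ℤ) * ‖v‖ ^ 2 : ℝ) ^ (-s) := by
          refine Real.rpow_le_rpow_of_nonpos (by positivity) ?_ (by linarith)
          rw [div_mul_eq_mul_div, div_le_iff₀' hac]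
          exact neg_discr_mul_norm_sq_le_quadForm hd v
      _ = _ := by
          rw [Real.mul_rpow (by positivity) (by positivity), ← Real.rpow_two,
            ← Real.rpow_mul hv0.le, mul_neg]

lemma discr_qfComp (a b c : ℤ) (M : SL2Z) :
    (qfComp a b c M).2.1 ^ 2 - 4 * (qfComp a b c M).1 * (qfComp a b c M).2.2 =
      b ^ 2 - 4 * a * c := by
  have hdet := M.det_coe
  rw [Matrix.det_fin_two] at hdet
  simp only [qfComp]
  linear_combination (b ^ 2 - 4 * a * c) * (M.1 0 0 * M.1 1 1 - M.1 0 1 * M.1 1 0 + 1) * hdet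

lemma qfC_apply_eq_qfComp (a b c : ℤ) (M : SL2Z) (z : ℂ) :
    qfC a b c (M.1 0 0 * z + M.1 0 1) (M.1 1 0 * z + M.1 1 1) =
      (qfComp a b c M).1 * z ^ 2 + (qfComp a b c M).2.1 * z + (qfComp a b c M).2.2 := by
  simp only [qfC, qfComp]
  push_cast
  ring

lemma col_ne_zero (M : SL2Z) (j : Fin 2) : (M.1.col j) ≠ 0 := fun h ↦ by
  have hdet := M.det_coe
  have h0 : M.1 0 j = 0 := congrFun h 0
  have h1 : M.1 1 j = 0 := congrFun h 1
  rw [Matrix.det_fin_two] at hdet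
  fin_cases j <;> simp_all

lemma qfComp_fst_pos (ha : 0 < a) (hd : b ^ 2 - 4 * a * c < 0) (M : SL2Z) :
    0 < (qfComp a b c M).1 :=
  quadForm_pos ha hd (col_ne_zero M 0)

lemma qfComp_snd_snd_pos (ha : 0 < a) (hd : b ^ 2 - 4 * a * c < 0) (M : SL2Z) :
    0 < (qfComp a b c M).2.2 :=
  quadForm_pos ha hd (col_ne_zero M 1)

lemma qfC_cmPoint (ha : a ≠ 0) (hd : b ^ 2 - 4 * a * c < 0) : qfC a b c (cmPoint a b c) 1 = 0 := by
  have hs : ((√((b ^ 2 - 4 * a * c).natAbs : ℝ) : ℝ) : ℂ) ^ 2 = 4 * a * c - b ^ 2 := by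
    rw [← ofReal_pow, Real.sq_sqrt (by positivity), Nat.cast_natAbs, abs_of_neg hd]
    push_cast
    ring
  have : (a : ℂ) ≠ 0 := by exact_mod_cast ha
  rw [qfC, cmPoint]
  field_simp
  linear_combination √((b ^ 2 - 4 * a * c).natAbs : ℝ) ^ 2 * I_sq - hs

lemma qfComp_eval_moeb_inv (a b c : ℤ) (M : SL2Z) {τ : ℂ} (hτ : jfac M⁻¹ τ ≠ 0) :
    (qfComp a b c M).1 * moeb M⁻¹ τ ^ 2 + (qfComp a b c M).2.1 * moeb M⁻¹ τ +
      (qfComp a b c M).2.2 = qfC a b c τ 1 / jfac M⁻¹ τ ^ 2 := by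
  have hdet : (M.1 0 0 * M.1 1 1 - M.1 0 1 * M.1 1 0 : ℂ) = 1 := by
    exact_mod_cast (Matrix.det_fin_two M.1).symm.trans M.det_coe
  have hjfac : jfac M⁻¹ τ = -M.1 1 0 * τ + M.1 0 0 := by
    simp [jfac, Matrix.SpecialLinearGroup.coe_inv, Matrix.adjugate_fin_two]
  have hmoeb : moeb M⁻¹ τ = (M.1 1 1 * τ - M.1 0 1) / jfac M⁻¹ τ := by
    simp [moeb, jfac, Matrix.SpecialLinearGroup.coe_inv, Matrix.adjugate_fin_two, sub_eq_add_neg]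
  have hnum : M.1 0 0 * moeb M⁻¹ τ + M.1 0 1 = τ / jfac M⁻¹ τ := by
    rw [hmoeb]
    field_simp
    linear_combination τ * hdet + M.1 0 1 * hjfac
  have hden : M.1 1 0 * moeb M⁻¹ τ + M.1 1 1 = 1 / jfac M⁻¹ τ := by
    rw [hmoeb]
    field_simp
    linear_combination hdet + M.1 1 1 * hjfac
  rw [← qfC_apply_eq_qfComp, hnum, hden, qfC, qfC]
  field_simp

-- The root `moeb M⁻¹ (cmPoint a b c)` of `[a, b, c] ∘ M` is purely imaginary if the middle
-- coefficient vanishes.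
lemma qfComp_snd_fst_ne_zero (ha : 0 < a) (hd : b ^ 2 - 4 * a * c < 0)
    (hre : ∀ M : SL2Z, (moeb M (cmPoint a b c)).re ≠ 0) (M : SL2Z) :
    (qfComp a b c M).2.1 ≠ 0 := fun hB ↦ by
  have hj : jfac M⁻¹ (cmPoint a b c) ≠ 0 := fun h ↦ hre M⁻¹ <| by
    rw [jfac] at h
    rw [moeb, h, div_zero, zero_re]
  have hroot := qfComp_eval_moeb_inv a b c M hj
  rw [qfC_cmPoint ha.ne' hd, hB, Int.cast_zero, zero_mul, add_zero, zero_div] at hroot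
  have hA := qfComp_fst_pos ha hd M
  have hC := qfComp_snd_snd_pos ha hd M
  have hA' : ((qfComp a b c M).1 : ℂ) ≠ 0 := by exact_mod_cast hA.ne'
  refine hre M⁻¹ (re_eq_zero_and_abs_im_eq_of_sq_add_sq_eq_zero
    (v := √((qfComp a b c M).2.2 / (qfComp a b c M).1)) ?_).1
  rw [← ofReal_pow, Real.sq_sqrt (by positivity)]
  push_cast
  field_simp
  linear_combination hroot

lemma qfComp_mul_T_zpow (a b c : ℤ) (M : SL2Z) (n : ℤ) :
    qfComp a b c (M * ModularGroup.T ^ n) = ((qfComp a b c M).1,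
      (qfComp a b c M).2.1 + 2 * n * (qfComp a b c M).1,
      (qfComp a b c M).2.2 + n * (qfComp a b c M).2.1 + n ^ 2 * (qfComp a b c M).1) := by
  simp only [qfComp, Matrix.SpecialLinearGroup.coe_mul, ModularGroup.coe_T_zpow, Matrix.mul_apply,
    Fin.sum_univ_two, Matrix.of_apply, Matrix.cons_val_zero, Matrix.cons_val_one, Prod.mk.injEq]
  refine ⟨?_, ?_, ?_⟩ <;> ring

/-- A matrix in `SL₂(ℤ)` whose first column is the given primitive vector. -/
def bezout (v : gammaSet 1 1 0) : SL2Z :=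
  (((mem_gammaSet_one v.1).1 v.2).exists_SL2_col 0).choose

lemma bezout_col_zero (v : gammaSet 1 1 0) : (bezout v).1.col 0 = v := by
  have h := (((mem_gammaSet_one v.1).1 v.2).exists_SL2_col 0).choose_spec
  ext i
  fin_cases i
  exacts [h.1, h.2]

lemma qfComp_bezout_fst (a b c : ℤ) (v : gammaSet 1 1 0) :
    (qfComp a b c (bezout v)).1 = quadForm a b c v :=
  congrArg (quadForm a b c) (bezout_col_zero v)

lemma mul_T_zpow_col_zero (M : SL2Z) (n : ℤ) : (M * ModularGroup.T ^ n).1.col 0 = M.1.col 0 := by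
  ext i
  simp [ModularGroup.coe_T_zpow, Matrix.mul_apply]

lemma eq_mul_T_zpow_of_col_zero_eq {M N : SL2Z} (h : M.1.col 0 = N.1.col 0) :
    ∃ n : ℤ, M * ModularGroup.T ^ n = N := by
  have h0 : M.1 0 0 = N.1 0 0 := congrFun h 0
  have h1 : M.1 1 0 = N.1 1 0 := congrFun h 1
  have hM := M.det_coe
  have hN := N.det_coe
  rw [Matrix.det_fin_two] at hM hN
  refine ⟨M.1 1 1 * N.1 0 1 - M.1 0 1 * N.1 1 1, ?_⟩
  ext i j
  fin_cases i <;> fin_cases j <;>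
    simp only [ModularGroup.coe_T_zpow, Matrix.SpecialLinearGroup.coe_mul, Matrix.mul_apply,
      Fin.sum_univ_two, Matrix.of_apply, Matrix.cons_val_zero, Matrix.cons_val_one, Fin.zero_eta,
      Fin.mk_one, h0, h1, mul_one, mul_zero, add_zero]
  · linear_combination N.1 0 1 * hM - M.1 0 1 * hN - N.1 0 1 * M.1 1 1 * h0 +
      N.1 0 1 * M.1 0 1 * h1
  · linear_combination N.1 1 1 * hM - M.1 1 1 * hN - N.1 1 1 * M.1 1 1 * h0 +
      N.1 1 1 * M.1 0 1 * h1

lemma col_zero_mem_gammaSet (M : SL2Z) : M.1.col 0 ∈ gammaSet 1 1 0 := by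
  have hdet := M.det_coe
  rw [Matrix.det_fin_two] at hdet
  exact (mem_gammaSet_one _).2 ⟨M.1 1 1, -M.1 0 1, by simp only [Matrix.col_apply]; linarith⟩

/-- Matrices in `SL₂(ℤ)`, sorted by their first column: those with first column `v` are the
`bezout v * T ^ n`. -/
def colEquiv : gammaSet 1 1 0 × ℤ ≃ SL2Z :=
  Equiv.ofBijective (fun q ↦ bezout q.1 * ModularGroup.T ^ q.2) <| by
    refine ⟨fun ⟨v, n⟩ ⟨w, k⟩ h ↦ ?_, fun N ↦ ?_⟩
    · obtain rfl : v = w := Subtype.ext <| by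
        simpa only [mul_T_zpow_col_zero, bezout_col_zero] using
          congrArg (fun M : SL2Z ↦ M.1.col 0) h
      have hT := congrArg (fun M : SL2Z ↦ M.1 0 1) (mul_left_cancel h)
      simpa [ModularGroup.coe_T_zpow] using hT
    · obtain ⟨n, hn⟩ := eq_mul_T_zpow_of_col_zero_eq
        (bezout_col_zero ⟨N.1.col 0, col_zero_mem_gammaSet N⟩)
      exact ⟨(_, n), hn⟩

lemma qfComp_mul_T_zpow_snd_fst (ha : 0 < a) (hd : b ^ 2 - 4 * a * c < 0) (M : SL2Z) (n : ℤ) :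
    ((qfComp a b c (M * ModularGroup.T ^ n)).2.1 : ℝ) =
      2 * (qfComp a b c M).1 * (n + (qfComp a b c M).2.1 / (2 * (qfComp a b c M).1)) := by
  have hA : ((qfComp a b c M).1 : ℝ) ≠ 0 := by exact_mod_cast (qfComp_fst_pos ha hd M).ne'
  rw [qfComp_mul_T_zpow]
  push_cast
  field_simp
  ring

lemma qfComp_mul_T_zpow_snd_snd (ha : 0 < a) (hd : b ^ 2 - 4 * a * c < 0) (M : SL2Z) (n : ℤ) :
    ((qfComp a b c (M * ModularGroup.T ^ n)).2.2 : ℝ) = (qfComp a b c M).1 *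
      ((n + (qfComp a b c M).2.1 / (2 * (qfComp a b c M).1)) ^ 2 +
        (√(4 * a * c - b ^ 2 : ℤ) / (2 * (qfComp a b c M).1)) ^ 2) := by
  have hA : ((qfComp a b c M).1 : ℝ) ≠ 0 := by exact_mod_cast (qfComp_fst_pos ha hd M).ne'
  have hdiscr := congrArg (Int.cast (R := ℝ)) (discr_qfComp a b c M)
  have hΔ : (0 : ℝ) ≤ (4 * a * c - b ^ 2 : ℤ) := by exact_mod_cast (by lia)
  rw [qfComp_mul_T_zpow, div_pow √_, Real.sq_sqrt hΔ]
  push_cast at hdiscr ⊢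
  field_simp
  linear_combination -hdiscr

/-- The forms `[a, b, c] ∘ M`, sorted by the first column `v` of `M`: the `n`-th translate of the
polynomial attached to `v` is `[a, b, c] ∘ (bezout v * T ^ n)`. -/
def orbitFamily (ha : 0 < a) (hd : b ^ 2 - 4 * a * c < 0)
    (hre : ∀ M : SL2Z, (moeb M (cmPoint a b c)).re ≠ 0) : QuadraticFamily (gammaSet 1 1 0) where
  A p := (qfComp a b c (bezout p)).1
  x p := (qfComp a b c (bezout p)).2.1 / (2 * (qfComp a b c (bezout p)).1)
  v p := √(4 * a * c - b ^ 2 : ℤ) / (2 * (qfComp a b c (bezout p)).1)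
  D := (4 * a * c - b ^ 2 : ℤ)
  D_nonneg := by exact_mod_cast (by lia)
  one_le_A p := by exact_mod_cast qfComp_fst_pos ha hd (bezout p)
  one_le_mul p n := by
    rw [← qfComp_mul_T_zpow_snd_snd ha hd]
    exact_mod_cast qfComp_snd_snd_pos ha hd _
  sq_le p n := by
    have hΔ : (0 : ℝ) ≤ (4 * a * c - b ^ 2 : ℤ) := by exact_mod_cast (by lia)
    have hA : (0 : ℝ) < (qfComp a b c (bezout p)).1 := by
      exact_mod_cast qfComp_fst_pos ha hd (bezout p)
    have hB : (1 : ℝ) ≤ ((qfComp a b c (bezout p * ModularGroup.T ^ n)).2.1 : ℝ) ^ 2 := by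
      exact_mod_cast sq_pos_of_ne_zero (qfComp_snd_fst_ne_zero ha hd hre _)
    rw [qfComp_mul_T_zpow_snd_fst ha hd, mul_pow] at hB
    rw [div_pow, Real.sq_sqrt hΔ, div_le_iff₀' (by positivity), mul_left_comm]
    exact le_mul_of_one_le_right hΔ hB
  summable_A := by
    simp only [qfComp_bezout_fst]
    exact (summable_quadForm_rpow_neg ha hd (by norm_num)).comp_injective Subtype.val_injective

end Forms

/-! ### The Epstein zeta function -/

section EpsteinZeta

open EisensteinSeries

variable {a b c : ℤ} {k : ℕ}

lemma tsum_eq_tsum_mul_tsum_gammaSet {𝕜 : Type*} [NormedField 𝕜] [CompleteSpace 𝕜]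
    {f : (Fin 2 → ℤ) → 𝕜} {g : ℕ → 𝕜} (hf : Summable f) (hg : g 0 = 0)
    (hfg : ∀ (n : ℕ) v, f (n • v) = g n * f v) :
    ∑' v, f v = (∑' n, g n) * ∑' v : gammaSet 1 1 0, f v := by
  have hgcd (n : ℕ) (v : gammaSet 1 n 0) : f v = g n * f (divIntMap n v.1) := by
    rw [← hfg, ← gammaSet_eq_gcd_mul_divIntMap v.2]
  have hsigma := gammaSetDivGcdSigmaEquiv.symm.summable_iff.2 hf
  rw [← gammaSetDivGcdSigmaEquiv.symm.tsum_eq f, ← tsum_mul_right]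
  refine hsigma.tsum_sigma.trans ?_
  refine tsum_congr fun n ↦ ?_
  simp only [Function.comp_apply, gammaSetDivGcdSigmaEquiv_symm_eq]
  obtain rfl | hn := eq_or_ne n 0
  · simp only [hgcd, hg, zero_mul, tsum_zero]
  · have : NeZero n := ⟨hn⟩
    rw [tsum_congr (hgcd n), tsum_mul_left]
    exact congrArg (g n * ·) ((gammaSetDivGcdEquiv n).tsum_eq fun v ↦ f v)

lemma epstein_eq_tsum_quadForm (a b c : ℤ) (hk : k ≠ 0) :
    epstein a b c k = ∑' v, ((quadForm a b c v : ℝ) ^ k)⁻¹ := by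
  set f : ℤ × ℤ → ℝ := fun p ↦ ((quadForm a b c ![p.1, p.2] : ℝ) ^ k)⁻¹ with hf
  have hsupp : Function.support f ⊆ {p | p ≠ (0, 0)} := by
    rintro p hp rfl
    simp [hf, quadForm, hk] at hp
  calc epstein a b c k
      = ∑' p : {p : ℤ × ℤ | p ≠ (0, 0)}, f p := tsum_congr fun p ↦ by
        simp only [hf, quadForm, zpow_neg, zpow_natCast, Matrix.cons_val_zero, Matrix.cons_val_one]
    _ = ∑' p, f p := tsum_subtype_eq_of_support_subset hsupp
    _ = _ := (finTwoArrowEquiv ℤ).symm.tsum_eq fun v ↦ ((quadForm a b c v : ℝ) ^ k)⁻¹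

lemma riemannZeta_two_mul_eq_tsum (hk : 1 ≤ k) :
    riemannZeta (2 * k) = (∑' n : ℕ, ((n : ℝ) ^ (2 * k))⁻¹ : ℝ) := by
  have h := zeta_nat_eq_tsum_of_gt_one (k := 2 * k) (by lia)
  push_cast at h ⊢
  simpa only [one_div] using h

lemma epstein_eq_riemannZeta_mul (ha : 0 < a) (hd : b ^ 2 - 4 * a * c < 0) (hk : 2 ≤ k) :
    (epstein a b c k : ℂ) = riemannZeta (2 * k) *
      (∑' v : gammaSet 1 1 0, ((quadForm a b c v : ℝ) ^ k)⁻¹ : ℝ) := by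
  have hsum : Summable fun v : Fin 2 → ℤ ↦ ((quadForm a b c v : ℝ) ^ k)⁻¹ := by
    have hk' : (1 : ℝ) < k := by exact_mod_cast hk
    simpa only [Real.rpow_neg_natCast, zpow_neg, zpow_natCast] using
      summable_quadForm_rpow_neg ha hd hk'
  rw [epstein_eq_tsum_quadForm a b c (by lia), riemannZeta_two_mul_eq_tsum (by lia), ← ofReal_mul]
  refine congrArg _ (tsum_eq_tsum_mul_tsum_gammaSet hsum (by simp; lia) fun n v ↦ ?_)
  rw [quadForm_nsmul]
  push_cast
  rw [mul_pow, mul_inv, pow_mul]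

end EpsteinZeta

/-! ### Periods of modular forms and of `f_{k,P}` -/

section Periods

open EisensteinSeries

variable {a b c : ℤ} {k m : ℕ}

lemma periodN_eq_neg_one_pow_mul_periodN {f : ℂ → ℂ} {n l : ℕ} (h : n + l + 2 = 2 * k)
    (hf : ∀ z : ℂ, 0 < z.im → f (-z⁻¹) = z ^ (2 * k) * f z) :
    periodN n f = (-1) ^ k * periodN l f := by
  rw [periodN, periodN, ← integral_const_mul,
    ← integral_comp_rpow_Ioi (fun y : ℝ ↦ f (y * I) * (y : ℂ) ^ n) (p := -1) (by norm_num)]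
  refine setIntegral_congr_fun measurableSet_Ioi fun y (hy : 0 < y) ↦ ?_
  have hy0 : (y : ℂ) ≠ 0 := by exact_mod_cast hy.ne'
  have hinv : ((y : ℂ)⁻¹ * I) = -(y * I)⁻¹ := by
    rw [mul_inv, inv_I, mul_neg, neg_neg]
  have hjac : |(-1 : ℝ)| * y ^ ((-1 : ℝ) - 1) = (y ^ 2)⁻¹ := by
    rw [abs_neg, abs_one, one_mul, show (-1 : ℝ) - 1 = -(2 : ℕ) by norm_num, Real.rpow_neg hy.le,
      Real.rpow_natCast]
  simp only [hjac, Real.rpow_neg_one, real_smul, ofReal_inv, inv_pow]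
  rw [hinv, hf _ (by simpa using hy), mul_pow, pow_mul I, I_sq, ← h, pow_add, pow_add]
  push_cast
  field_simp

lemma fkP_neg_inv (k : ℕ) (a b c : ℤ) {z : ℂ} (hz : z ≠ 0) :
    fkP k a b c (-z⁻¹) = z ^ (2 * k) * fkP k a b c z := by
  rw [fkP, fkP, mul_left_comm (z ^ _), ← tsum_mul_left (a := z ^ _)]
  congr 1
  refine ((Equiv.mulRight ModularGroup.S).tsum_eq _).symm.trans (tsum_congr fun M ↦ ?_)
  have hS : (M * ModularGroup.S).1 = !![M.1 0 1, -M.1 0 0; M.1 1 1, -M.1 1 0] := by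
    ext i j
    rw [Matrix.SpecialLinearGroup.coe_mul, ModularGroup.S]
    fin_cases i <;> fin_cases j <;> simp [Matrix.mul_apply]
  have hqf : qfC a b c (M.1 0 1 * -z⁻¹ - M.1 0 0) (M.1 1 1 * -z⁻¹ - M.1 1 0) =
      (z ^ 2)⁻¹ * qfC a b c (M.1 0 0 * z + M.1 0 1) (M.1 1 0 * z + M.1 1 1) := by
    simp only [qfC]
    field_simp
    ring
  simp only [Equiv.coe_mulRight, hS, Matrix.of_apply, Matrix.cons_val_zero, Matrix.cons_val_one,
    Int.cast_neg, ← sub_eq_add_neg]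
  rw [hqf, mul_zpow, zpow_neg, zpow_neg, zpow_natCast, zpow_natCast, inv_pow, inv_inv, pow_mul]

lemma orbitFamily_term (ha : 0 < a) (hd : b ^ 2 - 4 * a * c < 0)
    (hre : ∀ M : SL2Z, (moeb M (cmPoint a b c)).re ≠ 0) (m : ℕ) (q : gammaSet 1 1 0 × ℤ) (y : ℝ) :
    (orbitFamily ha hd hre).term m q y =
      qfC a b c ((colEquiv q).1 0 0 * (y * I) + (colEquiv q).1 0 1)
        ((colEquiv q).1 1 0 * (y * I) + (colEquiv q).1 1 1) ^ (-((m + 1 : ℕ) : ℤ)) *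
          y ^ (2 * m) := by
  obtain ⟨p, n⟩ := q
  set F := orbitFamily ha hd hre
  have hA : ((qfComp a b c (colEquiv (p, n))).1 : ℝ) = F.A p :=
    congrArg (Int.cast (R := ℝ)) (congrArg Prod.fst (qfComp_mul_T_zpow a b c (bezout p) n) :)
  have hB : ((qfComp a b c (colEquiv (p, n))).2.1 : ℝ) = 2 * F.A p * (n + F.x p) :=
    qfComp_mul_T_zpow_snd_fst ha hd (bezout p) n
  have hC : ((qfComp a b c (colEquiv (p, n))).2.2 : ℝ) =
      F.A p * ((n + F.x p) ^ 2 + F.v p ^ 2) :=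
    qfComp_mul_T_zpow_snd_snd ha hd (bezout p) n
  have hsq : qfC a b c ((colEquiv (p, n)).1 0 0 * (y * I) + (colEquiv (p, n)).1 0 1)
      ((colEquiv (p, n)).1 1 0 * (y * I) + (colEquiv (p, n)).1 1 1) =
        F.A p * ((n + F.x p + y * I) ^ 2 + F.v p ^ 2) := by
    rw [qfC_apply_eq_qfComp, ← ofReal_intCast, hA, ← ofReal_intCast, hB, ← ofReal_intCast, hC]
    push_cast
    ring
  rw [hsq, QuadraticFamily.term, kernel, zpow_neg, zpow_natCast, mul_pow, mul_inv]
  push_cast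
  ring

lemma fkP_mul_pow (ha : 0 < a) (hd : b ^ 2 - 4 * a * c < 0)
    (hre : ∀ M : SL2Z, (moeb M (cmPoint a b c)).re ≠ 0) (m : ℕ) (y : ℝ) :
    fkP (m + 1) a b c (y * I) * y ^ (2 * m) =
      ((b ^ 2 - 4 * a * c).natAbs ^ ((m + 1 : ℕ) - 1 / 2 : ℝ) / (2 * π * wP a b c) : ℝ) *
        (orbitFamily ha hd hre).series m y := by
  rw [fkP, mul_assoc, QuadraticFamily.series, ← tsum_mul_right, ← colEquiv.tsum_eq]
  simp only [orbitFamily_term]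
  push_cast
  rfl

lemma re_periodN_fkP (ha : 0 < a) (hd : b ^ 2 - 4 * a * c < 0)
    (hre : ∀ M : SL2Z, (moeb M (cmPoint a b c)).re ≠ 0) (hm : 1 ≤ m) :
    (periodN (2 * m) (fkP (m + 1) a b c)).re = (-1) ^ m *
      ((b ^ 2 - 4 * a * c).natAbs ^ ((m + 1 : ℕ) - 1 / 2 : ℝ) / (2 * (2 * m + 1) * wP a b c) *
        ∑' v : gammaSet 1 1 0, ((quadForm a b c v : ℝ) ^ (m + 1))⁻¹) := by
  simp only [periodN, fkP_mul_pow ha hd hre, integral_const_mul, re_ofReal_mul,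
    QuadraticFamily.re_integral_series_Ioi _ hm, orbitFamily, qfComp_bezout_fst]
  field_simp

lemma re_periodN_zero_fkP_eq_re_periodN (hk : 1 ≤ k) (a b c : ℤ) :
    (periodN 0 (fkP k a b c)).re = (-1) ^ k * (periodN (2 * k - 2) (fkP k a b c)).re := by
  rw [periodN_eq_neg_one_pow_mul_periodN (l := 2 * k - 2) (by lia) fun z hz ↦
    fkP_neg_inv k a b c (by rintro rfl; simp at hz), ← re_ofReal_mul]
  push_cast
  rfl

lemma re_periodN_zero_fkP (ha : 0 < a) (hd : b ^ 2 - 4 * a * c < 0)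
    (hre : ∀ M : SL2Z, (moeb M (cmPoint a b c)).re ≠ 0) (hk : 2 ≤ k) :
    (periodN 0 (fkP k a b c)).re =
      -((b ^ 2 - 4 * a * c).natAbs ^ (k - 1 / 2 : ℝ) / (2 * (2 * k - 1) * wP a b c) *
        ∑' v : gammaSet 1 1 0, ((quadForm a b c v : ℝ) ^ k)⁻¹) := by
  obtain ⟨m, rfl⟩ : ∃ m, k = m + 1 := ⟨k - 1, by lia⟩
  have hsign : (-1 : ℝ) ^ (m + 1) * (-1) ^ m = -1 := by
    rw [← pow_add, show m + 1 + m = 2 * m + 1 by ring, pow_succ, pow_mul, neg_one_sq, one_pow,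
      one_mul]
  rw [re_periodN_zero_fkP_eq_re_periodN (by lia), show 2 * (m + 1) - 2 = 2 * m by lia,
    re_periodN_fkP ha hd hre (by lia), ← mul_assoc, hsign, neg_one_mul]
  push_cast
  ring

end Periods

/-- the outer periods of `f_{k,P}` in terms of the Epstein zeta function. -/
theorem outer_periods_fkP (k : ℕ) (hk : 2 ≤ k)
    (a b c : ℤ) (ha : 0 < a) (hd : b ^ 2 - 4 * a * c < 0)
    (hre : ∀ M : SL2Z, (moeb M (cmPoint a b c)).re ≠ 0) :
    (periodN 0 (fkP k a b c)).re = (-1 : ℝ) ^ k * (periodN (2 * k - 2) (fkP k a b c)).re ∧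
    ((periodN 0 (fkP k a b c)).re : ℂ) =
      -(((((b ^ 2 - 4 * a * c).natAbs : ℝ)) ^ ((k : ℝ) - 1 / 2) : ℝ) : ℂ) *
          (epstein a b c k : ℂ) /
        (2 * (2 * (k : ℂ) - 1) * (wP a b c : ℂ) * riemannZeta (2 * k)) := by
  have hζ : riemannZeta (2 * k) ≠ 0 := riemannZeta_ne_zero_of_one_lt_re <| by
    norm_cast
    lia
  refine ⟨re_periodN_zero_fkP_eq_re_periodN (by lia) a b c, ?_⟩
  rw [re_periodN_zero_fkP ha hd hre hk, epstein_eq_riemannZeta_mul ha hd hk]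
  push_cast
  field_simp

end LHMF
end
end

section
/- Let k ≥ 2 and 0 ≤ n ≤ 2k−2 be integers and let P be a positive definite integral binary quadratic form of discriminant d < 0 whose CM point τ_P satisfies Re(Mτ_P) ≠ 0 for all M ∈ SL₂(ℤ). Then r_n(f_{k,P}) = ((−1)^{k−1} |d|^{(k−1)/2} / (2^{k−2} (k−1)! · w_P)) · (R_{2−2k}^{k−1} H_{1−k,n})(τ_P). -/
open Complex MeasureTheory
open scoped Real

noncomputable section

namespace LHMF

/-! Put `ℓ(M, z, τ) = (cτ + d)z - (aτ + b)` and `A_{p,q}(z, τ) = ∑_M ℓ(M, z, τ)⁻ᵖ ℓ(M, z, τ̄)⁻ᑫ`.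
Since `∂_τ ℓ = cz - a = (ℓ(M, z, τ) - ℓ(M, z, τ̄)) / (2i Im τ)`, the raising operator of weight
`p - q` sends `(Im τ)^q ∫₀^∞ A_{p,q}(iy, τ) yⁿ dy` to `p` times the same expression with `(p, q)`
replaced by `(p + 1, q - 1)`. Up to a constant `H_{1-k,n}` is the case `(p, q) = (1, 2k - 1)`, so
its `(k - 1)`-st raising is `(k - 1)!` times the case `p = q = k`. At `τ = τ_P` the latter is, up
to a constant, the period of `f_{k,P}`, because `P(x, y) = a (x - τ_P y)(x - τ̄_P y)`.

Off `E₁` one may differentiate under the sum and the integral: locally uniformly in `τ`, the cusp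
condition and the Schwarz lemma in `exp(2πiz)` make `A_{p,q}(iy, τ)` decay exponentially as
`y → ∞`, and the inversion `z ↦ -1/z` carries this over to `y → 0`.
-/

open scoped ComplexConjugate Topology
open Filter Set

lemma summable_inv_norm_pow_int {ι : Type*} [Fintype ι] {n : ℕ} (hn : Fintype.card ι < n) :
    Summable fun x : ι → ℤ => (‖x‖ ^ n)⁻¹ := by
  let L : Submodule ℤ (ι → ℝ) := Submodule.span ℤ (Set.range (Pi.basisFun ℝ ι))
  have hmem (x : ι → ℤ) : (fun i => (x i : ℝ)) ∈ L :=
    ((Pi.basisFun ℝ ι).mem_span_iff_repr_mem ℤ _).2 fun i => ⟨x i, rfl⟩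
  have hL : Summable fun v : L => ‖v‖⁻¹ ^ n :=
    ZLattice.summable_norm_pow_inv L n ((finrank_range_le_card _).trans_lt hn)
  have hinj : Function.Injective fun x : ι → ℤ => (⟨_, hmem x⟩ : L) := fun x y hxy =>
    funext fun i => Int.cast_injective (congrFun (Subtype.ext_iff.1 hxy) i)
  refine (hL.comp_injective hinj).congr fun x => ?_
  have hnorm : ‖(⟨_, hmem x⟩ : L)‖ = ‖x‖ := rfl
  rw [Function.comp_apply, hnorm, inv_pow]

section Entries

lemma det_cast (R : Type*) [CommRing R] (M : SL2Z) :
    (M.1 0 0 : R) * M.1 1 1 - M.1 0 1 * M.1 1 0 = 1 := by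
  have h := M.2
  rw [Matrix.det_fin_two] at h
  exact_mod_cast congrArg (Int.cast : ℤ → R) h

/-- The largest absolute value of an entry of `M`; the Poincaré series are majorised by its
powers. -/
def entryNorm (M : SL2Z) : ℝ := ‖fun i j => M.1 i j‖

lemma abs_entry_le (M : SL2Z) (i j : Fin 2) : |(M.1 i j : ℝ)| ≤ entryNorm M :=
  calc |(M.1 i j : ℝ)| = ‖M.1 i j‖ := (Int.norm_eq_abs _).symm
    _ ≤ ‖M.1 i‖ := norm_le_pi_norm (M.1 i) j
    _ ≤ entryNorm M := norm_le_pi_norm (fun i j => M.1 i j) i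

lemma entryNorm_le {M : SL2Z} {R : ℝ} (h : ∀ i j, |(M.1 i j : ℝ)| ≤ R) : entryNorm M ≤ R := by
  have hR : 0 ≤ R := (abs_nonneg _).trans (h 0 0)
  refine (pi_norm_le_iff_of_nonneg hR).2 fun i => (pi_norm_le_iff_of_nonneg hR).2 fun j => ?_
  simpa only [Int.norm_eq_abs] using h i j

lemma one_le_entryNorm (M : SL2Z) : 1 ≤ entryNorm M := by
  obtain ⟨i, j, hij⟩ : ∃ i j, M.1 i j ≠ 0 := by
    by_contra! h
    have hdet := det_cast ℤ M
    simp [h] at hdet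
  calc (1 : ℝ) ≤ |(M.1 i j : ℝ)| := mod_cast Int.one_le_abs hij
    _ ≤ entryNorm M := abs_entry_le M i j

lemma finite_entryNorm_le (R : ℝ) : {M : SL2Z | entryNorm M ≤ R}.Finite := by
  have hfin : (Metric.closedBall (0 : Fin 2 → Fin 2 → ℤ) R).Finite :=
    (isCompact_closedBall 0 R).finite_of_discrete
  refine (hfin.preimage (f := fun M : SL2Z => fun i j => M.1 i j) ?_).subset fun M hM => ?_
  · exact fun M _ N _ h => Subtype.ext h
  · exact mem_closedBall_zero_iff.2 hM

lemma inv_entryNorm_pow_le {M : SL2Z} {ι : Type*} [Fintype ι] {x : ι → ℤ} (hx : x ≠ 0)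
    (h : ∀ i, |(x i : ℝ)| ≤ entryNorm M) (n : ℕ) : (entryNorm M ^ n)⁻¹ ≤ (‖x‖ ^ n)⁻¹ := by
  have : 0 < ‖x‖ := norm_pos_iff.2 hx
  have hle : ‖x‖ ≤ entryNorm M := (pi_norm_le_iff_of_nonneg
    (zero_le_one.trans (one_le_entryNorm M))).2 fun i => by
      simpa only [Int.norm_eq_abs] using h i
  gcongr

-- A matrix is determined by `(a, b, d)` if `c = 0` and by `(a, c, d)` if `c ≠ 0`.
lemma summable_inv_entryNorm_pow {n : ℕ} (hn : 3 < n) :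
    Summable fun M : SL2Z => (entryNorm M ^ n)⁻¹ := by
  have hsum := summable_inv_norm_pow_int (ι := Fin 3) (n := n) (by simpa using hn)
  have hentry (M : SL2Z) := abs_entry_le M
  have hnonneg (M : SL2Z) : 0 ≤ (entryNorm M ^ n)⁻¹ :=
    inv_nonneg.2 (pow_nonneg (zero_le_one.trans (one_le_entryNorm M)) n)
  refine (summable_subtype_and_compl (s := {M : SL2Z | M.1 1 0 = 0})).1 ⟨?_, ?_⟩
  · refine .of_nonneg_of_le (fun M => hnonneg M.1) (fun ⟨M, hM⟩ => ?_) (hsum.comp_injective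
      (i := fun M : {M : SL2Z | M.1 1 0 = 0} => ![M.1.1 0 0, M.1.1 0 1, M.1.1 1 1]) ?_)
    · refine inv_entryNorm_pow_le (fun h => ?_) (by simp [Fin.forall_fin_succ, hentry]) n
      have hdet := det_cast ℤ M
      simp_all
    · rintro ⟨M, (hM : M.1 1 0 = 0)⟩ ⟨N, (hN : N.1 1 0 = 0)⟩ h
      ext i j
      fin_cases i <;> fin_cases j <;> simp_all
  · refine .of_nonneg_of_le (fun M => hnonneg M.1) (fun ⟨M, hM⟩ => ?_) (hsum.comp_injective
      (i := fun M : ({M : SL2Z | M.1 1 0 = 0}ᶜ : Set SL2Z) =>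
        ![M.1.1 0 0, M.1.1 1 0, M.1.1 1 1]) ?_)
    · refine inv_entryNorm_pow_le (fun h => hM ?_) (by simp [Fin.forall_fin_succ, hentry]) n
      simpa using congrFun h 1
    · rintro ⟨M, hM⟩ ⟨N, hN⟩ h
      obtain ⟨ha, hc, hd⟩ : M.1 0 0 = N.1 0 0 ∧ M.1 1 0 = N.1 1 0 ∧ M.1 1 1 = N.1 1 1 := by
        simpa using h
      have hb : M.1 0 1 = N.1 0 1 := by
        refine mul_right_cancel₀ (b := M.1 1 0) hM ?_
        linear_combination N.1 1 1 * ha + M.1 0 0 * hd - N.1 0 1 * hc - det_cast ℤ M + det_cast ℤ N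
      ext i j
      fin_cases i <;> fin_cases j <;> simp_all

end Entries

section Moebius

variable {M : SL2Z} {z w τ : ℂ}

lemma jfac_ne_zero (M : SL2Z) (hτ : τ.im ≠ 0) : jfac M τ ≠ 0 := by
  intro h
  have hc : M.1 1 0 = 0 := by simpa [jfac, hτ] using congrArg Complex.im h
  have hd : M.1 1 1 = 0 := by simpa [jfac, hc] using congrArg Complex.re h
  simpa [hc, hd] using det_cast ℤ M

lemma jfac_conj (M : SL2Z) (τ : ℂ) : jfac M (conj τ) = conj (jfac M τ) := by
  simp [jfac]

lemma moeb_conj (M : SL2Z) (τ : ℂ) : moeb M (conj τ) = conj (moeb M τ) := by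
  simp [moeb]

lemma moeb_im (M : SL2Z) (τ : ℂ) : (moeb M τ).im = τ.im / ‖jfac M τ‖ ^ 2 := by
  have h : moeb M τ = ((M.1 0 0 : ℂ) * τ + M.1 0 1) * conj (jfac M τ) *
      (((normSq (jfac M τ))⁻¹ : ℝ) : ℂ) := by
    rw [mul_assoc, ← Complex.inv_def, ← div_eq_mul_inv]
    rfl
  rw [h, Complex.im_mul_ofReal, div_eq_mul_inv, ← Complex.normSq_eq_norm_sq]
  congr 1
  simp only [jfac, Complex.mul_im, Complex.add_re, Complex.add_im, Complex.mul_re,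
    Complex.intCast_re, Complex.intCast_im, Complex.conj_re, Complex.conj_im]
  linear_combination τ.im * det_cast ℝ M

lemma moeb_im_pos (M : SL2Z) (hτ : 0 < τ.im) : 0 < (moeb M τ).im := by
  rw [moeb_im]
  exact div_pos hτ (pow_pos (norm_pos_iff.2 (jfac_ne_zero M hτ.ne')) 2)

/-- The bilinear pairing `(cτ + d)z - (aτ + b) = j(M,τ)(z - Mτ)`, in which the summands of
`H_{k,k-1}` and of `f_{k,P}` become products of negative powers. -/
def pairing (M : SL2Z) (z τ : ℂ) : ℂ :=
  ((M.1 1 0 : ℂ) * τ + M.1 1 1) * z - ((M.1 0 0 : ℂ) * τ + M.1 0 1)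

lemma pairing_eq_jfac_mul (M : SL2Z) (z : ℂ) (hτ : τ.im ≠ 0) :
    pairing M z τ = jfac M τ * (z - moeb M τ) := by
  have h : jfac M τ * moeb M τ = (M.1 0 0 : ℂ) * τ + M.1 0 1 :=
    mul_div_cancel₀ _ (jfac_ne_zero M hτ)
  rw [mul_sub, h]
  rfl

lemma pairing_conj_eq_jfac_mul (M : SL2Z) (z : ℂ) (hτ : τ.im ≠ 0) :
    pairing M z (conj τ) = conj (jfac M τ) * (z - conj (moeb M τ)) := by
  rw [pairing_eq_jfac_mul M z (by simpa using hτ), jfac_conj, moeb_conj]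

lemma pairing_sub (M : SL2Z) (z τ w : ℂ) :
    pairing M z τ - pairing M z w = ((M.1 1 0 : ℂ) * z - M.1 0 0) * (τ - w) := by
  unfold pairing
  ring

lemma norm_pairing_conj_sq (M : SL2Z) (z τ : ℂ) :
    ‖pairing M z (conj τ)‖ ^ 2 = ‖pairing M z τ‖ ^ 2 + 4 * τ.im * z.im := by
  simp only [← Complex.normSq_eq_norm_sq, pairing, Complex.normSq_apply, Complex.sub_re,
    Complex.sub_im, Complex.mul_re, Complex.mul_im, Complex.add_re, Complex.add_im,
    Complex.conj_re, Complex.conj_im, Complex.intCast_re, Complex.intCast_im]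
  linear_combination (4 * τ.im * z.im) * det_cast ℝ M

lemma norm_pairing_le_conj (M : SL2Z) (hτ : 0 ≤ τ.im) (hz : 0 ≤ z.im) :
    ‖pairing M z τ‖ ≤ ‖pairing M z (conj τ)‖ := by
  refine le_of_sq_le_sq ?_ (norm_nonneg _)
  have : 0 ≤ 4 * τ.im * z.im := by positivity
  linarith [norm_pairing_conj_sq M z τ]

lemma four_mul_im_le_norm_pairing_conj_sq (M : SL2Z) (z τ : ℂ) :
    4 * τ.im * z.im ≤ ‖pairing M z (conj τ)‖ ^ 2 := by
  rw [norm_pairing_conj_sq]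
  linarith [sq_nonneg ‖pairing M z τ‖]

lemma norm_pairing_conj_pos (M : SL2Z) (hτ : 0 < τ.im) (hz : 0 < z.im) :
    0 < ‖pairing M z (conj τ)‖ :=
  (norm_nonneg _).lt_of_ne' fun h => by
    have hle := four_mul_im_le_norm_pairing_conj_sq M z τ
    have hpos : 0 < 4 * τ.im * z.im := by positivity
    simp only [h] at hle
    linarith

lemma norm_sub_conj_self (w : ℂ) : ‖w - conj w‖ = 2 * |w.im| := by
  simp [Complex.sub_conj]

lemma norm_column_mul_im_le (M : SL2Z) (hτ : 0 ≤ τ.im) (hz : 0 ≤ z.im) :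
    ‖(M.1 1 0 : ℂ) * z - M.1 0 0‖ * τ.im ≤ ‖pairing M z (conj τ)‖ := by
  have h := norm_sub_le (pairing M z τ) (pairing M z (conj τ))
  rw [pairing_sub, norm_mul, norm_sub_conj_self, abs_of_nonneg hτ] at h
  linarith [norm_pairing_le_conj M hτ hz]

/-- The part of the upper half-plane that the poles of `petSeries` have to avoid: the positive
imaginary axis and the horoball of height `Y`. -/
def cuspRegion (Y : ℝ) : Set ℂ := {z | 0 < z.im ∧ (z.re = 0 ∨ Y ≤ z.im)}

/-- `ℍ ∖ E₁`, described by the condition that no translate lies on the imaginary axis. -/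
def offE1 : Set ℂ := {τ | 0 < τ.im ∧ ∀ M : SL2Z, (moeb M τ).re ≠ 0}

lemma abs_coeff_le {A y₀ : ℝ} (hy₀ : 0 < y₀) (hre : |z.re| ≤ A) (him : y₀ ≤ z.im) (m n : ℝ) :
    |m| ≤ (1 + (1 + A) / y₀) * ‖m * z + n‖ ∧ |n| ≤ (1 + (1 + A) / y₀) * ‖m * z + n‖ := by
  have hA : 0 ≤ A := (abs_nonneg _).trans hre
  set N := ‖m * z + n‖
  have hm : |m| ≤ N / y₀ := by
    rw [le_div_iff₀ hy₀]
    calc |m| * y₀ ≤ |m| * |z.im| := by gcongr; exact him.trans (le_abs_self _)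
      _ = |(m * z + n).im| := by simp [abs_mul]
      _ ≤ N := Complex.abs_im_le_norm _
  have hn : |n| ≤ N + |m| * A :=
    calc |n| = |(m * z + n).re - m * z.re| := by simp
      _ ≤ |(m * z + n).re| + |m * z.re| := abs_sub _ _
      _ ≤ N + |m| * A := by
        rw [abs_mul]
        gcongr
        exact Complex.abs_re_le_norm _
  have hmA : |m| * A ≤ N / y₀ * A := by gcongr
  have hN : 0 ≤ N := norm_nonneg _
  have hNA : 0 ≤ N / y₀ * A := by positivity
  have hNy : 0 ≤ N / y₀ := by positivity
  have hexp : (1 + (1 + A) / y₀) * N = N + N / y₀ + N / y₀ * A := by ring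
  constructor <;> linarith

lemma exists_row_bounds (hτ : 0 < τ.im) : ∃ K > 0, ∀ (M : SL2Z) (i : Fin 2),
    1 ≤ K * ‖(M.1 i 0 : ℂ) * τ + M.1 i 1‖ ∧
      ∀ j, |(M.1 i j : ℝ)| ≤ K * ‖(M.1 i 0 : ℂ) * τ + M.1 i 1‖ := by
  refine ⟨1 + (1 + |τ.re|) / τ.im, by positivity, fun M i => ?_⟩
  have hj : ∀ j, |(M.1 i j : ℝ)| ≤ _ := Fin.forall_fin_two.2
    (by simpa using abs_coeff_le hτ le_rfl le_rfl (M.1 i 0) (M.1 i 1))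
  obtain ⟨j, hij⟩ : ∃ j, M.1 i j ≠ 0 := by
    by_contra! h
    have hdet := det_cast ℤ M
    fin_cases i <;> simp_all
  exact ⟨le_trans (mod_cast Int.one_le_abs hij) (hj j), hj⟩

lemma exists_moeb_im_le (hτ : 0 < τ.im) : ∃ C, ∀ M, (moeb M τ).im ≤ C := by
  obtain ⟨K, -, hrow⟩ := exists_row_bounds hτ
  refine ⟨K ^ 2 * τ.im, fun M => ?_⟩
  have hj : 1 ≤ K * ‖jfac M τ‖ := (hrow M 1).1
  have hpos : 0 < ‖jfac M τ‖ := norm_pos_iff.2 (jfac_ne_zero M hτ.ne')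
  rw [moeb_im, div_le_iff₀ (by positivity)]
  calc τ.im ≤ (K * ‖jfac M τ‖) ^ 2 * τ.im := le_mul_of_one_le_left hτ.le (one_le_pow₀ hj)
    _ = K ^ 2 * τ.im * ‖jfac M τ‖ ^ 2 := by ring

lemma finite_abs_re_moeb_le_im (hτ : 0 < τ.im) :
    {M : SL2Z | |(moeb M τ).re| ≤ (moeb M τ).im}.Finite := by
  obtain ⟨K, hK, hrow⟩ := exists_row_bounds hτ
  refine (finite_entryNorm_le (K ^ 2 * (2 * τ.im))).subset fun M hM => ?_
  set N := fun i => ‖(M.1 i 0 : ℂ) * τ + M.1 i 1‖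
  have hpos : 0 < N 1 := norm_pos_iff.2 (jfac_ne_zero M hτ.ne')
  have hprod : N 0 * N 1 ≤ 2 * τ.im := by
    have hle : N 0 / N 1 ≤ 2 * (τ.im / N 1 ^ 2) := calc
      N 0 / N 1 = ‖moeb M τ‖ := (norm_div _ _).symm
      _ ≤ |(moeb M τ).re| + |(moeb M τ).im| := Complex.norm_le_abs_re_add_abs_im _
      _ ≤ 2 * (moeb M τ).im := by rw [abs_of_pos (moeb_im_pos M hτ)]; linarith [hM.out]
      _ = 2 * (τ.im / N 1 ^ 2) := by rw [moeb_im]; rfl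
    field_simp at hle
    linarith
  have hentry (i i' : Fin 2) (hii' : N i * N i' = N 0 * N 1) (j : Fin 2) :
      |(M.1 i j : ℝ)| ≤ K ^ 2 * (2 * τ.im) := calc
    _ ≤ K * N i := (hrow M i).2 j
    _ ≤ K * N i * (K * N i') := le_mul_of_one_le_right (by positivity) (hrow M i').1
    _ = K ^ 2 * (N 0 * N 1) := by rw [← hii']; ring
    _ ≤ K ^ 2 * (2 * τ.im) := by gcongr
  exact entryNorm_le (Fin.forall_fin_two.2 ⟨hentry 0 1 rfl, hentry 1 0 (mul_comm _ _)⟩)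

lemma exists_mul_im_moeb_le_abs_re (hτ : τ ∈ offE1) :
    ∃ ε > 0, ∀ M : SL2Z, ε * (moeb M τ).im ≤ |(moeb M τ).re| := by
  set S := {M : SL2Z | |(moeb M τ).re| ≤ (moeb M τ).im}
  set f : SL2Z → ℝ := fun M => |(moeb M τ).re| / (moeb M τ).im
  have him (M : SL2Z) : 0 < (moeb M τ).im := moeb_im_pos M hτ.1
  obtain ⟨ε, hmem, hmin⟩ := Set.exists_min_image (insert 1 (f '' S)) id
    (((finite_abs_re_moeb_le_im hτ.1).image f).insert 1) (insert_nonempty _ _)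
  refine ⟨ε, ?_, fun M => ?_⟩
  · obtain rfl | ⟨M, -, rfl⟩ := hmem
    exacts [one_pos, div_pos (abs_pos.2 (hτ.2 M)) (him M)]
  · by_cases hM : M ∈ S
    · exact (le_div_iff₀ (him M)).1 (hmin _ (mem_insert_of_mem _ (mem_image_of_mem f hM)))
    · calc ε * (moeb M τ).im ≤ 1 * (moeb M τ).im :=
            mul_le_mul_of_nonneg_right (hmin 1 (mem_insert _ _)) (him M).le
        _ ≤ |(moeb M τ).re| := by rw [one_mul]; exact (not_le.1 hM).le

lemma norm_sub_conj_le {δ : ℝ} (hδ : 0 < δ) (hw : 0 ≤ w.im) (h : δ * w.im ≤ ‖z - w‖) :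
    ‖z - conj w‖ ≤ (1 + 2 / δ) * ‖z - w‖ :=
  calc ‖z - conj w‖ = ‖(z - w) + (w - conj w)‖ := by rw [sub_add_sub_cancel]
    _ ≤ ‖z - w‖ + ‖w - conj w‖ := norm_add_le _ _
    _ = ‖z - w‖ + 2 / δ * (δ * w.im) := by
      rw [norm_sub_conj_self, abs_of_nonneg hw]
      field_simp
    _ ≤ ‖z - w‖ + 2 / δ * ‖z - w‖ := by gcongr
    _ = (1 + 2 / δ) * ‖z - w‖ := by ring

lemma exists_norm_pairing_conj_le (hτ : τ ∈ offE1) : ∃ K ≥ 1, ∃ Y ≥ 1, ∀ (M : SL2Z),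
    ∀ z ∈ cuspRegion Y, ‖pairing M z (conj τ)‖ ≤ K * ‖pairing M z τ‖ := by
  obtain ⟨ε, hε, hre⟩ := exists_mul_im_moeb_le_abs_re hτ
  obtain ⟨C, him⟩ := exists_moeb_im_le hτ.1
  have hδ : 0 < min ε 1 := lt_min hε one_pos
  refine ⟨1 + 2 / min ε 1, le_add_of_nonneg_right (by positivity), max 1 (2 * C),
    le_max_left _ _, fun M z hz => ?_⟩
  have hw := moeb_im_pos M hτ.1
  have hdist : min ε 1 * (moeb M τ).im ≤ ‖z - moeb M τ‖ := by
    obtain hz0 | hzY := hz.2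
    · calc min ε 1 * (moeb M τ).im ≤ ε * (moeb M τ).im := by gcongr; exact min_le_left _ _
        _ ≤ |(moeb M τ).re| := hre M
        _ = |(z - moeb M τ).re| := by simp [hz0]
        _ ≤ ‖z - moeb M τ‖ := Complex.abs_re_le_norm _
    · calc min ε 1 * (moeb M τ).im ≤ 1 * (moeb M τ).im := by gcongr; exact min_le_right _ _
        _ ≤ (z - moeb M τ).im := by
          rw [Complex.sub_im]
          linarith [him M, (le_max_right _ _).trans hzY]
        _ ≤ ‖z - moeb M τ‖ := (le_abs_self _).trans (Complex.abs_im_le_norm _)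
  rw [pairing_eq_jfac_mul M z hτ.1.ne', pairing_conj_eq_jfac_mul M z hτ.1.ne', norm_mul, norm_mul,
    Complex.norm_conj, mul_left_comm]
  exact mul_le_mul_of_nonneg_left (norm_sub_conj_le hδ hw.le hdist) (norm_nonneg _)

/-- On the ball of radius `r` around `τ₀`, and for `z` in `cuspRegion Y`, the quantities
`|pairing M z τ|` and `|pairing M z τ̄|` are at least `η |pairing M z τ̄₀|`, uniformly in `M`. -/
structure SeparatedBall (τ₀ : ℂ) (r η Y : ℝ) : Prop where
  radius_pos : 0 < r
  radius_le : r ≤ τ₀.im / 2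
  ratio_pos : 0 < η
  one_le_height : 1 ≤ Y
  le_norm_pairing : ∀ τ ∈ Metric.ball τ₀ r, ∀ (M : SL2Z), ∀ z ∈ cuspRegion Y,
    η * ‖pairing M z (conj τ₀)‖ ≤ ‖pairing M z τ‖
  le_norm_pairing_conj : ∀ τ ∈ Metric.ball τ₀ r, ∀ (M : SL2Z), ∀ z ∈ cuspRegion Y,
    η * ‖pairing M z (conj τ₀)‖ ≤ ‖pairing M z (conj τ)‖

lemma exists_separatedBall (hτ : τ ∈ offE1) : ∃ r η Y, SeparatedBall τ r η Y := by
  obtain ⟨K, hK, Y, hY, hle⟩ := exists_norm_pairing_conj_le hτ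
  have hv := hτ.1
  have hK0 : 0 < K := one_pos.trans_le hK
  have hpert (M : SL2Z) {z : ℂ} (hz : 0 < z.im) {w w₀ : ℂ} (hw : ‖w - w₀‖ ≤ τ.im / (2 * K)) :
      ‖pairing M z w₀‖ - 1 / (2 * K) * ‖pairing M z (conj τ)‖ ≤ ‖pairing M z w‖ := by
    have hdiff : ‖pairing M z w - pairing M z w₀‖ ≤ 1 / (2 * K) * ‖pairing M z (conj τ)‖ := calc
      _ = ‖(M.1 1 0 : ℂ) * z - M.1 0 0‖ * ‖w - w₀‖ := by rw [pairing_sub, norm_mul]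
      _ ≤ ‖(M.1 1 0 : ℂ) * z - M.1 0 0‖ * (τ.im / (2 * K)) := by gcongr
      _ = 1 / (2 * K) * (‖(M.1 1 0 : ℂ) * z - M.1 0 0‖ * τ.im) := by ring
      _ ≤ 1 / (2 * K) * ‖pairing M z (conj τ)‖ := by
        gcongr
        exact norm_column_mul_im_le M hv.le hz.le
    rw [norm_sub_rev] at hdiff
    linarith [norm_sub_norm_le (pairing M z w₀) (pairing M z w)]
  refine ⟨τ.im / (2 * K), 1 / (2 * K), Y, by positivity, by gcongr; linarith, by positivity, hY,
    fun w hw M z hz => ?_, fun w hw M z hz => ?_⟩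
  all_goals rw [Metric.mem_ball, dist_eq_norm] at hw
  · refine le_trans ?_ (hpert M hz.1 hw.le)
    have : 1 / K * ‖pairing M z (conj τ)‖ ≤ ‖pairing M z τ‖ := by
      rw [one_div, inv_mul_le_iff₀ hK0]
      exact hle M z hz
    have hhalf : 1 / K = 1 / (2 * K) + 1 / (2 * K) := by field_simp; norm_num
    rw [hhalf] at this
    linarith
  · refine le_trans ?_ (hpert M hz.1 (w₀ := conj τ) ?_)
    · have : 1 / (2 * K) ≤ 1 / 2 := by gcongr; linarith
      nlinarith [norm_nonneg (pairing M z (conj τ))]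
    · rw [← map_sub, Complex.norm_conj]
      exact hw.le

namespace SeparatedBall

variable {τ₀ : ℂ} {r η Y : ℝ}

lemma im_center_pos (h : SeparatedBall τ₀ r η Y) : 0 < τ₀.im := by
  linarith [h.radius_pos, h.radius_le]

lemma half_im_le (h : SeparatedBall τ₀ r η Y) (hτ : τ ∈ Metric.ball τ₀ r) :
    τ₀.im / 2 ≤ τ.im := by
  have hdist : |(τ - τ₀).im| < r :=
    (Complex.abs_im_le_norm _).trans_lt (by rwa [← dist_eq_norm])
  rw [Complex.sub_im, abs_lt] at hdist
  linarith [h.radius_le]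

lemma im_pos (h : SeparatedBall τ₀ r η Y) (hτ : τ ∈ Metric.ball τ₀ r) : 0 < τ.im :=
  (half_pos h.im_center_pos).trans_le (h.half_im_le hτ)

lemma pairing_ne_zero (h : SeparatedBall τ₀ r η Y) (hτ : τ ∈ Metric.ball τ₀ r) (M : SL2Z)
    (hz : z ∈ cuspRegion Y) : pairing M z τ ≠ 0 :=
  norm_pos_iff.1 <| (mul_pos h.ratio_pos (norm_pairing_conj_pos M h.im_center_pos hz.1)).trans_le
    (h.le_norm_pairing τ hτ M z hz)

lemma pairing_conj_ne_zero (h : SeparatedBall τ₀ r η Y) (hτ : τ ∈ Metric.ball τ₀ r) (M : SL2Z)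
    (hz : z ∈ cuspRegion Y) : pairing M z (conj τ) ≠ 0 :=
  norm_pos_iff.1 (norm_pairing_conj_pos M (h.im_pos hτ) hz.1)

lemma ball_subset_offE1 (h : SeparatedBall τ₀ r η Y) : Metric.ball τ₀ r ⊆ offE1 := by
  refine fun τ hτ => ⟨h.im_pos hτ, fun M hM => ?_⟩
  refine h.pairing_ne_zero hτ M (z := moeb M τ) ⟨moeb_im_pos M (h.im_pos hτ), .inl hM⟩ ?_
  rw [pairing_eq_jfac_mul M _ (h.im_pos hτ).ne', sub_self, mul_zero]

end SeparatedBall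

lemma isOpen_offE1 : IsOpen offE1 := by
  refine Metric.isOpen_iff.2 fun τ hτ => ?_
  obtain ⟨r, η, Y, h⟩ := exists_separatedBall hτ
  exact ⟨r, h.radius_pos, h.ball_subset_offE1⟩

lemma exists_entryNorm_le_norm_pairing_conj (hτ : 0 < τ.im) {A y₀ : ℝ} (hA : 0 ≤ A)
    (hy₀ : 0 < y₀) :
    ∃ C > 0, ∀ (M : SL2Z) (z : ℂ), |z.re| ≤ A → y₀ ≤ z.im →
      entryNorm M ≤ C * ‖pairing M z (conj τ)‖ := by
  set K := 1 + (1 + A) / y₀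
  refine ⟨K * (1 / τ.im + (1 + ‖τ‖ / τ.im)), by positivity, fun M z hre him => ?_⟩
  have hz : 0 < z.im := hy₀.trans_le him
  set B := ‖pairing M z (conj τ)‖
  have : 0 ≤ B := norm_nonneg _
  have hfst : ‖(M.1 1 0 : ℂ) * z - M.1 0 0‖ ≤ 1 / τ.im * B := by
    rw [one_div_mul_eq_div, le_div_iff₀ hτ]
    exact norm_column_mul_im_le M hτ.le hz.le
  have hsnd : ‖(M.1 1 1 : ℂ) * z - M.1 0 1‖ ≤ (1 + ‖τ‖ / τ.im) * B := calc
    _ = ‖pairing M z (conj τ) - conj τ * ((M.1 1 0 : ℂ) * z - M.1 0 0)‖ := by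
      congr 1
      unfold pairing
      ring
    _ ≤ B + ‖τ‖ * (1 / τ.im * B) := by
      refine (norm_sub_le _ _).trans ?_
      rw [norm_mul, Complex.norm_conj]
      gcongr
    _ = (1 + ‖τ‖ / τ.im) * B := by ring
  have hcol : ∀ j, ‖(M.1 1 j : ℂ) * z - M.1 0 j‖ ≤ (1 / τ.im + (1 + ‖τ‖ / τ.im)) * B := by
    have hτB : 0 ≤ 1 / τ.im * B := by positivity
    have hτB' : 0 ≤ (1 + ‖τ‖ / τ.im) * B := by positivity
    rw [Fin.forall_fin_two, add_mul]
    constructor <;> linarith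
  have hcoeff (i j : Fin 2) : |(M.1 i j : ℝ)| ≤ K * ‖(M.1 1 j : ℂ) * z - M.1 0 j‖ := by
    have h := abs_coeff_le hy₀ hre him (M.1 1 j) (-M.1 0 j)
    push_cast at h
    rw [abs_neg, ← sub_eq_add_neg] at h
    fin_cases i
    exacts [h.2, h.1]
  refine entryNorm_le fun i j => (hcoeff i j).trans ?_
  rw [mul_assoc]
  exact mul_le_mul_of_nonneg_left (hcol j) (by positivity)

end Moebius

section Schwarz

open Function.Periodic

variable {f : ℂ → ℂ} {h Y C : ℝ}

lemma abs_re_invQParam_le (hh : 0 < h) (q : ℂ) : |(invQParam h q).re| ≤ h / 2 := by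
  have hre : (invQParam h q).re = h / (2 * π) * q.arg := by
    simp only [invQParam, ← div_div, div_I, neg_mul, neg_re, mul_re, mul_im, div_ofReal_re,
      div_ofNat_re, ofReal_re, I_re, mul_zero, div_ofReal_im, div_ofNat_im, ofReal_im, zero_div,
      I_im, mul_one, zero_mul, add_zero, log_im, zero_sub, neg_neg, log_re, neg_zero]
  rw [hre, abs_mul, abs_of_pos (by positivity)]
  calc h / (2 * π) * |q.arg| ≤ h / (2 * π) * π := by gcongr; exact Complex.abs_arg_le_pi q
    _ = h / 2 := by field_simp

lemma lt_im_invQParam (hh : 0 < h) {q : ℂ} (hq₀ : q ≠ 0)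
    (hq : ‖q‖ < Real.exp (-2 * π * Y / h)) : Y < (invQParam h q).im := by
  rwa [← norm_qParam_lt_iff hh, qParam_right_inv hh.ne' hq₀]

lemma cuspFunction_zero_of_tendsto (hh : 0 < h)
    (hcont : ContinuousAt (cuspFunction h f) 0) (hper : Function.Periodic f h)
    (hlim : Tendsto (fun y : ℝ => f (y * I)) atTop (𝓝 0)) : cuspFunction h f 0 = 0 := by
  have him : Tendsto (fun y : ℝ => (y : ℂ) * I) atTop (comap im atTop) :=
    tendsto_comap_iff.2 (tendsto_id.congr fun y => by simp)
  have hq : Tendsto (fun y : ℝ => qParam h (y * I)) atTop (𝓝 0) :=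
    ((qParam_tendsto hh).mono_right nhdsWithin_le_nhds).comp him
  refine tendsto_nhds_unique ((hcont.tendsto.comp hq).congr fun y => ?_) hlim
  exact eq_cuspFunction hh.ne' hper _

-- The Schwarz lemma in the variable `q = exp(2πiz/h)`.
lemma norm_le_exp_of_periodic (hh : 0 < h) (hper : Function.Periodic f h)
    (hdiff : ∀ z : ℂ, Y < z.im → DifferentiableAt ℂ f z)
    (hbound : ∀ z : ℂ, |z.re| ≤ h / 2 → Y < z.im → ‖f z‖ ≤ C)
    (hlim : Tendsto (fun y : ℝ => f (y * I)) atTop (𝓝 0)) {z : ℂ} (hz : Y < z.im) :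
    ‖f z‖ ≤ C * Real.exp (-2 * π * (z.im - Y) / h) := by
  set R := Real.exp (-2 * π * Y / h)
  set F := cuspFunction h f
  have hF_eq {q : ℂ} (hq : q ≠ 0) : F q = f (invQParam h q) := cuspFunction_eq_of_nonzero h f hq
  have hF {q : ℂ} (hq₀ : q ≠ 0) (hq : ‖q‖ < R) : ‖f (invQParam h q)‖ ≤ C :=
    hbound _ (abs_re_invQParam_le hh q) (lt_im_invQParam hh hq₀ hq)
  have hFdiff : DifferentiableOn ℂ F (Metric.ball 0 R) := by
    refine differentiableOn_update_limUnder_of_bddAbove (f := f ∘ invQParam h)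
      (Metric.ball_mem_nhds 0 (Real.exp_pos _)) (fun q ⟨hq, hq₀⟩ => ?_) ⟨C, ?_⟩
    · have hqF := differentiableAt_cuspFunction hh.ne' hper
        (hdiff _ (lt_im_invQParam hh hq₀ (mem_ball_zero_iff.1 hq)))
      rw [qParam_right_inv hh.ne' hq₀] at hqF
      exact hqF.differentiableWithinAt.congr (fun w hw => (hF_eq hw.2).symm) (hF_eq hq₀).symm
    · rintro - ⟨q, ⟨hq, hq₀⟩, rfl⟩
      exact hF hq₀ (mem_ball_zero_iff.1 hq)
  have hF0 : F 0 = 0 := cuspFunction_zero_of_tendsto hh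
    (hFdiff.continuousOn.continuousAt (Metric.ball_mem_nhds 0 (Real.exp_pos _))) hper hlim
  have hqz : ‖qParam h z‖ < R := (norm_qParam_lt_iff hh Y z).2 hz
  have hmaps : MapsTo F (Metric.ball 0 R) (Metric.closedBall (F 0) C) := by
    intro q hq
    rw [hF0, mem_closedBall_zero_iff]
    rcases eq_or_ne q 0 with rfl | hq₀
    · rw [hF0, norm_zero]
      exact (norm_nonneg _).trans (hF (qParam_ne_zero z) hqz)
    · rw [hF_eq hq₀]
      exact hF hq₀ (mem_ball_zero_iff.1 hq)
  have hschwarz := Complex.dist_le_div_mul_dist_of_mapsTo_ball hFdiff hmaps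
    (mem_ball_zero_iff.2 hqz)
  rw [hF0, dist_zero_right, dist_zero_right, show F _ = f z from eq_cuspFunction hh.ne' hper z,
    norm_qParam] at hschwarz
  calc ‖f z‖ ≤ C / R * Real.exp (-2 * π * z.im / h) := hschwarz
    _ = C * Real.exp (-2 * π * (z.im - Y) / h) := by
      rw [div_mul_eq_mul_div, mul_div_assoc, ← Real.exp_sub]
      congr 2
      ring

end Schwarz

section PetSeries

variable {M : SL2Z} {z τ τ₀ : ℂ} {r η Y A y₀ : ℝ} {p q κ n : ℕ}

/-- Summand of `petSeries`. -/
def petTerm (p q : ℕ) (M : SL2Z) (z τ : ℂ) : ℂ :=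
  (pairing M z τ ^ p * pairing M z (conj τ) ^ q)⁻¹

/-- Poincaré series of weight `p + q` in `z` and weight `p - q` (up to a power of `Im τ`) in `τ`.
It interpolates between `H_{k,k-1}`, where `(p, q) = (1, 2k-1)`, and `f_{k,P}`, where `p = q = k`
and `τ` is the CM point. -/
def petSeries (p q : ℕ) (z τ : ℂ) : ℂ := ∑' M, petTerm p q M z τ

lemma mul_I_mem_cuspRegion (Y : ℝ) {y : ℝ} (hy : 0 < y) : (y * I : ℂ) ∈ cuspRegion Y := by
  simp [cuspRegion, hy]

lemma petSeries_add_one (p q : ℕ) (z τ : ℂ) : petSeries p q (z + 1) τ = petSeries p q z τ := by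
  have hpair (M : SL2Z) (w : ℂ) : pairing M (z + 1) w = pairing (ModularGroup.T⁻¹ * M) z w := by
    simp only [pairing, ModularGroup.T_inv_mul_apply_one, Matrix.SpecialLinearGroup.coe_mul,
      ModularGroup.coe_T_inv, Matrix.mul_apply, Matrix.of_apply, Matrix.cons_val',
      Matrix.cons_val_zero, Matrix.cons_val_fin_one, Matrix.cons_val_one, Fin.sum_univ_two,
      Int.cast_add, Int.cast_mul, Int.cast_neg, Int.cast_one]
    ring
  simp only [petSeries, petTerm, hpair]
  exact (Equiv.mulLeft ModularGroup.T⁻¹).tsum_eq (petTerm p q · z τ)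

lemma petSeries_neg_inv (p q : ℕ) (hz : z ≠ 0) (τ : ℂ) :
    petSeries p q (-z⁻¹) τ = (-z) ^ (p + q) * petSeries p q z τ := by
  have hpair (M : SL2Z) (w : ℂ) :
      pairing M (-z⁻¹) w = (-z)⁻¹ * pairing (ModularGroup.S * M) z w := by
    simp only [pairing, Matrix.SpecialLinearGroup.coe_mul, ModularGroup.coe_S, Matrix.mul_apply,
      Matrix.of_apply, Matrix.cons_val', Matrix.cons_val_fin_one, Matrix.cons_val_zero,
      Matrix.cons_val_one, Fin.sum_univ_two, one_mul, zero_mul, add_zero, neg_mul, zero_add,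
      Int.cast_neg]
    field_simp
    ring
  have hterm (M : SL2Z) :
      petTerm p q M (-z⁻¹) τ = (-z) ^ (p + q) * petTerm p q (ModularGroup.S * M) z τ := by
    simp only [petTerm, hpair, mul_pow, mul_inv, inv_pow, inv_inv, pow_add]
    ring
  simp only [petSeries, hterm, tsum_mul_left]
  congr 1
  exact (Equiv.mulLeft ModularGroup.S).tsum_eq (petTerm p q · z τ)

namespace SeparatedBall

lemma norm_petTerm_le (h : SeparatedBall τ₀ r η Y) (p q : ℕ) (hτ : τ ∈ Metric.ball τ₀ r)
    (M : SL2Z) (hz : z ∈ cuspRegion Y) :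
    ‖petTerm p q M z τ‖ ≤ ((η * ‖pairing M z (conj τ₀)‖) ^ (p + q))⁻¹ := by
  have hpos : 0 < η * ‖pairing M z (conj τ₀)‖ :=
    mul_pos h.ratio_pos (norm_pairing_conj_pos M h.im_center_pos hz.1)
  rw [petTerm, norm_inv, norm_mul, norm_pow, norm_pow, pow_add]
  gcongr
  exacts [h.le_norm_pairing τ hτ M z hz, h.le_norm_pairing_conj τ hτ M z hz]

lemma exists_norm_petTerm_le (h : SeparatedBall τ₀ r η Y) (hA : 0 ≤ A) (hy₀ : 0 < y₀) (κ : ℕ) :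
    ∃ C ≥ 0, ∀ p q, p + q = κ → ∀ τ ∈ Metric.ball τ₀ r, ∀ z ∈ cuspRegion Y, |z.re| ≤ A →
      y₀ ≤ z.im → ∀ M, ‖petTerm p q M z τ‖ ≤ C * (entryNorm M ^ κ)⁻¹ := by
  obtain ⟨C, hC, hle⟩ := exists_entryNorm_le_norm_pairing_conj h.im_center_pos hA hy₀
  have hη := h.ratio_pos
  refine ⟨(C / η) ^ κ, by positivity, fun p q hpq τ hτ z hz hre him M => ?_⟩
  have hM : 0 < entryNorm M := one_pos.trans_le (one_le_entryNorm M)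
  calc ‖petTerm p q M z τ‖ ≤ ((η * ‖pairing M z (conj τ₀)‖) ^ κ)⁻¹ :=
        hpq ▸ h.norm_petTerm_le p q hτ M hz
    _ ≤ ((η * (entryNorm M / C)) ^ κ)⁻¹ := by
      gcongr
      exact (div_le_iff₀' hC).2 (hle M z hre him)
    _ = (C / η) ^ κ * (entryNorm M ^ κ)⁻¹ := by
      rw [← inv_pow, ← inv_pow, ← mul_pow]
      congr 1
      field_simp

lemma summable_petTerm (h : SeparatedBall τ₀ r η Y) (hpq : 3 < p + q)
    (hτ : τ ∈ Metric.ball τ₀ r) (hz : z ∈ cuspRegion Y) :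
    Summable fun M => petTerm p q M z τ := by
  obtain ⟨C, -, hC⟩ := h.exists_norm_petTerm_le (abs_nonneg z.re) hz.1 (p + q)
  exact .of_norm_bounded ((summable_inv_entryNorm_pow hpq).mul_left C)
    (hC p q rfl τ hτ z hz le_rfl le_rfl)

lemma exists_norm_petSeries_le (h : SeparatedBall τ₀ r η Y) (hA : 0 ≤ A) (hy₀ : 0 < y₀)
    (hκ : 3 < κ) :
    ∃ C ≥ 0, ∀ p q, p + q = κ → ∀ τ ∈ Metric.ball τ₀ r, ∀ z ∈ cuspRegion Y, |z.re| ≤ A →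
      y₀ ≤ z.im → ‖petSeries p q z τ‖ ≤ C := by
  obtain ⟨C, hC₀, hC⟩ := h.exists_norm_petTerm_le hA hy₀ κ
  refine ⟨∑' M, C * (entryNorm M ^ κ)⁻¹, tsum_nonneg fun M => ?_, fun p q hpq τ hτ z hz hre him =>
    tsum_of_norm_bounded ((summable_inv_entryNorm_pow hκ).mul_left C).hasSum
      (hC p q hpq τ hτ z hz hre him)⟩
  have := one_le_entryNorm M
  positivity

lemma differentiableAt_petTerm (h : SeparatedBall τ₀ r η Y) (p q : ℕ)
    (hτ : τ ∈ Metric.ball τ₀ r) (M : SL2Z) (hz : z ∈ cuspRegion Y) :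
    DifferentiableAt ℂ (petTerm p q M · τ) z := by
  have hpair (w : ℂ) : DifferentiableAt ℂ (pairing M · w) z := by
    unfold pairing
    fun_prop
  exact (((hpair τ).pow p).mul ((hpair (conj τ)).pow q)).inv <|
    mul_ne_zero (pow_ne_zero _ (h.pairing_ne_zero hτ M hz))
      (pow_ne_zero _ (h.pairing_conj_ne_zero hτ M hz))

lemma differentiableAt_petSeries (h : SeparatedBall τ₀ r η Y) (hpq : 3 < p + q)
    (hτ : τ ∈ Metric.ball τ₀ r) (hz : Y < z.im) : DifferentiableAt ℂ (petSeries p q · τ) z := by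
  have hY := h.one_le_height
  set U : Set ℂ := {w | |w.re| < |z.re| + 1} ∩ {w | Y < w.im}
  have hU : IsOpen U := (isOpen_lt (by fun_prop) continuous_const).inter
    (isOpen_lt continuous_const Complex.continuous_im)
  have hmem {w : ℂ} (hw : w ∈ U) : w ∈ cuspRegion Y :=
    ⟨by linarith [hw.2.out], .inr hw.2.out.le⟩
  obtain ⟨C, -, hC⟩ := h.exists_norm_petTerm_le (A := |z.re| + 1) (by positivity)
    (one_pos.trans_le hY) (p + q)
  have hzU : z ∈ U := ⟨lt_add_one |z.re|, hz⟩
  refine (Complex.differentiableOn_tsum_of_summable_norm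
    ((summable_inv_entryNorm_pow hpq).mul_left C) (fun M w hw => ?_) hU
    fun M w hw => ?_).differentiableAt (hU.mem_nhds hzU)
  · exact (h.differentiableAt_petTerm p q hτ M (hmem hw)).differentiableWithinAt
  · exact hC p q rfl τ hτ w (hmem hw) hw.1.out.le hw.2.out.le M

lemma tendsto_petTerm (h : SeparatedBall τ₀ r η Y) (hpq : p + q ≠ 0)
    (hτ : τ ∈ Metric.ball τ₀ r) (M : SL2Z) :
    Tendsto (fun y : ℝ => petTerm p q M (y * I) τ) atTop (𝓝 0) := by
  have hv := h.im_center_pos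
  have hsq : Tendsto (fun y : ℝ => 4 * τ₀.im * y) atTop atTop :=
    tendsto_id.const_mul_atTop (by positivity)
  have hpair : Tendsto (fun y : ℝ => ‖pairing M (y * I) (conj τ₀)‖) atTop atTop :=
    tendsto_atTop_mono (fun y => Real.sqrt_le_iff.2 ⟨norm_nonneg _, by
      simpa using four_mul_im_le_norm_pairing_conj_sq M (y * I) τ₀⟩)
      (Real.tendsto_sqrt_atTop.comp hsq)
  have hbound := ((tendsto_pow_atTop hpq).comp
    (hpair.const_mul_atTop h.ratio_pos)).inv_tendsto_atTop
  refine squeeze_zero_norm' ?_ hbound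
  filter_upwards [eventually_gt_atTop 0] with y hy
  exact h.norm_petTerm_le p q hτ M (mul_I_mem_cuspRegion Y hy)

lemma tendsto_petSeries (h : SeparatedBall τ₀ r η Y) (hpq : 3 < p + q)
    (hτ : τ ∈ Metric.ball τ₀ r) :
    Tendsto (fun y : ℝ => petSeries p q (y * I) τ) atTop (𝓝 0) := by
  obtain ⟨C, -, hC⟩ := h.exists_norm_petTerm_le le_rfl one_pos (p + q)
  rw [← tsum_zero (α := ℂ) (β := SL2Z)]
  refine tendsto_tsum_of_dominated_convergence ((summable_inv_entryNorm_pow hpq).mul_left C)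
    (h.tendsto_petTerm (by lia) hτ) ?_
  filter_upwards [eventually_ge_atTop 1] with y hy M
  exact hC p q rfl τ hτ _ (mul_I_mem_cuspRegion Y (one_pos.trans_le hy)) (by simp) (by simpa) M

lemma exists_norm_petSeries_le_exp (h : SeparatedBall τ₀ r η Y) (hκ : 3 < κ) :
    ∃ C ≥ 0, ∀ p q, p + q = κ → ∀ τ ∈ Metric.ball τ₀ r, ∀ y : ℝ, 1 ≤ y →
      ‖petSeries p q (y * I) τ‖ ≤ C * Real.exp (-2 * π * (y - Y)) := by
  have hY := h.one_le_height
  obtain ⟨C, hC₀, hC⟩ := h.exists_norm_petSeries_le one_half_pos.le one_pos hκ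
  refine ⟨C, hC₀, fun p q hpq τ hτ y hy => ?_⟩
  obtain hyY | hyY := le_or_gt y Y
  · refine (hC p q hpq τ hτ _ (mul_I_mem_cuspRegion Y (one_pos.trans_le hy)) (by simp)
      (by simpa)).trans (le_mul_of_one_le_right hC₀ (Real.one_le_exp ?_))
    nlinarith [Real.pi_pos]
  · have hschwarz := norm_le_exp_of_periodic (f := (petSeries p q · τ)) (Y := Y) (C := C) one_pos
      (by simpa using (petSeries_add_one p q · τ))
      (fun z hz => h.differentiableAt_petSeries (by lia) hτ hz)
      (fun z hre hz => hC p q hpq τ hτ z ⟨by linarith, .inr hz.le⟩ hre (by linarith))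
      (h.tendsto_petSeries (by lia) hτ) (z := y * I) (by simpa)
    simpa using hschwarz

lemma exists_norm_petSeries_le_inv_pow (h : SeparatedBall τ₀ r η Y) (hκ : 3 < κ) :
    ∃ C ≥ 0, ∀ p q, p + q = κ → ∀ τ ∈ Metric.ball τ₀ r, ∀ y : ℝ, 1 ≤ y →
      ‖petSeries p q (y * I) τ‖ ≤ C * (y ^ κ)⁻¹ := by
  obtain ⟨C, hC₀, hC⟩ := h.exists_norm_petSeries_le_exp hκ
  refine ⟨C * Real.exp (2 * π * Y) * κ.factorial, by positivity, fun p q hpq τ hτ y hy => ?_⟩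
  have hy₀ : 0 < y := one_pos.trans_le hy
  have hexp : Real.exp (-2 * π * y) ≤ κ.factorial * (y ^ κ)⁻¹ := calc
    _ ≤ Real.exp (-y) := Real.exp_le_exp.2 (by nlinarith [Real.pi_gt_three])
    _ = (Real.exp y)⁻¹ := Real.exp_neg y
    _ ≤ (y ^ κ / κ.factorial)⁻¹ := by gcongr; exact Real.pow_div_factorial_le_exp y hy₀.le κ
    _ = κ.factorial * (y ^ κ)⁻¹ := by rw [inv_div, div_eq_mul_inv]
  calc _ ≤ C * Real.exp (-2 * π * (y - Y)) := hC p q hpq τ hτ y hy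
    _ = C * Real.exp (2 * π * Y) * Real.exp (-2 * π * y) := by
      rw [mul_assoc C, ← Real.exp_add]
      ring_nf
    _ ≤ _ := by
      rw [mul_assoc _ (κ.factorial : ℝ)]
      gcongr

-- For `y ≤ 1` the inversion `z ↦ -1/z` exchanges the two ends of the imaginary axis.
lemma exists_norm_petSeries_mul_pow_le (h : SeparatedBall τ₀ r η Y) (hκ : 3 < κ)
    (hn : n + 2 ≤ κ) :
    ∃ C ≥ 0, ∀ p q, p + q = κ → ∀ τ ∈ Metric.ball τ₀ r, ∀ y : ℝ, 0 < y →
      ‖petSeries p q (y * I) τ * (y : ℂ) ^ n‖ ≤ C * (1 + y ^ 2)⁻¹ := by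
  obtain ⟨C, hC₀, hC⟩ := h.exists_norm_petSeries_le_inv_pow hκ
  refine ⟨C * 2, by positivity, fun p q hpq τ hτ y hy => ?_⟩
  rw [norm_mul, norm_pow, Complex.norm_of_nonneg hy.le, mul_assoc, ← div_eq_mul_inv]
  obtain hy1 | hy1 := le_total 1 y
  · calc _ ≤ C * (y ^ κ)⁻¹ * y ^ n := by gcongr; exact hC p q hpq τ hτ y hy1
      _ ≤ C * (y ^ (n + 2))⁻¹ * y ^ n := by gcongr
      _ = C * (1 / y ^ 2) := by rw [pow_add]; field_simp
      _ ≤ C * (2 / (1 + y ^ 2)) := by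
        gcongr ?_ * ?_
        rw [div_le_div_iff₀ (by positivity) (by positivity)]
        nlinarith
  · have hinv : (y * I : ℂ) = -((y⁻¹ : ℝ) * I : ℂ)⁻¹ := by
      simp [Complex.inv_I, mul_comm]
    have hbound : ‖petSeries p q (y * I) τ‖ ≤ C := calc
      _ = (y⁻¹) ^ κ * ‖petSeries p q ((y⁻¹ : ℝ) * I) τ‖ := by
        rw [hinv, petSeries_neg_inv p q (by simp [hy.ne']), hpq]
        simp [abs_of_pos hy]
      _ ≤ (y⁻¹) ^ κ * (C * ((y⁻¹) ^ κ)⁻¹) := by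
        gcongr
        exact hC p q hpq τ hτ _ ((one_le_inv₀ hy).2 hy1)
      _ = C := by field_simp
    calc _ ≤ C * 1 := by gcongr; exact pow_le_one₀ hy.le hy1
      _ ≤ C * (2 / (1 + y ^ 2)) := by
        gcongr
        rw [le_div_iff₀ (by positivity)]
        nlinarith

end SeparatedBall

end PetSeries

section Differential

variable {M : SL2Z} {z τ τ₀ : ℂ} {r η Y : ℝ} {p q n : ℕ}

/-- The real-linear map `h ↦ X h + Y h̄`, the differential of a function with Wirtinger
derivatives `∂f/∂τ = X` and `∂f/∂τ̄ = Y`. -/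
def wirtinger (X Y : ℂ) : ℂ →L[ℝ] ℂ :=
  X • ContinuousLinearMap.id ℝ ℂ + Y • (Complex.conjCLE : ℂ →L[ℝ] ℂ)

lemma wirtinger_apply (X Y h : ℂ) : wirtinger X Y h = X * h + Y * conj h := rfl

lemma norm_wirtinger_le (X Y : ℂ) : ‖wirtinger X Y‖ ≤ ‖X‖ + ‖Y‖ := by
  refine ContinuousLinearMap.opNorm_le_bound _ (by positivity) fun h => ?_
  rw [wirtinger_apply, add_mul]
  exact (norm_add_le _ _).trans_eq (by simp)

/-- The differential, at a point of imaginary part `v`, of the member of index `(p + 1, q + 1)` of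
the families `petTerm`, `petSeries` and `petPeriod`, expressed through the values `a`, `b`, `c` of
the members of index `(p + 1, q + 1)`, `(p + 2, q)` and `(p, q + 2)`. -/
def petDifferential (p q : ℕ) (v : ℝ) (a b c : ℂ) : ℂ →L[ℝ] ℂ :=
  wirtinger ((p + 1) / (2 * I * v) * (b - a)) ((q + 1) / (2 * I * v) * (a - c))

lemma mul_petDifferential (p q : ℕ) (v : ℝ) (a b c w : ℂ) :
    w • petDifferential p q v a b c = petDifferential p q v (a * w) (b * w) (c * w) := by
  ext1 h
  simp only [petDifferential, wirtinger_apply, smul_apply, smul_eq_mul]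
  ring

lemma norm_petDifferential_le (p q : ℕ) {v v₀ B : ℝ} {a b c : ℂ} (hv₀ : 0 < v₀) (hv : v₀ ≤ v)
    (ha : ‖a‖ ≤ B) (hb : ‖b‖ ≤ B) (hc : ‖c‖ ≤ B) :
    ‖petDifferential p q v a b c‖ ≤ (p + q + 2) / v₀ * B := by
  have : 0 ≤ B := (norm_nonneg a).trans ha
  have hcoeff (j : ℕ) : ‖((j : ℂ) + 1) / (2 * I * v)‖ ≤ (j + 1) / (2 * v₀) := by
    rw [norm_div, norm_mul, norm_mul, Complex.norm_real, Real.norm_of_nonneg (hv₀.le.trans hv),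
      ← Nat.cast_add_one, Complex.norm_natCast]
    simp only [Complex.norm_ofNat, Complex.norm_I, mul_one, Nat.cast_add_one]
    gcongr
  calc _ ≤ _ := norm_wirtinger_le _ _
    _ ≤ (p + 1) / (2 * v₀) * (B + B) + (q + 1) / (2 * v₀) * (B + B) := by
      rw [norm_mul, norm_mul]
      gcongr
      exacts [hcoeff p, (norm_sub_le _ _).trans (add_le_add hb ha), hcoeff q,
        (norm_sub_le _ _).trans (add_le_add ha hc)]
    _ = (p + q + 2) / v₀ * B := by
      field_simp
      ring

lemma hasSum_petDifferential {ι : Type*} {a b c : ι → ℂ} {a' b' c' : ℂ} (p q : ℕ) (v : ℝ)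
    (ha : HasSum a a') (hb : HasSum b b') (hc : HasSum c c') :
    HasSum (fun i => petDifferential p q v (a i) (b i) (c i)) (petDifferential p q v a' b' c') :=
  (((hb.sub ha).mul_left _).smul_const _).add (((ha.sub hc).mul_left _).smul_const _)

section Integral

variable {α : Type*} [MeasurableSpace α] {μ : Measure α} {a b c : α → ℂ}

lemma integrable_petDifferential (p q : ℕ) (v : ℝ) (ha : Integrable a μ) (hb : Integrable b μ)
    (hc : Integrable c μ) : Integrable (fun x => petDifferential p q v (a x) (b x) (c x)) μ := by
  have hX : Integrable (fun x => (p + 1) / (2 * I * v) * (b x - a x)) μ := (hb.sub ha).const_mul _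
  have hY : Integrable (fun x => (q + 1) / (2 * I * v) * (a x - c x)) μ := (ha.sub hc).const_mul _
  exact (hX.smul_const (ContinuousLinearMap.id ℝ ℂ)).add
    (hY.smul_const (Complex.conjCLE : ℂ →L[ℝ] ℂ))

lemma integral_petDifferential (p q : ℕ) (v : ℝ) (ha : Integrable a μ) (hb : Integrable b μ)
    (hc : Integrable c μ) : ∫ x, petDifferential p q v (a x) (b x) (c x) ∂μ =
      petDifferential p q v (∫ x, a x ∂μ) (∫ x, b x ∂μ) (∫ x, c x ∂μ) := by
  have hX : Integrable (fun x => (p + 1) / (2 * I * v) * (b x - a x)) μ := (hb.sub ha).const_mul _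
  have hY : Integrable (fun x => (q + 1) / (2 * I * v) * (a x - c x)) μ := (ha.sub hc).const_mul _
  simp only [petDifferential, wirtinger]
  rw [integral_add (hX.smul_const _) (hY.smul_const _), integral_smul_const, integral_smul_const,
    integral_const_mul, integral_const_mul, integral_sub hb ha, integral_sub ha hc]

end Integral

lemma hasDerivAt_inv_pairing_pow (p : ℕ) (h : pairing M z τ ≠ 0) :
    HasDerivAt (fun w => (pairing M z w ^ (p + 1))⁻¹)
      (-(p + 1) * ((M.1 1 0 : ℂ) * z - M.1 0 0) * (pairing M z τ ^ (p + 2))⁻¹) τ := by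
  have hpair : HasDerivAt (pairing M z) ((M.1 1 0 : ℂ) * z - M.1 0 0) τ := by
    unfold pairing
    simpa using ((((hasDerivAt_id' τ).const_mul (M.1 1 0 : ℂ)).add_const _).mul_const z).fun_sub
      (((hasDerivAt_id' τ).const_mul (M.1 0 0 : ℂ)).add_const (M.1 0 1 : ℂ))
  refine ((hpair.pow (p + 1)).inv (pow_ne_zero _ h)).congr_deriv ?_
  simp only [Pi.pow_apply, Nat.cast_add_one, Nat.add_sub_cancel]
  field_simp
  ring

-- `∂_τ(cτ + d)z - (aτ + b) = cz - a`, and `2i Im τ (cz - a)` is the difference of the pairings of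
-- `z` with `τ` and `τ̄`.
lemma hasFDerivAt_petTerm (p q : ℕ) (hτ : τ.im ≠ 0) (h : pairing M z τ ≠ 0)
    (hconj : pairing M z (conj τ) ≠ 0) :
    HasFDerivAt (petTerm (p + 1) (q + 1) M z) (petDifferential p q τ.im
      (petTerm (p + 1) (q + 1) M z τ) (petTerm (p + 2) q M z τ) (petTerm p (q + 2) M z τ)) τ := by
  have hprod := (hasDerivAt_inv_pairing_pow p h).complexToReal_fderiv.mul
    ((hasDerivAt_inv_pairing_pow q hconj).complexToReal_fderiv.comp τ
      (Complex.conjCLE : ℂ →L[ℝ] ℂ).hasFDerivAt)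
  have hcol : (M.1 1 0 : ℂ) * z - M.1 0 0 =
      (pairing M z τ - pairing M z (conj τ)) / (2 * I * τ.im) := by
    rw [pairing_sub, Complex.sub_conj]
    push_cast
    field_simp [Complex.ofReal_ne_zero.2 hτ]
  refine (hprod.congr_fderiv ?_).congr_of_eventuallyEq (.of_forall fun w => mul_inv _ _)
  ext1 w
  have hv : (τ.im : ℂ) ≠ 0 := Complex.ofReal_ne_zero.2 hτ
  simp only [petDifferential, wirtinger_apply, petTerm, hcol]
  simp only [neg_add_rev, ContinuousLinearMap.smul_comp, Function.comp_apply, add_apply, smul_apply,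
    ContinuousLinearMap.comp_apply, ContinuousLinearEquiv.coe_coe, ContinuousAlgEquiv.coeCLE_apply,
    conjCAE_apply, one_apply_eq_self, smul_eq_mul, mul_inv_rev]
  field_simp
  ring

namespace SeparatedBall

lemma hasFDerivAt_petSeries (h : SeparatedBall τ₀ r η Y) (hpq : 1 < p + q)
    (hτ : τ ∈ Metric.ball τ₀ r) (hz : z ∈ cuspRegion Y) :
    HasFDerivAt (petSeries (p + 1) (q + 1) z) (petDifferential p q τ.im
      (petSeries (p + 1) (q + 1) z τ) (petSeries (p + 2) q z τ) (petSeries p (q + 2) z τ)) τ := by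
  obtain ⟨C, -, hC⟩ := h.exists_norm_petTerm_le (abs_nonneg z.re) hz.1 (p + q + 2)
  have hbound {p' q' : ℕ} (hpq' : p' + q' = p + q + 2) {w : ℂ} (hw : w ∈ Metric.ball τ₀ r) :=
    hC p' q' hpq' w hw z hz le_rfl le_rfl
  refine (hasFDerivAt_tsum_of_isPreconnected
    (((summable_inv_entryNorm_pow (n := p + q + 2) (by lia)).mul_left C).mul_left
      ((p + q + 2) / (τ₀.im / 2))) Metric.isOpen_ball (convex_ball τ₀ r).isPreconnected
    (fun M w hw => hasFDerivAt_petTerm p q (h.im_pos hw).ne' (h.pairing_ne_zero hw M hz)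
      (h.pairing_conj_ne_zero hw M hz))
    (fun M w hw => norm_petDifferential_le p q (half_pos h.im_center_pos) (h.half_im_le hw)
      (hbound (by lia) hw M) (hbound (by lia) hw M) (hbound (by lia) hw M))
    hτ (h.summable_petTerm (by lia) hτ hz) hτ).congr_fderiv ?_
  exact (hasSum_petDifferential p q τ.im (h.summable_petTerm (by lia) hτ hz).hasSum
    (h.summable_petTerm (by lia) hτ hz).hasSum (h.summable_petTerm (by lia) hτ hz).hasSum).tsum_eq

end SeparatedBall

lemma measurable_petSeries (p q : ℕ) (τ : ℂ) : Measurable (petSeries p q · τ) := by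
  have : Countable SL2Z := Subtype.countable (α := Fin 2 → Fin 2 → ℤ)
  refine .tsum fun M => ?_
  unfold petTerm pairing
  fun_prop

/-- The `n`-th period of `petSeries p q · τ`, as a function of `τ`. -/
def petPeriod (n p q : ℕ) (τ : ℂ) : ℂ := periodN n (petSeries p q · τ)

namespace SeparatedBall

lemma integrableOn_petSeries_mul_pow (h : SeparatedBall τ₀ r η Y) (hpq : 3 < p + q)
    (hn : n + 2 ≤ p + q) (hτ : τ ∈ Metric.ball τ₀ r) :
    IntegrableOn (fun y : ℝ => petSeries p q (y * I) τ * (y : ℂ) ^ n) (Ioi 0) := by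
  obtain ⟨C, -, hC⟩ := h.exists_norm_petSeries_mul_pow_le hpq hn
  have hmeas := measurable_petSeries p q τ
  exact (integrable_inv_one_add_sq.const_mul C).integrableOn.mono' (by fun_prop)
    (ae_restrict_of_forall_mem measurableSet_Ioi (hC p q rfl τ hτ))

lemma hasFDerivAt_petPeriod (h : SeparatedBall τ₀ r η Y) (hpq : 1 < p + q) (hn : n ≤ p + q)
    (hτ : τ ∈ Metric.ball τ₀ r) :
    HasFDerivAt (petPeriod n (p + 1) (q + 1)) (petDifferential p q τ.im
      (petPeriod n (p + 1) (q + 1) τ) (petPeriod n (p + 2) q τ) (petPeriod n p (q + 2) τ)) τ := by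
  obtain ⟨C, -, hC⟩ := h.exists_norm_petSeries_mul_pow_le (κ := p + q + 2) (n := n) (by lia)
    (by lia)
  have hbound {p' q' : ℕ} (hpq' : p' + q' = p + q + 2) {w : ℂ} (hw : w ∈ Metric.ball τ₀ r) {y : ℝ}
      (hy : 0 < y) := hC p' q' hpq' w hw y hy
  have hint {p' q' : ℕ} (hpq' : p' + q' = p + q + 2) {w : ℂ} (hw : w ∈ Metric.ball τ₀ r) :=
    h.integrableOn_petSeries_mul_pow (p := p') (q := q') (n := n) (by lia) (by lia) hw
  have hderiv := hasFDerivAt_integral_of_dominated_of_fderiv_le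
    (F := fun w (y : ℝ) => petSeries (p + 1) (q + 1) (y * I) w * (y : ℂ) ^ n)
    (F' := fun w y => petDifferential p q w.im (petSeries (p + 1) (q + 1) (y * I) w * (y : ℂ) ^ n)
      (petSeries (p + 2) q (y * I) w * (y : ℂ) ^ n) (petSeries p (q + 2) (y * I) w * (y : ℂ) ^ n))
    (Metric.isOpen_ball.mem_nhds hτ)
    (eventually_of_mem (Metric.isOpen_ball.mem_nhds hτ) fun w hw =>
      (hint (by lia) hw).aestronglyMeasurable)
    (hint (by lia) hτ)
    (integrable_petDifferential p q τ.im (hint (by lia) hτ) (hint (by lia) hτ)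
      (hint (by lia) hτ)).aestronglyMeasurable
    (ae_restrict_of_forall_mem measurableSet_Ioi fun y hy w hw =>
      norm_petDifferential_le p q (half_pos h.im_center_pos) (h.half_im_le hw)
        (hbound (by lia) hw hy) (hbound (by lia) hw hy) (hbound (by lia) hw hy))
    ((integrable_inv_one_add_sq.const_mul C).integrableOn.const_mul _)
    (ae_restrict_of_forall_mem measurableSet_Ioi fun y hy w hw => by
      rw [← mul_petDifferential]
      exact (h.hasFDerivAt_petSeries hpq hw (mul_I_mem_cuspRegion Y hy)).mul_const _)
  exact hderiv.congr_fderiv (integral_petDifferential p q τ.im (hint (by lia) hτ)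
    (hint (by lia) hτ) (hint (by lia) hτ))

end SeparatedBall

end Differential

section Raising

variable {τ C : ℂ} {F f : ℂ → ℂ} {k m n q : ℕ}

lemma dtau_eq_of_hasFDerivAt {f' : ℂ →L[ℝ] ℂ} (hf : HasFDerivAt f f' τ) :
    dtau f τ = (f' 1 - I * f' I) / 2 := by
  rw [dtau, hf.fderiv]

lemma raiseOp_eq_of_hasFDerivAt {X Y : ℂ} (κ : ℤ) (hτ : τ.im ≠ 0)
    (hf : HasFDerivAt f (wirtinger X Y) τ)
    (hF : F =ᶠ[𝓝 τ] fun w => C * ((w.im : ℂ) ^ (q + 1) * f w)) :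
    raiseOp κ F τ = C * ((τ.im : ℂ) ^ q * ((κ + q + 1) * f τ + 2 * I * τ.im * X)) := by
  have him : HasFDerivAt (fun w : ℂ => (w.im : ℂ)) (Complex.ofRealCLM ∘L Complex.imCLM) τ :=
    (Complex.ofRealCLM ∘L Complex.imCLM).hasFDerivAt
  have hF' := (((him.pow (q + 1)).fun_mul hf).const_mul C).congr_of_eventuallyEq hF
  have hv : (τ.im : ℂ) ≠ 0 := Complex.ofReal_ne_zero.2 hτ
  rw [raiseOp, dtau_eq_of_hasFDerivAt hF', hF.eq_of_nhds]
  simp only [add_tsub_cancel_right, nsmul_eq_mul, Nat.cast_add, Nat.cast_one, smul_add, add_apply,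
    smul_apply, wirtinger_apply, mul_one, map_one, smul_eq_mul, ContinuousLinearMap.comp_apply,
    imCLM_apply, one_im, ofRealCLM_apply, ofReal_zero, mul_zero, add_zero, conj_I, mul_neg, I_im,
    ofReal_one]
  field_simp
  linear_combination (-(C * τ.im * (I * τ.im ^ (q + 1) * (X - Y) + f τ * (q + 1) * τ.im ^ q))) *
    I_mul_I

lemma Hpet_eq_im_pow_mul_petSeries (z : ℂ) (hk : 1 ≤ k) (hτ : τ.im ≠ 0) :
    Hpet k z τ = (τ.im : ℂ) ^ (2 * k - 1) * petSeries 1 (2 * k - 1) z τ := by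
  obtain ⟨s, hs⟩ : ∃ s, 2 * k - 1 = s + 1 := ⟨2 * k - 2, by lia⟩
  rw [Hpet, petSeries, ← tsum_mul_left]
  refine tsum_congr fun M => ?_
  have hj := jfac_ne_zero M hτ
  have hjc : conj (jfac M τ) ≠ 0 := (map_ne_zero _).2 hj
  rw [petTerm, pairing_eq_jfac_mul M z hτ, pairing_conj_eq_jfac_mul M z hτ, moeb_im,
    hs, show 2 * k - 2 = s by lia, show 1 - 2 * (k : ℤ) = -((s + 1 : ℕ) : ℤ) by lia, zpow_neg,
    zpow_natCast, Complex.ofReal_div, Complex.ofReal_pow, ← Complex.mul_conj']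
  simp only [div_eq_mul_inv, mul_inv, mul_pow, inv_pow, pow_one]
  field_simp
  ring

lemma Hlhmf_eq_im_pow_mul_petPeriod (n : ℕ) (hk : 1 ≤ k) (hτ : τ.im ≠ 0) :
    Hlhmf k n τ = (2 * I) ^ (2 * k - 2) / (2 * π) *
      ((τ.im : ℂ) ^ (2 * k - 1) * petPeriod n 1 (2 * k - 1) τ) := by
  simp only [Hlhmf, Hpet_eq_im_pow_mul_petSeries _ hk hτ, mul_assoc, integral_const_mul, petPeriod,
    periodN]

lemma raiseIter_Hlhmf (hk : 2 ≤ k) (hn : n ≤ 2 * k - 2) (hmq : m + 1 + q = 2 * k) (hτ : τ ∈ offE1) :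
    raiseIter (2 - 2 * k) m (Hlhmf k n) τ = (2 * I) ^ (2 * k - 2) / (2 * π) * (m.factorial : ℂ) *
      ((τ.im : ℂ) ^ q * petPeriod n (m + 1) q τ) := by
  induction m generalizing q τ with
  | zero =>
    obtain rfl : q = 2 * k - 1 := by lia
    exact (Hlhmf_eq_im_pow_mul_petPeriod n (one_le_two.trans hk) hτ.1.ne').trans (by simp)
  | succ m ih =>
    obtain ⟨r, η, Y, h⟩ := exists_separatedBall hτ
    have hderiv := h.hasFDerivAt_petPeriod (p := m) (q := q) (n := n) (by lia) (by lia)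
      (Metric.mem_ball_self h.radius_pos)
    have hnear := eventually_of_mem (isOpen_offE1.mem_nhds hτ) fun w hw =>
      ih (q := q + 1) (by lia) hw
    have hkC : (2 * k : ℂ) = m + q + 2 := by
      exact_mod_cast (by lia : 2 * k = m + q + 2)
    change raiseOp (2 - 2 * k + 2 * m) (raiseIter (2 - 2 * k) m (Hlhmf k n)) τ = _
    rw [raiseOp_eq_of_hasFDerivAt _ hτ.1.ne' hderiv hnear, Nat.factorial_succ]
    have hv : (τ.im : ℂ) ≠ 0 := Complex.ofReal_ne_zero.2 hτ.1.ne'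
    push_cast
    rw [hkC]
    field_simp
    ring

end Raising

section ComplexMultiplication

variable {a b c : ℤ} {k : ℕ}

lemma cast_natAbs_disc (hd : b ^ 2 - 4 * a * c < 0) :
    ((b ^ 2 - 4 * a * c).natAbs : ℝ) = 4 * a * c - b ^ 2 := by
  rw [Nat.cast_natAbs, abs_of_neg hd]
  push_cast
  ring

lemma cmPoint_im (a b c : ℤ) : (cmPoint a b c).im = √(b ^ 2 - 4 * a * c).natAbs / (2 * a) := by
  have hcm : cmPoint a b c = ⟨-b / (2 * a), √(b ^ 2 - 4 * a * c).natAbs / (2 * a)⟩ := by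
    rw [Complex.mk_eq_add_mul_I, cmPoint]
    push_cast
    ring
  rw [hcm]

lemma cmPoint_im_pos (ha : 0 < a) (hd : b ^ 2 - 4 * a * c < 0) : 0 < (cmPoint a b c).im := by
  have : (0 : ℝ) < a := Int.cast_pos.2 ha
  have hD : (0 : ℝ) < (b ^ 2 - 4 * a * c).natAbs := Nat.cast_pos.2 (Int.natAbs_pos.2 hd.ne)
  rw [cmPoint_im]
  positivity

lemma sqrt_natAbs_disc_eq (b c : ℤ) (ha : 0 < a) :
    √(b ^ 2 - 4 * a * c).natAbs = 2 * (cmPoint a b c).im * a := by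
  have ha' : (a : ℝ) ≠ 0 := Int.cast_ne_zero.2 ha.ne'
  rw [cmPoint_im]
  field_simp

lemma qfC_eq_mul (ha : 0 < a) (hd : b ^ 2 - 4 * a * c < 0) (x y : ℂ) :
    qfC a b c x y = a * ((x - cmPoint a b c * y) * (x - conj (cmPoint a b c) * y)) := by
  have ha' : (a : ℂ) ≠ 0 := Int.cast_ne_zero.2 ha.ne'
  have hS : (√(b ^ 2 - 4 * a * c).natAbs : ℂ) ^ 2 = 4 * a * c - b ^ 2 := by
    rw [← Complex.ofReal_pow, Real.sq_sqrt (Nat.cast_nonneg _), cast_natAbs_disc hd]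
    push_cast
    rfl
  simp only [qfC, cmPoint, map_div₀, map_add, map_neg, map_mul, Complex.conj_ofReal, Complex.conj_I,
    map_intCast, map_ofNat]
  field_simp
  linear_combination (-y ^ 2) * hS +
    (y ^ 2 * (√(b ^ 2 - 4 * a * c).natAbs : ℂ) ^ 2) * Complex.I_sq

lemma pairing_inv (M : SL2Z) (z τ : ℂ) : pairing M⁻¹ z τ =
    ((M.1 0 0 : ℂ) * z + M.1 0 1) - τ * ((M.1 1 0 : ℂ) * z + M.1 1 1) := by
  rw [Matrix.SpecialLinearGroup.SL2_inv_expl]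
  simp only [pairing, Matrix.cons_val', Matrix.cons_val_zero, Matrix.cons_val_fin_one,
    Matrix.cons_val_one, Int.cast_neg]
  ring

lemma tsum_qfC_zpow_eq_petSeries (k : ℕ) (ha : 0 < a) (hd : b ^ 2 - 4 * a * c < 0) (z : ℂ) :
    ∑' M : SL2Z,
        qfC a b c ((M.1 0 0 : ℂ) * z + M.1 0 1) ((M.1 1 0 : ℂ) * z + M.1 1 1) ^ (-(k : ℤ)) =
      ((a : ℂ) ^ k)⁻¹ * petSeries k k z (cmPoint a b c) := by
  rw [petSeries, ← (Equiv.inv SL2Z).tsum_eq fun M => petTerm k k M z _, ← tsum_mul_left]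
  refine tsum_congr fun M => ?_
  rw [qfC_eq_mul ha hd, zpow_neg, zpow_natCast, Equiv.inv_apply, petTerm, pairing_inv, pairing_inv]
  simp only [mul_pow, mul_inv]

lemma fkP_eq_petSeries (k : ℕ) (ha : 0 < a) (hd : b ^ 2 - 4 * a * c < 0) (z : ℂ) :
    fkP k a b c z = (((b ^ 2 - 4 * a * c).natAbs : ℝ) ^ (((k : ℝ) - 1) / 2) : ℝ) *
      (2 * (cmPoint a b c).im) ^ k / (2 * π * wP a b c) * petSeries k k z (cmPoint a b c) := by
  have ha' : (a : ℂ) ^ k ≠ 0 := pow_ne_zero _ (Int.cast_ne_zero.2 ha.ne')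
  have hD : (0 : ℝ) < (b ^ 2 - 4 * a * c).natAbs := Nat.cast_pos.2 (Int.natAbs_pos.2 hd.ne)
  have hpow : ((b ^ 2 - 4 * a * c).natAbs : ℝ) ^ ((k : ℝ) - 1 / 2) =
      ((b ^ 2 - 4 * a * c).natAbs : ℝ) ^ (((k : ℝ) - 1) / 2) *
        (2 * (cmPoint a b c).im * a) ^ k := by
    rw [← sqrt_natAbs_disc_eq b c ha, Real.sqrt_eq_rpow, ← Real.rpow_mul_natCast hD.le,
      ← Real.rpow_add hD]
    ring_nf
  rw [fkP, tsum_qfC_zpow_eq_petSeries k ha hd, hpow]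
  push_cast
  rw [mul_pow _ (a : ℂ)]
  field_simp

lemma periodN_fkP (k n : ℕ) (ha : 0 < a) (hd : b ^ 2 - 4 * a * c < 0) :
    periodN n (fkP k a b c) = (((b ^ 2 - 4 * a * c).natAbs : ℝ) ^ (((k : ℝ) - 1) / 2) : ℝ) *
      (2 * (cmPoint a b c).im) ^ k / (2 * π * wP a b c) * petPeriod n k k (cmPoint a b c) := by
  simp only [petPeriod, periodN, fkP_eq_petSeries k ha hd, mul_assoc, integral_const_mul]

end ComplexMultiplication

lemma two_mul_I_pow {k : ℕ} (hk : 2 ≤ k) :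
    (2 * I) ^ (2 * k - 2) = (-1 : ℂ) ^ (k - 1) * (2 ^ (k - 2) * 2 ^ k) := by
  rw [← pow_add, show 2 * k - 2 = 2 * (k - 1) by lia, show k - 2 + k = 2 * (k - 1) by lia, pow_mul,
    pow_mul, ← mul_pow, mul_pow 2 I, Complex.I_sq]
  ring

/-- the period `r_n(f_{k,P})` as a special value of the raised locally harmonic
Maass form `H_{1-k,n}`. -/
theorem period_fkP_eq_raised_Hlhmf (k n : ℕ) (hk : 2 ≤ k) (hn : n ≤ 2 * k - 2)
    (a b c : ℤ) (ha : 0 < a) (hd : b ^ 2 - 4 * a * c < 0)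
    (hre : ∀ M : SL2Z, (moeb M (cmPoint a b c)).re ≠ 0) :
    periodN n (fkP k a b c) =
      ((-1 : ℂ) ^ (k - 1) * (((((b ^ 2 - 4 * a * c).natAbs : ℝ)) ^ (((k : ℝ) - 1) / 2) : ℝ) : ℂ) /
          ((2 : ℂ) ^ (k - 2) * (Nat.factorial (k - 1) : ℂ) * (wP a b c : ℂ))) *
        raiseIter (2 - 2 * k) (k - 1) (Hlhmf k n) (cmPoint a b c) := by
  have hraise := raiseIter_Hlhmf (m := k - 1) (q := k) hk hn (by lia) ⟨cmPoint_im_pos ha hd, hre⟩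
  have hfact : ((k - 1).factorial : ℂ) ≠ 0 := Nat.cast_ne_zero.2 (Nat.factorial_ne_zero _)
  have hpi : (π : ℂ) ≠ 0 := Complex.ofReal_ne_zero.2 Real.pi_ne_zero
  have hsign : ((-1 : ℂ) ^ (k - 1)) ^ 2 = 1 := by rw [pow_right_comm, neg_one_sq, one_pow]
  rw [Nat.sub_add_cancel (one_le_two.trans hk), two_mul_I_pow hk] at hraise
  rw [periodN_fkP k n ha hd, hraise]
  field_simp
  rw [hsign, mul_pow]
  ring

end LHMF
end
end
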